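/- Let n ≥ 3 and let G' be a nontrivial finite subgroup of Out(F_n) whose order is not a power of 2. Then the normal closure N(G') of G' in Out(F_n) equals SOut(F_n) if G' ⊆ SOut(F_n), and equals Out(F_n) otherwise. -/

import Mathlib

open Matrix

namespace NormalClosurePaper

/-- The automorphism group of the free group on `n` generators. -/
abbrev FrAut (n : ℕ) := MulAut (FreeGroup (Fin n))

/-- Exponent sum of the generator `x_i` in a word of the free group. -/
def expSum {n : ℕ} (i : Fin n) : FreeGroup (Fin n) →* Multiplicative ℤ :=
  FreeGroup.lift fun j => Multiplicative.ofAdd (if j = i then (1 : ℤ) else 0)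

/-- The abelianized matrix of an automorphism of the free group:
the `(i, j)` entry is the exponent sum of `x_i` in `f x_j`. -/
def mat {n : ℕ} (f : FrAut n) : Matrix (Fin n) (Fin n) ℤ :=
  Matrix.of fun i j => (expSum i (f (FreeGroup.of j))).toAdd

lemma expSum_apply {n : ℕ} (f : FrAut n) (i : Fin n) (w : FreeGroup (Fin n)) :
    (expSum i (f w)).toAdd = ∑ k, mat f i k * (expSum k w).toAdd := by
  induction w using FreeGroup.induction_on with
  | C1 => simp
  | of j =>
      have h : (expSum i (f (FreeGroup.of j))).toAdd = mat f i j := rfl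
      rw [h]
      simp [expSum, mul_ite, Finset.sum_ite_eq]
  | inv_of j ih =>
      simp only [_root_.map_inv, toAdd_inv, mul_neg, Finset.sum_neg_distrib, ih]
  | mul x y ihx ihy =>
      simp only [_root_.map_mul, toAdd_mul, mul_add, Finset.sum_add_distrib, ihx, ihy]

lemma mat_one {n : ℕ} : mat (1 : FrAut n) = 1 := by
  ext i j
  simp [mat, expSum, Matrix.one_apply, eq_comm]

lemma mat_mul {n : ℕ} (f g : FrAut n) : mat (f * g) = mat f * mat g := by
  ext i j
  rw [Matrix.mul_apply]
  show (expSum i ((f * g) (FreeGroup.of j))).toAdd = _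
  rw [show (f * g) (FreeGroup.of j) = f (g (FreeGroup.of j)) from rfl, expSum_apply]
  rfl

/-- The matrix of the induced map on the abelianization, as a monoid homomorphism. -/
def matHom (n : ℕ) : FrAut n →* Matrix (Fin n) (Fin n) ℤ where
  toFun := mat
  map_one' := mat_one
  map_mul' := mat_mul

/-- The homomorphism `Aut(F_n) → GL_n(ℤ)` induced by abelianization. -/
def ρ (n : ℕ) : FrAut n →* GL (Fin n) ℤ := (matHom n).toHomUnits

/-- The composition of `ρ` with the determinant. -/
def detρ (n : ℕ) : FrAut n →* ℤˣ := (Matrix.GeneralLinearGroup.det).comp (ρ n)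

/-- The special automorphism group `SAut(F_n)`: automorphisms whose induced matrix
has determinant `1`. -/
def SAut (n : ℕ) : Subgroup (FrAut n) := (detρ n).ker

/-- The Torelli subgroup `IA_n`, the kernel of `ρ`. -/
def IA (n : ℕ) : Subgroup (FrAut n) := (ρ n).ker

/-- The group of inner automorphisms of the free group. -/
def Inn (n : ℕ) : Subgroup (FrAut n) := (MulAut.conj (G := FreeGroup (Fin n))).range

instance Inn_normal (n : ℕ) : (Inn n).Normal := by
  constructor
  rintro - ⟨a, rfl⟩ g
  refine ⟨g a, ?_⟩
  ext y
  simp [MulAut.conj_apply, MulAut.mul_apply, _root_.map_mul, _root_.map_inv]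

/-- The outer automorphism group `Out(F_n)`. -/
abbrev OutF (n : ℕ) := FrAut n ⧸ Inn n

/-- The projection `Aut(F_n) → Out(F_n)`. -/
def toOut (n : ℕ) : FrAut n →* OutF n := QuotientGroup.mk' (Inn n)

lemma mat_conj {n : ℕ} (g : FreeGroup (Fin n)) : mat (MulAut.conj g) = 1 := by
  rw [← mat_one (n := n)]
  ext i j
  simp only [mat, Matrix.of_apply, MulAut.conj_apply, MulAut.one_apply, _root_.map_mul,
    _root_.map_inv, toAdd_mul, toAdd_inv]
  omega

lemma ρ_conj {n : ℕ} (g : FreeGroup (Fin n)) : ρ n (MulAut.conj g) = 1 :=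
  Units.ext (mat_conj g)

/-- The homomorphism `Out(F_n) → GL_n(ℤ)` induced by abelianization. -/
def ρOut (n : ℕ) : OutF n →* GL (Fin n) ℤ :=
  QuotientGroup.lift (Inn n) (ρ n) (by rintro - ⟨g, rfl⟩; exact ρ_conj g)

/-- The composition of `ρOut` with the determinant. -/
def detρOut (n : ℕ) : OutF n →* ℤˣ := (Matrix.GeneralLinearGroup.det).comp (ρOut n)

/-- The special outer automorphism group `SOut(F_n)`. -/
def SOut (n : ℕ) : Subgroup (OutF n) := (detρOut n).ker

/-- Entrywise reduction `GL_n(ℤ) → GL_n(ℤ/ℓℤ)`. -/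
def redGL (n ℓ : ℕ) : GL (Fin n) ℤ →* GL (Fin n) (ZMod ℓ) :=
  Units.map (RingHom.mapMatrix (Int.castRingHom (ZMod ℓ))).toMonoidHom

/-- The subgroup `GΓ_n(ℓ)` of `GL_n(ℤ)` of matrices congruent to the identity mod `ℓ`. -/
def GGamma (n ℓ : ℕ) : Subgroup (GL (Fin n) ℤ) := (redGL n ℓ).ker

/-- The level `ℓ` congruence subgroup `Γ_n(ℓ)` (viewed inside `GL_n(ℤ)`): matrices with
determinant `1` that are congruent to the identity mod `ℓ`. -/
def GammaGL (n ℓ : ℕ) : Subgroup (GL (Fin n) ℤ) :=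
  GGamma n ℓ ⊓ (Matrix.GeneralLinearGroup.det).ker

/-- Reduction `SL_n(ℤ) → SL_n(ℤ/ℓℤ)`. -/
def redSL (n ℓ : ℕ) : Matrix.SpecialLinearGroup (Fin n) ℤ →*
    Matrix.SpecialLinearGroup (Fin n) (ZMod ℓ) :=
  Matrix.SpecialLinearGroup.map (Int.castRingHom (ZMod ℓ))

/-- Projection `SL_n(ℤ/ℓℤ) → PSL_n(ℤ/ℓℤ)`. -/
def projPSL (n ℓ : ℕ) : Matrix.SpecialLinearGroup (Fin n) (ZMod ℓ) →*
    Matrix.ProjectiveSpecialLinearGroup (Fin n) (ZMod ℓ) :=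
  QuotientGroup.mk' _

/-!
By Cauchy's theorem `G'` contains an element of odd prime order `p`. The preimage `E` in `Aut(F_n)`
of the group it generates is an extension of `F_n` by `ℤ/p`. The two ends of the axis of an element
of `F_n` are separated by finite edge cuts of the Cayley graph of `E`. Following Dunwoody and Krön,
the cuts of smallest size which cross as few others as possible are pairwise nested, so that they
are the oriented edges of a tree on which `E` acts, and `F_n` acts freely. If all edges had
nontrivial stabilizers, an element of `E` outside `F_n` would fix the whole tree and commute with
`F_n`, which is impossible. So some edge has trivial stabilizer, and `E` is a free product.

Writing `F_n` as the kernel of `E → ℤ/p`, this splitting yields a basis of `F_n` whose elements are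
permuted cyclically by an element of `E`, up to simple corrections. As `p ≥ 3`, commutators of this
automorphism with suitable symmetries of the basis produce a transvection in the normal closure of
`E`. Transvections are conjugate to each other up to inversion, and they generate `SAut(F_n)` by
Nielsen's method, so that the normal closure of `G'` contains `SOut(F_n)`.
-/

open scoped Pointwise

/-! ### Nested families of edge cuts -/

section Cuts

variable {V E : Type*} {d : E → V × V} {C D X : Set V} {K : ℕ}

/-- The set of edges with exactly one endpoint in `C`, in the multigraph with vertex type `V` and
edge type `E` given by the endpoint map `d`. Finite coboundaries are the edge cuts of the graph. -/
def coboundary (d : E → V × V) (C : Set V) : Set E :=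
  {e | ¬ ((d e).1 ∈ C ↔ (d e).2 ∈ C)}

lemma mem_coboundary {e : E} : e ∈ coboundary d C ↔ ¬ ((d e).1 ∈ C ↔ (d e).2 ∈ C) := Iff.rfl

lemma coboundary_compl (d : E → V × V) (C : Set V) : coboundary d Cᶜ = coboundary d C := by
  ext e
  simp only [mem_coboundary, Set.mem_compl_iff]
  tauto

lemma coboundary_symmDiff (d : E → V × V) (C D : Set V) :
    coboundary d (symmDiff C D) = symmDiff (coboundary d C) (coboundary d D) := by
  ext e
  simp only [mem_coboundary, Set.mem_symmDiff]
  tauto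

lemma coboundary_corners_union_subset (d : E → V × V) (C D : Set V) :
    coboundary d (C ∩ D) ∪ coboundary d (Cᶜ ∩ Dᶜ) ⊆ coboundary d C ∪ coboundary d D := by
  intro e
  simp only [Set.mem_union, Set.mem_inter_iff, mem_coboundary, Set.mem_compl_iff]
  tauto

lemma coboundary_corners_inter_subset (d : E → V × V) (C D : Set V) :
    coboundary d (C ∩ D) ∩ coboundary d (Cᶜ ∩ Dᶜ) ⊆ coboundary d C ∩ coboundary d D := by
  intro e
  simp only [Set.mem_inter_iff, mem_coboundary, Set.mem_compl_iff]
  tauto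

lemma finite_coboundary_inter (hC : (coboundary d C).Finite) (hD : (coboundary d D).Finite) :
    (coboundary d (C ∩ D)).Finite :=
  (hC.union hD).subset (Set.subset_union_left.trans (coboundary_corners_union_subset d C D))

lemma ncard_add_ncard_le {α : Type*} {A B A' B' : Set α} (hA' : A'.Finite) (hB' : B'.Finite)
    (hunion : A ∪ B ⊆ A' ∪ B') (hinter : A ∩ B ⊆ A' ∩ B') :
    A.ncard + B.ncard ≤ A'.ncard + B'.ncard := by
  have hfin := (hA'.union hB').subset hunion
  rw [← Set.ncard_union_add_ncard_inter A B (hfin.subset Set.subset_union_left)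
      (hfin.subset Set.subset_union_right), ← Set.ncard_union_add_ncard_inter A' B' hA' hB']
  exact Nat.add_le_add (Set.ncard_le_ncard hunion (hA'.union hB'))
    (Set.ncard_le_ncard hinter (hA'.subset Set.inter_subset_left))

lemma ncard_add_ncard_lt {α : Type*} {A B A' B' : Set α} (hA' : A'.Finite) (hB' : B'.Finite)
    (hunion : A ∪ B ⊂ A' ∪ B') (hinter : A ∩ B ⊆ A' ∩ B') :
    A.ncard + B.ncard < A'.ncard + B'.ncard := by
  have hfin := (hA'.union hB').subset hunion.subset
  rw [← Set.ncard_union_add_ncard_inter A B (hfin.subset Set.subset_union_left)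
      (hfin.subset Set.subset_union_right), ← Set.ncard_union_add_ncard_inter A' B' hA' hB']
  exact Nat.add_lt_add_of_lt_of_le (Set.ncard_lt_ncard hunion (hA'.union hB'))
    (Set.ncard_le_ncard hinter (hA'.subset Set.inter_subset_left))

lemma ncard_coboundary_corners_le (hC : (coboundary d C).Finite) (hD : (coboundary d D).Finite) :
    (coboundary d (C ∩ D)).ncard + (coboundary d (Cᶜ ∩ Dᶜ)).ncard ≤
      (coboundary d C).ncard + (coboundary d D).ncard :=
  ncard_add_ncard_le hC hD (coboundary_corners_union_subset d C D)
    (coboundary_corners_inter_subset d C D)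

/-- Two sets of vertices cross if all four corners `C ∩ D`, `C ∩ Dᶜ`, `Cᶜ ∩ D`, `Cᶜ ∩ Dᶜ` are
nonempty; otherwise they are nested. -/
def Crosses (C D : Set V) : Prop :=
  (C ∩ D).Nonempty ∧ (C ∩ Dᶜ).Nonempty ∧ (Cᶜ ∩ D).Nonempty ∧ (Cᶜ ∩ Dᶜ).Nonempty

lemma Crosses.symm (h : Crosses C D) : Crosses D C := by
  obtain ⟨h₁, h₂, h₃, h₄⟩ := h
  exact ⟨by rwa [Set.inter_comm], by rwa [Set.inter_comm], by rwa [Set.inter_comm],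
    by rwa [Set.inter_comm]⟩

lemma Crosses.compl_right (h : Crosses C D) : Crosses C Dᶜ := by
  obtain ⟨h₁, h₂, h₃, h₄⟩ := h
  exact ⟨h₂, by rwa [compl_compl], h₄, by rwa [compl_compl]⟩

lemma Crosses.compl_left (h : Crosses C D) : Crosses Cᶜ D := h.symm.compl_right.symm

lemma crosses_compl_right_iff : Crosses C Dᶜ ↔ Crosses C D :=
  ⟨fun h => by simpa using h.compl_right, Crosses.compl_right⟩

lemma crosses_compl_left_iff : Crosses Cᶜ D ↔ Crosses C D :=
  ⟨fun h => by simpa using h.compl_left, Crosses.compl_left⟩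

lemma subset_cases_of_not_crosses (h : ¬ Crosses C D) : C ⊆ Dᶜ ∨ C ⊆ D ∨ D ⊆ C ∨ Dᶜ ⊆ C := by
  rw [Set.compl_subset_comm (s := D)]
  simpa only [Crosses, not_and_or, Set.not_nonempty_iff_eq_empty,
    ← Set.disjoint_iff_inter_eq_empty, ← Set.subset_compl_iff_disjoint_right, compl_compl,
    Set.compl_subset_compl] using h

lemma not_crosses_of_subset (h : C ⊆ D) : ¬ Crosses C D := by
  rintro ⟨-, ⟨x, hx, hx'⟩, -⟩
  exact hx' (h hx)

lemma compl_subset_or_of_not_crosses (h : ¬ Crosses X C) (hX : (X ∩ C).Nonempty)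
    (hX' : (Xᶜ ∩ C).Nonempty) : Cᶜ ⊆ X ∨ Cᶜ ⊆ Xᶜ := by
  obtain ⟨x, hxX, hxC⟩ := hX
  obtain ⟨y, hyX, hyC⟩ := hX'
  rcases subset_cases_of_not_crosses h with h | h | h | h
  · exact absurd hxC (h hxX)
  · exact .inr (Set.compl_subset_compl.2 h)
  · exact absurd (h hyC) hyX
  · exact .inl h

lemma Crosses.of_inter_right (h : Crosses X (C ∩ D)) (hCD : (Cᶜ ∩ Dᶜ).Nonempty) :
    Crosses X C ∨ Crosses X D := by
  obtain ⟨⟨x, hxX, hxC, hxD⟩, ⟨y, hyX, hy⟩, ⟨z, hzX, hzC, hzD⟩, ⟨t, htX, ht⟩⟩ := h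
  obtain ⟨a, haC, haD⟩ := hCD
  by_contra! hno
  have hC := compl_subset_or_of_not_crosses hno.1 ⟨x, hxX, hxC⟩ ⟨z, hzX, hzC⟩
  have hD := compl_subset_or_of_not_crosses hno.2 ⟨x, hxX, hxD⟩ ⟨z, hzX, hzD⟩
  rw [Set.compl_inter] at hy ht
  rcases hC with hC | hC <;> rcases hD with hD | hD
  · exact htX (Set.union_subset hC hD ht)
  · exact hD haD (hC haC)
  · exact hC haC (hD haD)
  · exact Set.union_subset hC hD hy hyX

/-- A bond of size at most `K`: a finite edge cut that is minimal under inclusion. -/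
structure IsBond (d : E → V × V) (K : ℕ) (C : Set V) : Prop where
  finite : (coboundary d C).Finite
  card_le : (coboundary d C).ncard ≤ K
  eq_of_subset : ∀ D, coboundary d D ⊆ coboundary d C → D = ∅ ∨ D = Set.univ ∨ D = C ∨ D = Cᶜ

lemma IsBond.compl (h : IsBond d K C) : IsBond d K Cᶜ where
  finite := by simpa only [coboundary_compl] using h.finite
  card_le := by simpa only [coboundary_compl] using h.card_le
  eq_of_subset D hD := by
    rw [coboundary_compl] at hD
    rw [compl_compl]
    have := h.eq_of_subset D hD
    tauto

/-- The limit of an ultrafilter on the compact space of subsets of `V`. -/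
def limitSet (U : Ultrafilter (Set V)) : Set V := {z | ∀ᶠ C in (U : Filter (Set V)), z ∈ C}

lemma eventually_mem_limitSet_iff (U : Ultrafilter (Set V)) (z : V) :
    ∀ᶠ C in (U : Filter (Set V)), (z ∈ limitSet U ↔ z ∈ C) := by
  by_cases hz : z ∈ limitSet U
  · filter_upwards [show ∀ᶠ C in (U : Filter (Set V)), z ∈ C from hz] with C hC
    simp only [hz, hC]
  · filter_upwards [Ultrafilter.eventually_not.2
      (show ¬ ∀ᶠ C in (U : Filter (Set V)), z ∈ C from hz)] with C hC
    simp only [hz, hC]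

lemma eventually_mem_coboundary {U : Ultrafilter (Set V)} {e : E}
    (he : e ∈ coboundary d (limitSet U)) :
    ∀ᶠ C in (U : Filter (Set V)), e ∈ coboundary d C := by
  filter_upwards [eventually_mem_limitSet_iff U (d e).1, eventually_mem_limitSet_iff U (d e).2]
    with C h₁ h₂
  rwa [mem_coboundary, ← h₁, ← h₂]

lemma finite_coboundary_limitSet {U : Ultrafilter (Set V)}
    (hU : ∀ᶠ C in (U : Filter (Set V)), (coboundary d C).Finite ∧ (coboundary d C).ncard ≤ K) :
    (coboundary d (limitSet U)).Finite := by
  by_contra hinf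
  obtain ⟨T, hTU, hT⟩ := Set.Infinite.exists_subset_card_eq hinf (K + 1)
  have hT_sub : ∀ᶠ C in (U : Filter (Set V)), ∀ e ∈ T, e ∈ coboundary d C :=
    (Filter.eventually_all_finset T).2 fun e he => eventually_mem_coboundary (hTU he)
  obtain ⟨C, hTC, hC, hCK⟩ := (hT_sub.and hU).exists
  have hle := Set.ncard_le_ncard (s := (T : Set E)) hTC hC
  rw [Set.ncard_coe_finset, hT] at hle
  omega

-- A limit of infinitely many such bonds would again be a cut between `x` and `y`, and by minimality
-- equal to almost all of them.
lemma finite_bonds_separating (d : E → V × V) (K : ℕ) (x y : V) :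
    {C | IsBond d K C ∧ x ∈ C ∧ y ∉ C}.Finite := by
  by_contra hinf
  set S := {C | IsBond d K C ∧ x ∈ C ∧ y ∉ C}
  have : (Filter.cofinite ⊓ Filter.principal S).NeBot :=
    Filter.cofinite_inf_principal_neBot_iff.2 hinf
  let U := Ultrafilter.of (Filter.cofinite ⊓ Filter.principal S)
  have hU : (U : Filter (Set V)) ≤ Filter.cofinite ⊓ Filter.principal S := Ultrafilter.of_le _
  have hUS : ∀ᶠ C in (U : Filter (Set V)), C ∈ S :=
    (hU.trans inf_le_right) (Filter.mem_principal_self S)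
  have hx : x ∈ limitSet U := hUS.mono fun C hC => hC.2.1
  have hy : y ∉ limitSet U := fun h => by
    obtain ⟨C, hyC, hC⟩ :=
      ((show ∀ᶠ C in (U : Filter (Set V)), y ∈ C from h).and hUS).exists
    exact hC.2.2 hyC
  have hsub : ∀ᶠ C in (U : Filter (Set V)), coboundary d (limitSet U) ⊆ coboundary d C :=
    (Filter.eventually_all_finite (finite_coboundary_limitSet
      (hUS.mono fun C hC => ⟨hC.1.finite, hC.1.card_le⟩))).2 fun e => eventually_mem_coboundary
  have heq : ∀ᶠ C in (U : Filter (Set V)), C = limitSet U := by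
    filter_upwards [hsub, hUS] with C hC hCS
    rcases hCS.1.eq_of_subset _ hC with h | h | h | h
    · simp [h] at hx
    · simp [h] at hy
    · exact h.symm
    · rw [h] at hx
      exact absurd hCS.2.1 hx
  have hne : ∀ᶠ C in (U : Filter (Set V)), C ≠ limitSet U :=
    (hU.trans inf_le_left) (Set.finite_singleton _).compl_mem_cofinite
  obtain ⟨C, h₁, h₂⟩ := (heq.and hne).exists
  exact h₂ h₁

/-- The set of endpoints of the edges in the coboundary of `C`. -/
def boundaryVertices (d : E → V × V) (C : Set V) : Set V :=
  (fun e => (d e).1) '' coboundary d C ∪ (fun e => (d e).2) '' coboundary d C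

lemma finite_boundaryVertices (hC : (coboundary d C).Finite) : (boundaryVertices d C).Finite :=
  (hC.image _).union (hC.image _)

lemma IsBond.exists_mem_boundaryVertices (hX : IsBond d K X) (hXC : Crosses X C) :
    ∃ y ∈ boundaryVertices d C, y ∈ X := by
  by_contra! hno
  have hsub : coboundary d (X ∩ C) ⊆ coboundary d X := by
    intro e he
    by_cases heC : e ∈ coboundary d C
    · have h₁ : (d e).1 ∉ X := hno _ (.inl ⟨e, heC, rfl⟩)
      have h₂ : (d e).2 ∉ X := hno _ (.inr ⟨e, heC, rfl⟩)
      exact absurd he (by simp [mem_coboundary, h₁, h₂])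
    · simp only [mem_coboundary, Set.mem_inter_iff] at he heC ⊢
      tauto
  obtain ⟨⟨x, hx⟩, ⟨y, hyX, hyC⟩, ⟨z, hzX, hzC⟩, -⟩ := hXC
  rcases hX.eq_of_subset _ hsub with h | h | h | h
  · exact (h ▸ hx : x ∈ (∅ : Set V))
  · exact hzX (h ▸ Set.mem_univ z : z ∈ X ∩ C).1
  · rw [← h] at hyX
    exact hyC hyX.2
  · exact hzX (h ▸ hzX : z ∈ X ∩ C).1

lemma finite_bonds_crossing (d : E → V × V) (K : ℕ) (hC : (coboundary d C).Finite) :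
    {X | IsBond d K X ∧ Crosses X C}.Finite := by
  have hY := finite_boundaryVertices hC
  refine (hY.biUnion fun x _ => hY.biUnion fun y _ =>
    finite_bonds_separating d K x y).subset ?_
  rintro X ⟨hX, hXC⟩
  obtain ⟨x, hx, hxX⟩ := hX.exists_mem_boundaryVertices hXC
  obtain ⟨y, hy, hyX⟩ := hX.compl.exists_mem_boundaryVertices hXC.compl_left
  simp only [Set.mem_iUnion]
  exact ⟨x, hx, y, hy, hX, hxX, hyX⟩

/-- `C` separates a pair of ultrafilters if exactly one of them contains `C`. Ultrafilters play the
role of the ends of the graph. -/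
def Separates (α : Ultrafilter V × Ultrafilter V) (C : Set V) : Prop :=
  ¬ (C ∈ α.1 ↔ C ∈ α.2)

variable {α β : Ultrafilter V × Ultrafilter V}

lemma inter_mem_ultrafilter_iff {u : Ultrafilter V} : C ∩ D ∈ u ↔ C ∈ u ∧ D ∈ u :=
  Filter.inter_mem_iff (f := (u : Filter V))

lemma Separates.nonempty (h : Separates α C) : C.Nonempty := by
  rw [Set.nonempty_iff_ne_empty]
  rintro rfl
  simp [Separates] at h

lemma Separates.ne_univ (h : Separates α C) : C ≠ Set.univ := by
  rintro rfl
  exact h (iff_of_true Filter.univ_mem Filter.univ_mem)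

lemma separates_compl : Separates α Cᶜ ↔ Separates α C := by
  simp only [Separates, Ultrafilter.compl_mem_iff_notMem]
  tauto

lemma separates_symmDiff : Separates α (symmDiff C D) ↔ ¬ (Separates α C ↔ Separates α D) := by
  simp only [Separates, Set.symmDiff_def, Ultrafilter.union_mem_iff, Set.sdiff_eq,
    inter_mem_ultrafilter_iff, Ultrafilter.compl_mem_iff_notMem]
  tauto

lemma Separates.inter_or_compl_inter (hD : Separates α D) (C : Set V) :
    Separates α (C ∩ D) ∨ Separates α (Cᶜ ∩ D) := by
  simp only [Separates, inter_mem_ultrafilter_iff, Ultrafilter.compl_mem_iff_notMem] at *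
  tauto

lemma Separates.corners_of_not_separates (hC : Separates α C) (hD : ¬ Separates α D) :
    (Separates α (C ∩ D) ∧ Separates α (Cᶜ ∩ D)) ∨
      (Separates α (C ∩ Dᶜ) ∧ Separates α (Cᶜ ∩ Dᶜ)) := by
  simp only [Separates, inter_mem_ultrafilter_iff, Ultrafilter.compl_mem_iff_notMem] at *
  tauto

lemma Separates.corners (hC : Separates α C) (hD : Separates α D) :
    (Separates α (C ∩ D) ∧ Separates α (Cᶜ ∩ Dᶜ)) ∨
      (Separates α (C ∩ Dᶜ) ∧ Separates α (Cᶜ ∩ D)) := by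
  simp only [Separates, inter_mem_ultrafilter_iff, Ultrafilter.compl_mem_iff_notMem] at *
  tauto

/-- A finite edge cut of smallest size among those separating `α`. -/
structure IsMinCut (d : E → V × V) (α : Ultrafilter V × Ultrafilter V) (C : Set V) : Prop where
  separates : Separates α C
  finite : (coboundary d C).Finite
  le : ∀ D, Separates α D → (coboundary d D).Finite →
    (coboundary d C).ncard ≤ (coboundary d D).ncard

lemma IsMinCut.compl (h : IsMinCut d α C) : IsMinCut d α Cᶜ :=
  ⟨separates_compl.2 h.separates, by rw [coboundary_compl]; exact h.finite,
    by rw [coboundary_compl]; exact h.le⟩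

lemma IsMinCut.of_ncard_le (h : IsMinCut d α C) (hD : Separates α D)
    (hfin : (coboundary d D).Finite) (hle : (coboundary d D).ncard ≤ (coboundary d C).ncard) :
    IsMinCut d α D :=
  ⟨hD, hfin, fun X hX hXfin => hle.trans (h.le X hX hXfin)⟩

/-- Connectedness of a graph, expressed through its edge cuts. -/
def IsConnectedGraph (d : E → V × V) : Prop :=
  ∀ C, coboundary d C = ∅ → C = ∅ ∨ C = Set.univ

lemma IsConnectedGraph.eq_or_eq_compl (hd : IsConnectedGraph d)
    (h : coboundary d D = coboundary d C) : D = C ∨ D = Cᶜ := by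
  rcases hd (symmDiff C D) (by rw [coboundary_symmDiff, h, symmDiff_self, Set.bot_eq_empty])
    with h | h
  · exact .inl (symmDiff_eq_bot.1 h).symm
  · exact .inr ((symmDiff_eq_top _ _).1 h).compl_eq.symm

lemma IsMinCut.isBond (hd : IsConnectedGraph d) (h : IsMinCut d α C)
    (hK : (coboundary d C).ncard ≤ K) : IsBond d K C := by
  refine ⟨h.finite, hK, fun D hD => ?_⟩
  by_cases hsep : Separates α D
  · have heq : coboundary d D = coboundary d C :=
      Set.eq_of_subset_of_ncard_le hD (h.le D hsep (h.finite.subset hD)) h.finite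
    exact .inr (.inr (hd.eq_or_eq_compl heq))
  · have hsub : coboundary d (symmDiff C D) ⊆ coboundary d C := by
      rw [coboundary_symmDiff]
      exact symmDiff_le Set.subset_union_right (hD.trans Set.subset_union_left)
    have hsep' : Separates α (symmDiff C D) :=
      separates_symmDiff.2 fun h' => hsep (h'.1 h.separates)
    have heq : coboundary d (symmDiff C D) = coboundary d C :=
      Set.eq_of_subset_of_ncard_le hsub (h.le _ hsep' (h.finite.subset hsub)) h.finite
    rcases hd.eq_or_eq_compl heq with h' | h'
    · exact .inl (symmDiff_eq_left.1 h')
    · exact .inr (.inl (symmDiff_right_inj.1 (h'.trans (symmDiff_top C).symm)))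

lemma IsMinCut.corners (hC : IsMinCut d α C) (hD : IsMinCut d β D) (hα : Separates α (C ∩ D))
    (hβ : Separates β (Cᶜ ∩ Dᶜ)) : IsMinCut d α (C ∩ D) ∧ IsMinCut d β (Cᶜ ∩ Dᶜ) := by
  have hfin₁ := finite_coboundary_inter hC.finite hD.finite
  have hfin₂ := finite_coboundary_inter hC.compl.finite hD.compl.finite
  have hle := ncard_coboundary_corners_le hC.finite hD.finite
  have hle₁ := hC.le _ hα hfin₁
  have hle₂ := hD.le _ hβ hfin₂
  exact ⟨hC.of_ncard_le hα hfin₁ (by omega), hD.of_ncard_le hβ hfin₂ (by omega)⟩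

lemma IsMinCut.corners_of_separates (hC : IsMinCut d α C) (hD : IsMinCut d β D)
    (hβC : Separates β C) (h₁ : Separates α (C ∩ D)) (h₂ : Separates α (Cᶜ ∩ Dᶜ)) :
    IsMinCut d α (C ∩ D) ∧ IsMinCut d α (Cᶜ ∩ Dᶜ) := by
  have hfin₁ := finite_coboundary_inter hC.finite hD.finite
  have hfin₂ := finite_coboundary_inter hC.compl.finite hD.compl.finite
  have hle := ncard_coboundary_corners_le hC.finite hD.finite
  have hle₁ := hC.le _ h₁ hfin₁
  have hle₂ := hC.le _ h₂ hfin₂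
  have hle₃ := hD.le _ hβC hC.finite
  exact ⟨hC.of_ncard_le h₁ hfin₁ (by omega), hC.of_ncard_le h₂ hfin₂ (by omega)⟩

variable {P : Set (Ultrafilter V × Ultrafilter V)}

/-- The cuts that are minimal for some pair in `P`. -/
def minCuts (d : E → V × V) (P : Set (Ultrafilter V × Ultrafilter V)) : Set (Set V) :=
  {C | ∃ α ∈ P, IsMinCut d α C}

/-- The minimal cuts crossing a given set. -/
def crossing (d : E → V × V) (P : Set (Ultrafilter V × Ultrafilter V)) (C : Set V) :
    Set (Set V) :=
  {X | X ∈ minCuts d P ∧ Crosses X C}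

lemma crossing_compl (d : E → V × V) (P : Set (Ultrafilter V × Ultrafilter V)) (C : Set V) :
    crossing d P Cᶜ = crossing d P C := by
  simp only [crossing, crosses_compl_right_iff]

lemma crossing_corners_union_ssubset (hCD : Crosses C D) (hD : D ∈ minCuts d P) :
    crossing d P (C ∩ D) ∪ crossing d P (Cᶜ ∩ Dᶜ) ⊂ crossing d P C ∪ crossing d P D := by
  refine ⟨?_, fun h => ?_⟩
  · rintro X (⟨hX, h⟩ | ⟨hX, h⟩)
    · exact (h.of_inter_right hCD.2.2.2).imp (⟨hX, ·⟩) (⟨hX, ·⟩)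
    · refine (h.of_inter_right (by simpa only [compl_compl] using hCD.1)).imp ?_ ?_ <;>
        exact fun h => ⟨hX, crosses_compl_right_iff.1 h⟩
  · rcases h (.inl ⟨hD, hCD.symm⟩) with h | h
    · exact not_crosses_of_subset Set.inter_subset_right h.2.symm
    · exact not_crosses_of_subset Set.inter_subset_right (crosses_compl_left_iff.2 h.2).symm

lemma crossing_corners_inter_subset (d : E → V × V) (P : Set (Ultrafilter V × Ultrafilter V))
    (C D : Set V) :
    crossing d P (C ∩ D) ∩ crossing d P (Cᶜ ∩ Dᶜ) ⊆ crossing d P C ∩ crossing d P D := by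
  rintro X ⟨⟨hX, ⟨x, hx⟩, -, ⟨y, hy⟩, -⟩, ⟨-, ⟨z, hz⟩, -, ⟨t, ht⟩, -⟩⟩
  exact ⟨⟨hX, ⟨x, hx.1, hx.2.1⟩, ⟨z, hz.1, hz.2.1⟩, ⟨y, hy.1, hy.2.1⟩, ⟨t, ht.1, ht.2.1⟩⟩,
    ⟨hX, ⟨x, hx.1, hx.2.2⟩, ⟨z, hz.1, hz.2.2⟩, ⟨y, hy.1, hy.2.2⟩, ⟨t, ht.1, ht.2.2⟩⟩⟩

lemma ncard_crossing_corners_lt (hfin : ∀ C ∈ minCuts d P, (crossing d P C).Finite)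
    (hC : C ∈ minCuts d P) (hD : D ∈ minCuts d P) (hCD : Crosses C D) :
    (crossing d P (C ∩ D)).ncard + (crossing d P (Cᶜ ∩ Dᶜ)).ncard <
      (crossing d P C).ncard + (crossing d P D).ncard :=
  ncard_add_ncard_lt (hfin C hC) (hfin D hD) (crossing_corners_union_ssubset hCD hD)
    (crossing_corners_inter_subset d P C D)

/-- A minimal cut for `α` crossing as few minimal cuts as possible. -/
structure IsOptCut (d : E → V × V) (P : Set (Ultrafilter V × Ultrafilter V))
    (α : Ultrafilter V × Ultrafilter V) (C : Set V) : Prop where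
  isMinCut : IsMinCut d α C
  le : ∀ D, IsMinCut d α D → (crossing d P C).ncard ≤ (crossing d P D).ncard

lemma IsOptCut.compl (h : IsOptCut d P α C) : IsOptCut d P α Cᶜ :=
  ⟨h.isMinCut.compl, by rw [crossing_compl]; exact h.le⟩

lemma exists_isOptCut (d : E → V × V) (P : Set (Ultrafilter V × Ultrafilter V))
    (h : ∃ C, Separates α C ∧ (coboundary d C).Finite) : ∃ C, IsOptCut d P α C := by
  obtain ⟨B, ⟨hBα, hB⟩, hBmin⟩ := WellFounded.has_min
    (measure fun C => (coboundary d C).ncard).wf {C | Separates α C ∧ (coboundary d C).Finite} h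
  obtain ⟨C, hC, hCmin⟩ := WellFounded.has_min
    (measure fun C => (crossing d P C).ncard).wf {C | IsMinCut d α C}
    ⟨B, hBα, hB, fun D hDα hD => not_lt.1 (hBmin D ⟨hDα, hD⟩)⟩
  exact ⟨C, hC, fun D hD => not_lt.1 (hCmin D hD)⟩

lemma IsOptCut.not_separates_corners (hfin : ∀ C ∈ minCuts d P, (crossing d P C).Finite)
    (hα : α ∈ P) (hβ : β ∈ P) (hC : IsOptCut d P α C) (hD : IsOptCut d P β D)
    (hCD : Crosses C D) (h : Separates α (C ∩ D)) : ¬ Separates β (Cᶜ ∩ Dᶜ) := by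
  intro h'
  have hmin := hC.isMinCut.corners hD.isMinCut h h'
  have hle₁ := hC.le _ hmin.1
  have hle₂ := hD.le _ hmin.2
  have hlt := ncard_crossing_corners_lt hfin ⟨α, hα, hC.isMinCut⟩ ⟨β, hβ, hD.isMinCut⟩ hCD
  omega

lemma IsOptCut.ncard_crossing_lt (hfin : ∀ C ∈ minCuts d P, (crossing d P C).Finite)
    (hα : α ∈ P) (hβ : β ∈ P) (hC : IsOptCut d P α C) (hD : IsOptCut d P β D)
    (hCD : Crosses C D) (hβC : Separates β C) (h₁ : Separates α (C ∩ D))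
    (h₂ : Separates α (Cᶜ ∩ Dᶜ)) : (crossing d P C).ncard < (crossing d P D).ncard := by
  have hmin := hC.isMinCut.corners_of_separates hD.isMinCut hβC h₁ h₂
  have hle₁ := hC.le _ hmin.1
  have hle₂ := hC.le _ hmin.2
  have hlt := ncard_crossing_corners_lt hfin ⟨α, hα, hC.isMinCut⟩ ⟨β, hβ, hD.isMinCut⟩ hCD
  omega

lemma IsOptCut.separates_of_crosses (hfin : ∀ C ∈ minCuts d P, (crossing d P C).Finite)
    (hα : α ∈ P) (hβ : β ∈ P) (hC : IsOptCut d P α C) (hD : IsOptCut d P β D)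
    (hCD : Crosses C D) : Separates α D := by
  by_contra hαD
  have hno₁ := hC.not_separates_corners hfin hα hβ hD hCD
  have hno₂ := hC.compl.not_separates_corners hfin hα hβ hD hCD.compl_left
  have hno₃ := hC.not_separates_corners hfin hα hβ hD.compl hCD.compl_right
  have hno₄ := hC.compl.not_separates_corners hfin hα hβ hD.compl hCD.compl_left.compl_right
  rw [compl_compl] at hno₂ hno₃ hno₄
  rw [compl_compl] at hno₄
  rcases hC.isMinCut.separates.corners_of_not_separates hαD with ⟨h₁, h₂⟩ | ⟨h₁, h₂⟩
  · rcases hD.compl.isMinCut.separates.inter_or_compl_inter C with h | h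
    · exact hno₂ h₂ h
    · exact hno₁ h₁ h
  · rcases hD.isMinCut.separates.inter_or_compl_inter C with h | h
    · exact hno₄ h₂ h
    · exact hno₃ h₁ h

-- If optimal cuts for `α` and `β` cross, then each cut separates both pairs, and `α` and `β` each
-- occupy a diagonal of the four corners; on the same diagonal the corners would be better cuts,
-- and on different diagonals each cut would have to cross fewer minimal cuts than the other.
lemma IsOptCut.not_crosses (hfin : ∀ C ∈ minCuts d P, (crossing d P C).Finite) (hα : α ∈ P)
    (hβ : β ∈ P) (hC : IsOptCut d P α C) (hD : IsOptCut d P β D) : ¬ Crosses C D := by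
  intro hCD
  have hαD := hC.separates_of_crosses hfin hα hβ hD hCD
  have hβC := hD.separates_of_crosses hfin hβ hα hC hCD.symm
  rcases hC.isMinCut.separates.corners hαD with ⟨hα₁, hα₂⟩ | ⟨hα₁, hα₂⟩ <;>
    rcases hβC.corners hD.isMinCut.separates with ⟨hβ₁, hβ₂⟩ | ⟨hβ₁, hβ₂⟩
  · exact hC.not_separates_corners hfin hα hβ hD hCD hα₁ hβ₂
  · have hlt₁ := hC.ncard_crossing_lt hfin hα hβ hD hCD hβC hα₁ hα₂
    have hlt₂ := hD.ncard_crossing_lt hfin hβ hα hC.compl hCD.compl_left.symm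
      hαD (by rwa [Set.inter_comm]) (by rwa [compl_compl, Set.inter_comm])
    rw [crossing_compl] at hlt₂
    omega
  · have hlt₁ := hC.ncard_crossing_lt hfin hα hβ hD.compl hCD.compl_right hβC hα₁
      (by rwa [compl_compl])
    have hlt₂ := hD.ncard_crossing_lt hfin hβ hα hC hCD.symm hαD (by rwa [Set.inter_comm])
      (by rwa [Set.inter_comm])
    rw [crossing_compl] at hlt₁
    omega
  · exact hC.not_separates_corners hfin hα hβ hD.compl hCD.compl_right hα₁ (by rwa [compl_compl])

end Cuts

/-! ### Cuts in Cayley graphs -/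

section GroupCuts

variable {E : Type*} [Group E] {S C D : Set E} {F : Subgroup E}
  {α : Ultrafilter E × Ultrafilter E} {x : E}

/-- A subset of a group that is right invariant up to finite sets. -/
def AlmostInvariant (C : Set E) : Prop := ∀ c, {x | ¬ (x ∈ C ↔ x * c ∈ C)}.Finite

lemma almostInvariant_of_closure (hS : Subgroup.closure S = ⊤)
    (h : ∀ s ∈ S, {x | ¬ (x ∈ C ↔ x * s ∈ C)}.Finite) : AlmostInvariant C := by
  intro c
  induction hS ▸ Subgroup.mem_top c using Subgroup.closure_induction with
  | mem s hs => exact h s hs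
  | one => simp
  | mul a b _ _ ha hb =>
    refine (ha.union (hb.preimage (mul_left_injective a).injOn)).subset fun w hw => ?_
    simp only [Set.mem_union, Set.mem_preimage, Set.mem_ofPred_eq, ← mul_assoc] at hw ⊢
    tauto
  | inv a _ ha =>
    refine (ha.preimage (mul_left_injective a⁻¹).injOn).subset fun w hw => ?_
    simp only [Set.mem_preimage, Set.mem_ofPred_eq, inv_mul_cancel_right] at hw ⊢
    tauto

/-- The endpoint map of the Cayley graph of `E` with respect to `S`. -/
def cayley (S : Set E) (e : E × S) : E × E := (e.1, e.1 * e.2)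

lemma mem_coboundary_cayley {e : E × S} :
    e ∈ coboundary (cayley S) C ↔ ¬ (e.1 ∈ C ↔ e.1 * e.2 ∈ C) := Iff.rfl

lemma almostInvariant_of_finite_coboundary (hS : Subgroup.closure S = ⊤)
    (h : (coboundary (cayley S) C).Finite) : AlmostInvariant C :=
  almostInvariant_of_closure hS fun s hs =>
    (h.image Prod.fst).subset fun x hx => ⟨(x, ⟨s, hs⟩), hx, rfl⟩

lemma AlmostInvariant.finite_coboundary (hS : S.Finite) (hC : AlmostInvariant C) :
    (coboundary (cayley S) C).Finite := by
  have : Finite S := hS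
  have hfin : (⋃ s : S, (fun x : E => (x, s)) '' {x | ¬ (x ∈ C ↔ x * (s : E) ∈ C)}).Finite :=
    Set.finite_iUnion fun s => (hC s).image _
  exact hfin.subset fun e he => Set.mem_iUnion.2 ⟨e.2, e.1, he, rfl⟩

lemma isConnectedGraph_cayley (hS : Subgroup.closure S = ⊤) : IsConnectedGraph (cayley S) := by
  intro C hC
  have hmul : ∀ c x, x ∈ C ↔ x * c ∈ C := by
    intro c
    induction hS ▸ Subgroup.mem_top c using Subgroup.closure_induction with
    | mem s hs =>
      intro x
      by_contra hx
      exact (Set.eq_empty_iff_forall_notMem.1 hC) (x, ⟨s, hs⟩) hx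
    | one => simp
    | mul a b _ _ ha hb => intro x; rw [ha x, hb (x * a), mul_assoc]
    | inv a _ ha => intro x; rw [ha (x * a⁻¹), inv_mul_cancel_right]
  refine C.eq_empty_or_nonempty.imp_right fun ⟨y, hy⟩ => Set.eq_univ_of_forall fun x => ?_
  simpa only [mul_inv_cancel_left] using (hmul (y⁻¹ * x) y).1 hy

lemma coboundary_cayley_smul (S : Set E) (g : E) (C : Set E) :
    coboundary (cayley S) (g • C) =
      (fun e : E × S => (g * e.1, e.2)) '' coboundary (cayley S) C := by
  ext ⟨x, s⟩
  constructor
  · intro h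
    refine ⟨(g⁻¹ * x, s), ?_, by simp⟩
    simpa [mem_coboundary_cayley, Set.mem_smul_set_iff_inv_smul_mem, mul_assoc] using h
  · rintro ⟨⟨y, t⟩, h, heq⟩
    obtain ⟨rfl, rfl⟩ := Prod.ext_iff.1 heq
    simpa [mem_coboundary_cayley, Set.mem_smul_set_iff_inv_smul_mem, mul_assoc] using h

lemma injective_mul_fst (S : Set E) (g : E) :
    Function.Injective fun e : E × S => (g * e.1, e.2) :=
  (mul_right_injective g).prodMap Function.injective_id

lemma ncard_coboundary_cayley_smul (S : Set E) (g : E) (C : Set E) :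
    (coboundary (cayley S) (g • C)).ncard = (coboundary (cayley S) C).ncard := by
  rw [coboundary_cayley_smul, Set.ncard_image_of_injective _ (injective_mul_fst S g)]

lemma finite_coboundary_cayley_smul {g : E} :
    (coboundary (cayley S) (g • C)).Finite ↔ (coboundary (cayley S) C).Finite := by
  rw [coboundary_cayley_smul, Set.finite_image_iff (injective_mul_fst S g).injOn]

lemma isOfFinOrder_of_smul_eq (hS : Subgroup.closure S = ⊤) (hC : C.Nonempty)
    (hC' : C ≠ Set.univ) (hfin : (coboundary (cayley S) C).Finite) (h : x • C = C) :
    IsOfFinOrder x := by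
  obtain ⟨⟨y, s⟩, hys⟩ : (coboundary (cayley S) C).Nonempty := by
    rw [Set.nonempty_iff_ne_empty]
    exact fun h' => (isConnectedGraph_cayley hS C h').elim hC.ne_empty hC'
  have hpow : ∀ k : ℕ, x ^ k • C = C := (MulAction.stabilizer E C).pow_mem h
  by_contra hx
  have hinj : Function.Injective fun k : ℕ => (x ^ k * y, s) := fun i j hij =>
    injective_pow_iff_not_isOfFinOrder.2 hx (mul_left_injective y (congr_arg Prod.fst hij))
  refine Set.infinite_of_injective_forall_mem hinj (fun k => ?_) hfin
  rw [← hpow k, coboundary_cayley_smul]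
  exact ⟨(y, s), hys, rfl⟩

/-- An ultrafilter limit of `x ^ k * g` for `k → ∞`. -/
noncomputable def powLimit (x g : E) : Ultrafilter E :=
  (Filter.hyperfilter ℕ).map fun k => x ^ k * g

lemma mem_powLimit {g : E} :
    C ∈ powLimit x g ↔ ∀ᶠ k in (Filter.hyperfilter ℕ : Filter ℕ), x ^ k * g ∈ C := Iff.rfl

lemma map_mul_powLimit (h x g : E) :
    (powLimit x g).map (h * ·) = powLimit (h * x * h⁻¹) (h * g) := by
  rw [powLimit, Ultrafilter.map_map, powLimit]
  congr 1
  ext k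
  simp only [Function.comp_apply, conj_pow]
  group

lemma smul_mem_map_mul_iff {h : E} {u : Ultrafilter E} : h • C ∈ u.map (h * ·) ↔ C ∈ u := by
  have : (h * ·) ⁻¹' (h • C) = C := Set.ext fun x => Set.smul_mem_smul_set_iff
  rw [Ultrafilter.mem_map, this]

lemma AlmostInvariant.mem_powLimit_mul_iff (hC : AlmostInvariant C) (hx : ¬ IsOfFinOrder x)
    (g c : E) : C ∈ powLimit x (g * c) ↔ C ∈ powLimit x g := by
  have hinj : Function.Injective fun k : ℕ => x ^ k * g :=
    (mul_left_injective g).comp (injective_pow_iff_not_isOfFinOrder.2 hx)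
  refine Filter.eventually_congr (f := (Filter.hyperfilter ℕ : Filter ℕ)) ?_
  filter_upwards [Filter.compl_mem_hyperfilter_of_finite ((hC c).preimage hinj.injOn)] with k hk
  rw [← mul_assoc]
  exact (not_not.1 hk).symm

lemma AlmostInvariant.smul_mem_powLimit_iff (hC : AlmostInvariant C) (hx : ¬ IsOfFinOrder x)
    {h : E} (hhx : Commute h x) (g : E) : h • C ∈ powLimit x g ↔ C ∈ powLimit x g := by
  have hlim : powLimit x g = (powLimit x (g * (g⁻¹ * h⁻¹ * g))).map (h * ·) := by
    rw [map_mul_powLimit, hhx.eq, mul_inv_cancel_right]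
    congr 1
    group
  rw [hlim, smul_mem_map_mul_iff, ← hlim, hC.mem_powLimit_mul_iff hx]

/-- The pair of limits of `x ^ k * g` for `k → ∞` and `k → -∞`. -/
noncomputable def endPair (x g : E) : Ultrafilter E × Ultrafilter E :=
  (powLimit x g, powLimit x⁻¹ g)

lemma AlmostInvariant.separates_endPair_iff (hC : AlmostInvariant C) (hx : ¬ IsOfFinOrder x)
    (g : E) : Separates (endPair x g) C ↔ Separates (endPair x 1) C := by
  have hx' : ¬ IsOfFinOrder x⁻¹ := isOfFinOrder_inv_iff.not.2 hx
  rw [← one_mul g]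
  simp only [Separates, endPair, hC.mem_powLimit_mul_iff hx, hC.mem_powLimit_mul_iff hx']

lemma shift_of_separates {g : E} (hx : ¬ IsOfFinOrder x) (hC : AlmostInvariant C)
    (hsep : Separates (endPair x g) C) (hne : x • C ≠ C) (hcross : ¬ Crosses C (x • C)) :
    x • C ⊂ C ∨ C ⊂ x • C := by
  have h₁ := hC.smul_mem_powLimit_iff hx (Commute.refl x) g
  have h₂ := hC.smul_mem_powLimit_iff (isOfFinOrder_inv_iff.not.2 hx)
    (Commute.refl x).inv_right g
  have hboth : (C ∩ x • C).Nonempty ∧ (Cᶜ ∩ (x • C)ᶜ).Nonempty := by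
    have hmem : (C ∩ x • C ∈ powLimit x g ∧ Cᶜ ∩ (x • C)ᶜ ∈ powLimit x⁻¹ g) ∨
        (C ∩ x • C ∈ powLimit x⁻¹ g ∧ Cᶜ ∩ (x • C)ᶜ ∈ powLimit x g) := by
      simp only [Separates, endPair, inter_mem_ultrafilter_iff,
        Ultrafilter.compl_mem_iff_notMem, h₁, h₂] at hsep ⊢
      tauto
    rcases hmem with h | h
    all_goals exact ⟨Ultrafilter.nonempty_of_mem h.1, Ultrafilter.nonempty_of_mem h.2⟩
  obtain ⟨⟨a, ha, ha'⟩, ⟨b, hb, hb'⟩⟩ := hboth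
  rcases subset_cases_of_not_crosses hcross with h | h | h | h
  · exact absurd ha' (h ha)
  · exact .inr (h.ssubset_of_ne hne.symm)
  · exact .inl (h.ssubset_of_ne hne)
  · exact absurd (h hb') hb

/-- The pairs of limits of powers of elements of infinite order of `F`. -/
def endPairs (F : Subgroup E) : Set (Ultrafilter E × Ultrafilter E) :=
  {α | ∃ x ∈ F, ¬ IsOfFinOrder x ∧ ∃ g, α = endPair x g}

/-- Left translation of pairs of ultrafilters. -/
def translatePair (h : E) (α : Ultrafilter E × Ultrafilter E) : Ultrafilter E × Ultrafilter E :=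
  (α.1.map (h * ·), α.2.map (h * ·))

lemma translatePair_endPair (h x g : E) :
    translatePair h (endPair x g) = endPair (h * x * h⁻¹) (h * g) := by
  simp only [translatePair, endPair, map_mul_powLimit, conj_inv]

lemma translatePair_mem_endPairs [F.Normal] (h : E) (hα : α ∈ endPairs F) :
    translatePair h α ∈ endPairs F := by
  obtain ⟨x, hx, hx', g, rfl⟩ := hα
  refine ⟨h * x * h⁻¹, ‹F.Normal›.conj_mem x hx h, fun hfin => hx' ?_, h * g,
    translatePair_endPair h x g⟩
  rwa [← MulAut.conj_apply, ← MulEquiv.coe_toMonoidHom,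
    Function.Injective.isOfFinOrder_iff (MulAut.conj h).injective] at hfin

lemma translatePair_inv (h : E) (α : Ultrafilter E × Ultrafilter E) :
    translatePair h⁻¹ (translatePair h α) = α := by
  have : (h⁻¹ * ·) ∘ (h * ·) = id := by ext; simp
  simp only [translatePair, Ultrafilter.map_map, this, Ultrafilter.map_id]

lemma separates_translatePair {h : E} : Separates (translatePair h α) (h • C) ↔ Separates α C := by
  simp only [Separates, translatePair, smul_mem_map_mul_iff]

lemma crosses_smul {g : E} : Crosses (g • C) (g • D) ↔ Crosses C D := by
  simp only [Crosses, ← Set.smul_set_compl, ← Set.smul_set_inter, Set.smul_set_nonempty]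

lemma IsMinCut.smul (h : IsMinCut (cayley S) α C) (g : E) :
    IsMinCut (cayley S) (translatePair g α) (g • C) := by
  refine ⟨separates_translatePair.2 h.separates, finite_coboundary_cayley_smul.2 h.finite,
    fun D hD hD' => ?_⟩
  rw [← smul_inv_smul g D] at hD hD' ⊢
  simpa only [ncard_coboundary_cayley_smul] using
    h.le _ (separates_translatePair.1 hD) (finite_coboundary_cayley_smul.1 hD')

lemma smul_mem_minCuts [F.Normal] (g : E) (h : C ∈ minCuts (cayley S) (endPairs F)) :
    g • C ∈ minCuts (cayley S) (endPairs F) := by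
  obtain ⟨α, hα, hC⟩ := h
  exact ⟨_, translatePair_mem_endPairs g hα, hC.smul g⟩

lemma crossing_smul (S : Set E) (F : Subgroup E) [F.Normal] (g : E) (C : Set E) :
    crossing (cayley S) (endPairs F) (g • C) =
      (g • ·) '' crossing (cayley S) (endPairs F) C := by
  ext X
  constructor
  · rintro ⟨hX, hc⟩
    refine ⟨g⁻¹ • X, ⟨smul_mem_minCuts _ hX, ?_⟩, smul_inv_smul g X⟩
    rwa [← crosses_smul (g := g), smul_inv_smul]
  · rintro ⟨Y, ⟨hY, hc⟩, rfl⟩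
    exact ⟨smul_mem_minCuts _ hY, crosses_smul.2 hc⟩

lemma ncard_crossing_smul (S : Set E) (F : Subgroup E) [F.Normal] (g : E) (C : Set E) :
    (crossing (cayley S) (endPairs F) (g • C)).ncard =
      (crossing (cayley S) (endPairs F) C).ncard := by
  rw [crossing_smul, Set.ncard_image_of_injective _ (MulAction.injective g)]

lemma IsOptCut.smul [F.Normal] (h : IsOptCut (cayley S) (endPairs F) α C) (g : E) :
    IsOptCut (cayley S) (endPairs F) (translatePair g α) (g • C) := by
  refine ⟨h.isMinCut.smul g, fun D hD => ?_⟩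
  have hD' := hD.smul g⁻¹
  rw [translatePair_inv] at hD'
  simpa only [ncard_crossing_smul] using h.le _ hD'

end GroupCuts

/-! ### Ends of free groups -/

section FreeGroupWords

variable {X : Type*} [DecidableEq X] {L : List (X × Bool)} {a : X × Bool}

lemma toWord_mk_of_isReduced (h : FreeGroup.IsReduced L) : (FreeGroup.mk L).toWord = L := by
  rw [FreeGroup.toWord_mk, h.reduce_eq]

lemma toWord_mul_letter (w : FreeGroup X) (c : X × Bool) :
    w.toWord = (w * FreeGroup.mk [c]).toWord ++ [(c.1, !c.2)] ∨
      (w * FreeGroup.mk [c]).toWord = w.toWord ++ [c] := by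
  have hw : FreeGroup.IsReduced w.toWord := FreeGroup.isReduced_toWord
  have hmul : w * FreeGroup.mk [c] = FreeGroup.mk (w.toWord ++ [c]) := by
    rw [← FreeGroup.mul_mk, FreeGroup.mk_toWord]
  rcases List.eq_nil_or_concat' w.toWord with h | ⟨L, b, h⟩
  · right
    rw [hmul, h]
    exact toWord_mk_of_isReduced (by simp)
  · rw [h] at hw hmul ⊢
    by_cases hbc : b = (c.1, !c.2)
    · subst hbc
      have hcancel : w * FreeGroup.mk [c] = FreeGroup.mk L := by
        rw [hmul]
        refine Quot.sound ?_
        simpa using FreeGroup.Red.Step.not (L₁ := L) (L₂ := []) (x := c.1) (b := !c.2)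
      rw [hcancel, toWord_mk_of_isReduced (List.IsChain.left_of_append hw)]
      exact .inl rfl
    · right
      rw [hmul]
      refine toWord_mk_of_isReduced (List.IsChain.append hw (by simp) fun x hx y hy => ?_)
      simp only [List.getLast?_append, List.getLast?_singleton, Option.some_or,
        Option.mem_some_iff, List.head?_cons] at hx hy
      subst hx hy
      intro h₁
      by_contra h₂
      exact hbc (Prod.ext h₁ (Bool.eq_not.2 h₂))

/-- The elements of the free group whose reduced word starts with a given letter. -/
def startsWith (a : X × Bool) : Set (FreeGroup X) := {w | w.toWord.head? = some a}

lemma almostInvariant_startsWith (a : X × Bool) : AlmostInvariant (startsWith a) := by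
  refine almostInvariant_of_closure (FreeGroup.closure_range_of X) ?_
  rintro - ⟨x, rfl⟩
  refine (Set.toFinite {1, FreeGroup.mk [(x, false)]}).subset fun w hw => ?_
  by_contra! hne
  simp only [Set.mem_insert_iff, Set.mem_singleton_iff, not_or] at hne
  refine hw ?_
  simp only [startsWith, Set.mem_ofPred_eq, FreeGroup.of]
  rcases toWord_mul_letter w (x, true) with h | h
  · have hnil : (w * FreeGroup.mk [(x, true)]).toWord ≠ [] := by
      intro hnil
      rw [hnil, List.nil_append] at h
      exact hne.2 (by rw [← FreeGroup.mk_toWord (x := w), h]; rfl)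
    rw [h, List.head?_append_of_ne_nil _ hnil]
  · rw [h, List.head?_append_of_ne_nil _ (FreeGroup.toWord_eq_nil_iff.not.2 hne.1)]

lemma exists_eq_conj_mk_isCyclicallyReduced {X : Type*} (f : FreeGroup X) :
    ∃ u L, FreeGroup.IsCyclicallyReduced L ∧ f = u * FreeGroup.mk L * u⁻¹ := by
  classical
  refine ⟨FreeGroup.mk (FreeGroup.reduceCyclically.conjugator f.toWord),
    FreeGroup.reduceCyclically f.toWord,
    FreeGroup.reduceCyclically.isCyclicallyReduced FreeGroup.isReduced_toWord, ?_⟩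
  rw [FreeGroup.inv_mk, FreeGroup.mul_mk, FreeGroup.mul_mk,
    FreeGroup.reduceCyclically.conj_conjugator_reduceCyclically, FreeGroup.mk_toWord]

lemma toWord_mk_pow (hL : FreeGroup.IsCyclicallyReduced L) (k : ℕ) :
    (FreeGroup.mk L ^ k).toWord = (List.replicate k L).flatten := by
  rw [FreeGroup.pow_mk, toWord_mk_of_isReduced (hL.flatten_replicate k).isReduced]

lemma mk_pow_mem_startsWith (hL : FreeGroup.IsCyclicallyReduced L) (ha : L.head? = some a)
    {k : ℕ} (hk : k ≠ 0) : FreeGroup.mk L ^ k ∈ startsWith a := by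
  rw [startsWith, Set.mem_ofPred_eq, toWord_mk_pow hL, List.head?_flatten_replicate hk, ha]

lemma mk_inv_pow_notMem_startsWith (hL : FreeGroup.IsCyclicallyReduced L)
    (ha : L.head? = some a) (k : ℕ) : (FreeGroup.mk L)⁻¹ ^ k ∉ startsWith a := by
  intro h
  rw [startsWith, Set.mem_ofPred_eq, inv_pow, FreeGroup.toWord_inv, toWord_mk_pow hL,
    FreeGroup.invRev, List.head?_reverse, List.getLast?_map] at h
  rcases eq_or_ne k 0 with rfl | hk
  · simp at h
  · rw [List.getLast?_flatten_replicate hk, Option.map_eq_some_iff] at h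
    obtain ⟨b, hb, rfl⟩ := h
    simpa using hL.2 b hb _ ha

lemma exists_separates_endPair {f : FreeGroup X} (hf : f ≠ 1) :
    ∃ (a : X × Bool) (u : FreeGroup X), ∀ g, Separates (endPair f g) (u • startsWith a) := by
  obtain ⟨u, L, hL, rfl⟩ := exists_eq_conj_mk_isCyclicallyReduced f
  have hL1 : FreeGroup.mk L ≠ 1 := fun h => hf (by rw [h, mul_one, mul_inv_cancel])
  have hne : L ≠ [] := fun h => hL1 (by rw [h]; rfl)
  refine ⟨L.head hne, u, fun g => ?_⟩
  rw [← mul_inv_cancel_left u g, ← translatePair_endPair, separates_translatePair,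
    (almostInvariant_startsWith _).separates_endPair_iff (not_isOfFinOrder_of_isMulTorsionFree hL1)]
  have ha := List.head?_eq_some_head hne
  have hpos : startsWith (L.head hne) ∈ powLimit (FreeGroup.mk L) 1 := by
    rw [mem_powLimit]
    filter_upwards [Filter.compl_mem_hyperfilter_of_finite (Set.finite_singleton 0)] with k hk
    simpa using mk_pow_mem_startsWith hL ha hk
  have hneg : startsWith (L.head hne) ∉ powLimit (FreeGroup.mk L)⁻¹ 1 := by
    rw [mem_powLimit, Filter.not_eventually]
    refine Filter.Eventually.frequently (Filter.Eventually.of_forall fun k => ?_)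
    simpa using mk_inv_pow_notMem_startsWith hL ha k
  exact fun h => hneg (h.1 hpos)

end FreeGroupWords

/-! ### Nested families and cut systems -/

section Nested

variable {V : Type*} {O : Set (Set V)} {A B C W : Set V}

/-- A nested discrete family of subsets, closed under complements. Such a family is the set of
oriented edges of a tree. -/
structure IsNested (O : Set (Set V)) : Prop where
  compl_mem : ∀ {W : Set V}, W ∈ O → Wᶜ ∈ O
  nested : ∀ {W W' : Set V}, W ∈ O → W' ∈ O → ¬ Crosses W W'
  finite : ∀ x y : V, {W | W ∈ O ∧ x ∈ W ∧ y ∉ W}.Finite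
  nonempty : ∀ {W : Set V}, W ∈ O → W.Nonempty

/-- Two members of a nested family are adjacent if they point to the same vertex of the
associated tree. -/
def Adj (O : Set (Set V)) (A B : Set V) : Prop :=
  A = B ∨ (A ⊂ Bᶜ ∧ ∀ W ∈ O, A ⊂ W → ¬ W ⊂ Bᶜ)

lemma ssubset_compl_comm : A ⊂ Bᶜ ↔ B ⊂ Aᶜ := by
  rw [← compl_lt_compl_iff_lt, compl_compl]

lemma Adj.refl (A : Set V) : Adj O A A := .inl rfl

lemma Adj.eq_or_subset_compl (h : Adj O A B) : A = B ∨ A ⊆ Bᶜ :=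
  h.imp_right fun h => h.1.subset

namespace IsNested

lemma adj_symm (hO : IsNested O) (h : Adj O A B) : Adj O B A := by
  rcases h with h | ⟨h, h'⟩
  · exact .inl h.symm
  · exact .inr ⟨ssubset_compl_comm.1 h, fun W hW h₁ h₂ => h' Wᶜ (hO.compl_mem hW)
      (ssubset_compl_comm.1 h₂) (compl_lt_compl_iff_lt.2 h₁)⟩

lemma not_subset_compl (hO : IsNested O) (hA : A ∈ O) (h : A ⊆ B) : ¬ A ⊆ Bᶜ := by
  obtain ⟨x, hx⟩ := hO.nonempty hA
  exact fun h' => h' hx (h hx)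

lemma subset_cases (hO : IsNested O) (hA : A ∈ O) (hB : B ∈ O) :
    A ⊆ Bᶜ ∨ A ⊆ B ∨ B ⊆ A ∨ Bᶜ ⊆ A :=
  subset_cases_of_not_crosses (hO.nested hA hB)

lemma adj_trans (hO : IsNested O) (hA : A ∈ O) (hB : B ∈ O) (hC : C ∈ O)
    (hAB : Adj O A B) (hBC : Adj O B C) : Adj O A C := by
  by_cases hAC : A = C
  · exact .inl hAC
  have hCB := hO.adj_symm hBC
  rcases hAB with rfl | ⟨hAB, hAB'⟩
  · exact hBC
  rcases hBC with rfl | ⟨hBC, hBC'⟩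
  · exact .inr ⟨hAB, hAB'⟩
  rcases hCB with rfl | ⟨hCB, hCB'⟩
  · exact .inr ⟨hAB, hAB'⟩
  have hBA := ssubset_compl_comm.1 hAB
  rcases hO.subset_cases hA hC with h | h | h | h
  · refine .inr ⟨h.ssubset_of_ne ?_, fun W hW hAW hWC => ?_⟩
    · rintro rfl
      exact hO.not_subset_compl hB hBC.subset hBA.subset
    rcases hO.subset_cases hW hB with hWB | hWB | hBW | hBW
    · rcases eq_or_ne W Bᶜ with rfl | hne
      · exact hO.not_subset_compl hC (compl_le_compl_iff_le.1 hWC.subset) hCB.subset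
      · exact hAB' W hW hAW (hWB.ssubset_of_ne hne)
    · exact hO.not_subset_compl hA (hAW.subset.trans hWB) hAB.subset
    · rcases eq_or_ne B W with rfl | hne
      · exact hO.not_subset_compl hA hAW.subset hAB.subset
      · exact hBC' W hW (hBW.ssubset_of_ne hne) hWC
    · exact hO.not_subset_compl hC (compl_le_compl_iff_le.1 (hBW.trans hWC.subset)) hCB.subset
  · exact absurd hCB (hAB' C hC (h.ssubset_of_ne hAC))
  · exact absurd hAB (hCB' A hA (h.ssubset_of_ne (Ne.symm hAC)))
  · exact absurd hBA.subset (hO.not_subset_compl hB (hBC.subset.trans h))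

lemma finite_Icc (hO : IsNested O) (hA : A ∈ O) (hB : B ∈ O) :
    {W | W ∈ O ∧ A ⊆ W ∧ W ⊆ B}.Finite := by
  obtain ⟨x, hx⟩ := hO.nonempty hA
  obtain ⟨y, hy⟩ := hO.nonempty (hO.compl_mem hB)
  exact (hO.finite x y).subset fun W hW => ⟨hW.1, hW.2.1 hx, fun h => hy (hW.2.2 h)⟩

lemma exists_adj_compl_of_ssubset (hO : IsNested O) (hA : A ∈ O) (hB : B ∈ O) (h : A ⊂ B) :
    ∃ Y ∈ O, A ⊂ Y ∧ Y ⊆ B ∧ Adj O A Yᶜ := by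
  obtain ⟨Y, ⟨hY, hAY, hYB⟩, hmin⟩ := Set.Finite.exists_minimal
    (s := {W | W ∈ O ∧ A ⊂ W ∧ W ⊆ B})
    ((hO.finite_Icc hA hB).subset fun W hW => ⟨hW.1, hW.2.1.subset, hW.2.2⟩) ⟨B, hB, h, le_rfl⟩
  refine ⟨Y, hY, hAY, hYB, .inr ⟨by rwa [compl_compl], fun W hW hAW hWY => ?_⟩⟩
  rw [compl_compl] at hWY
  exact hWY.2 (hmin ⟨hW, hAW, hWY.subset.trans hYB⟩ hWY.subset)

lemma exists_adj_of_subset_compl (hO : IsNested O) (hC : C ∈ O) (hW : W ∈ O) (h : W ⊆ Cᶜ) :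
    ∃ Y ∈ O, Adj O Y C ∧ (W ⊆ Y ∨ Wᶜ ⊆ Y) := by
  rcases eq_or_ne W Cᶜ with rfl | hne
  · exact ⟨C, hC, Adj.refl C, .inr (compl_compl C).subset⟩
  obtain ⟨Y, hY, -, hYW, hCY⟩ := hO.exists_adj_compl_of_ssubset hC (hO.compl_mem hW)
    (ssubset_compl_comm.1 (h.ssubset_of_ne hne))
  exact ⟨Yᶜ, hO.compl_mem hY, hO.adj_symm hCY, .inl (Set.subset_compl_comm.1 hYW)⟩

lemma exists_adj (hO : IsNested O) (hC : C ∈ O) (hW : W ∈ O) :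
    ∃ Y ∈ O, Adj O Y C ∧ (W ⊆ Y ∨ Wᶜ ⊆ Y) := by
  rcases hO.subset_cases hW hC with h | h | h | h
  · exact hO.exists_adj_of_subset_compl hC hW h
  · exact ⟨C, hC, Adj.refl C, .inl h⟩
  · obtain ⟨Y, hY, hYC, hWY⟩ := hO.exists_adj_of_subset_compl hC (hO.compl_mem hW)
      (Set.compl_subset_compl.2 h)
    rw [compl_compl] at hWY
    exact ⟨Y, hY, hYC, hWY.symm⟩
  · exact ⟨C, hC, Adj.refl C, .inr (Set.compl_subset_comm.1 h)⟩

end IsNested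

end Nested

section CutSystem

variable {E : Type*} [Group E] {F : Subgroup E} {O : Set (Set E)} {A B C D Y : Set E}

lemma smul_set_ssubset_iff {g : E} : g • A ⊂ g • B ↔ A ⊂ B := by
  simp only [Set.ssubset_def, Set.smul_set_subset_smul_set_iff]

/-- An invariant nested family of subsets of a group `E`, on which the subgroup `F` acts freely,
with every nontrivial element of `F` shifting some member and every member being shifted by some
element of `F`. -/
structure IsCutSystem (F : Subgroup E) (O : Set (Set E)) : Prop extends IsNested O where
  smul_mem : ∀ (g : E) {W : Set E}, W ∈ O → g • W ∈ O
  eq_one_of_smul_eq : ∀ {W : Set E}, W ∈ O → ∀ f ∈ F, f • W = W → f = 1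
  exists_ssubset : ∀ f ∈ F, f ≠ 1 → ∃ W ∈ O, f • W ⊂ W ∨ W ⊂ f • W
  exists_smul_ssubset : ∀ {W : Set E}, W ∈ O → ∃ f ∈ F, f • W ⊂ W

lemma Adj.smul (hO : ∀ (g : E) {W : Set E}, W ∈ O → g • W ∈ O) (h : Adj O A B) (g : E) :
    Adj O (g • A) (g • B) := by
  rcases h with rfl | ⟨h₁, h₂⟩
  · exact Adj.refl _
  · rw [Adj, ← Set.smul_set_compl]
    refine .inr ⟨smul_set_ssubset_iff.2 h₁, fun W hW h h' => h₂ (g⁻¹ • W) (hO _ hW) ?_ ?_⟩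
    all_goals rwa [← smul_set_ssubset_iff (g := g), smul_inv_smul]

namespace IsCutSystem

lemma exists_smul_ssubset_self (hO : IsCutSystem F O) {f : E} (hf : f ∈ F) (hf1 : f ≠ 1) :
    ∃ W ∈ O, f • W ⊂ W := by
  obtain ⟨W, hW, h | h⟩ := hO.exists_ssubset f hf hf1
  · exact ⟨W, hW, h⟩
  · exact ⟨Wᶜ, hO.compl_mem hW, by rw [Set.smul_set_compl]; exact compl_lt_compl_iff_lt.2 h⟩

/- In the tree of the nested family, this says that `F` acts freely on the vertices. -/
lemma eq_one_of_adj (hO : IsCutSystem F O) (hC : C ∈ O) {f : E} (hf : f ∈ F)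
    (h : Adj O (f • C) C) : f = 1 := by
  by_contra hf1
  obtain ⟨W, hW, hfW⟩ := hO.exists_smul_ssubset_self hf hf1
  obtain ⟨Y, hY, hYC, hWY⟩ := hO.exists_adj hC hW
  have hfY : Adj O (f • Y) Y := hO.adj_trans (hO.smul_mem f hY) hC hY
    (hO.adj_trans (hO.smul_mem f hY) (hO.smul_mem f hC) hC (hYC.smul hO.smul_mem f) h)
    (hO.adj_symm hYC)
  rcases hfY.eq_or_subset_compl with h' | h'
  · exact hf1 (hO.eq_one_of_smul_eq hY f hf h')
  rcases hWY with hWY | hWY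
  · exact hO.not_subset_compl (hO.smul_mem f hW) (hfW.subset.trans hWY)
      ((Set.smul_set_mono hWY).trans h')
  · refine hO.not_subset_compl (hO.compl_mem hW) hWY (Set.Subset.trans ?_ h')
    refine (Set.compl_subset_compl.2 hfW.subset).trans ?_
    rw [← Set.smul_set_compl]
    exact Set.smul_set_mono hWY

lemma smul_eq_of_adj (hO : IsCutSystem F O) (hC : C ∈ O) (hY : Y ∈ O) {s t : E}
    (hsC : s • C = C) (htY : t • Y = Y) (hst : s⁻¹ * t ∈ F) (h : Adj O Y C) : s • Y = Y := by
  have hsY : Adj O (s⁻¹ • Y) C := by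
    simpa only [inv_smul_eq_iff.2 hsC.symm] using h.smul hO.smul_mem s⁻¹
  have hst1 : s⁻¹ * t = 1 := by
    refine hO.eq_one_of_adj hY hst ?_
    rw [mul_smul, htY]
    exact hO.adj_trans (hO.smul_mem _ hY) hC hY hsY (hO.adj_symm h)
  rw [inv_mul_eq_one.1 hst1, htY]

lemma smul_eq_of_subset (hO : IsCutSystem F O) {s : E}
    (hs : ∀ W ∈ O, ∃ t : E, t • W = W ∧ s⁻¹ * t ∈ F) (hC : C ∈ O) (hD : D ∈ O)
    (hsC : s • C = C) (hCD : C ⊆ D) : s • D = D := by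
  by_contra hsD
  obtain ⟨C', ⟨hC', hCC', hC'D, hsC'⟩, hmax⟩ := Set.Finite.exists_maximal
    (s := {W | W ∈ O ∧ C ⊆ W ∧ W ⊆ D ∧ s • W = W})
    ((hO.finite_Icc hC hD).subset fun W hW => ⟨hW.1, hW.2.1, hW.2.2.1⟩)
    ⟨C, hC, le_rfl, hCD, hsC⟩
  have hne : C' ≠ D := fun h => hsD (h ▸ hsC')
  obtain ⟨Y, hY, hC'Y, hYD, hadj⟩ :=
    hO.exists_adj_compl_of_ssubset hC' hD (hC'D.ssubset_of_ne hne)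
  obtain ⟨t, ht, hst⟩ := hs _ (hO.compl_mem hY)
  have hsY := hO.smul_eq_of_adj hC' (hO.compl_mem hY) hsC' ht hst (hO.adj_symm hadj)
  rw [Set.smul_set_compl, compl_inj_iff] at hsY
  exact hC'Y.2 (hmax ⟨hY, hCC'.trans hC'Y.subset, hYD, hsY⟩ hC'Y.subset)

lemma smul_eq_of_smul_eq (hO : IsCutSystem F O) {s : E}
    (hs : ∀ W ∈ O, ∃ t : E, t • W = W ∧ s⁻¹ * t ∈ F) (hC : C ∈ O) (hsC : s • C = C)
    (hD : D ∈ O) : s • D = D := by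
  have hcompl : ∀ {W : Set E}, s • Wᶜ = Wᶜ ↔ s • W = W := by
    simp only [Set.smul_set_compl, compl_inj_iff, implies_true]
  have hsC' := hcompl.2 hsC
  rcases hO.subset_cases hC hD with h | h | h | h
  · exact hcompl.1 (hO.smul_eq_of_subset hs hC (hO.compl_mem hD) hsC h)
  · exact hO.smul_eq_of_subset hs hC hD hsC h
  · exact hcompl.1 (hO.smul_eq_of_subset hs (hO.compl_mem hC) (hO.compl_mem hD) hsC'
      (Set.compl_subset_compl.2 h))
  · exact hO.smul_eq_of_subset hs (hO.compl_mem hC) hD hsC' (Set.compl_subset_comm.1 h)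

/- If every stabilizer were nontrivial, some `s ∉ F` would fix every member of the family, so its
commutators with elements of `F` would be trivial. -/
theorem exists_trivial_stabilizer (hO : IsCutSystem F O) [F.Normal] (hne : O.Nonempty)
    (hcyc : ∀ s t : E, t ∉ F → ∃ k : ℕ, s⁻¹ * t ^ k ∈ F)
    (hcent : ∀ s, s ∉ F → ∃ f ∈ F, f * s ≠ s * f) :
    ∃ C ∈ O, ∀ g : E, g • C = C → g = 1 := by
  by_contra! hno
  have hstab : ∀ C ∈ O, ∃ g : E, g ∉ F ∧ g • C = C := fun C hC => by
    obtain ⟨g, hg, hg1⟩ := hno C hC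
    exact ⟨g, fun hgF => hg1 (hO.eq_one_of_smul_eq hC g hgF hg), hg⟩
  obtain ⟨C, hC⟩ := hne
  obtain ⟨s, hsF, hsC⟩ := hstab C hC
  have hfix : ∀ D ∈ O, s • D = D := fun D => by
    refine hO.smul_eq_of_smul_eq (fun W hW => ?_) hC hsC
    obtain ⟨t, htF, htW⟩ := hstab W hW
    obtain ⟨k, hk⟩ := hcyc s t htF
    exact ⟨t ^ k, (MulAction.stabilizer E W).pow_mem htW k, hk⟩
  obtain ⟨f, hf, hfs⟩ := hcent s hsF
  have hcomm : f * (s * f⁻¹ * s⁻¹) = 1 := by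
    refine hO.eq_one_of_smul_eq hC _
      (mul_mem hf (‹F.Normal›.conj_mem _ (inv_mem hf) s)) ?_
    rw [mul_smul, mul_smul, mul_smul, inv_smul_eq_iff.2 hsC.symm,
      hfix _ (hO.smul_mem f⁻¹ hC), smul_inv_smul]
  rw [← mul_assoc, ← mul_assoc, mul_inv_eq_one, mul_inv_eq_iff_eq_mul] at hcomm
  exact hfs hcomm

end IsCutSystem

end CutSystem

section OptCuts

variable {E : Type*} [Group E] {S C : Set E} {F : Subgroup E} {K : ℕ}

/-- The optimal cuts of the Cayley graph of `S` between the ends of the axes of elements of `F`. -/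
def optCuts (S : Set E) (F : Subgroup E) : Set (Set E) :=
  {W | ∃ α ∈ endPairs F, IsOptCut (cayley S) (endPairs F) α W}

lemma finite_crossing_of_isBond (hK : ∀ C ∈ minCuts (cayley S) (endPairs F), IsBond (cayley S) K C)
    (hC : C ∈ minCuts (cayley S) (endPairs F)) :
    (crossing (cayley S) (endPairs F) C).Finite :=
  (finite_bonds_crossing (cayley S) K (hK C hC).finite).subset fun Y hY => ⟨hK Y hY.1, hY.2⟩

lemma isNested_optCuts (hK : ∀ C ∈ minCuts (cayley S) (endPairs F), IsBond (cayley S) K C) :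
    IsNested (optCuts S F) where
  compl_mem := fun ⟨α, hα, hW⟩ => ⟨α, hα, hW.compl⟩
  nested := fun ⟨_, hα, hW⟩ ⟨_, hβ, hW'⟩ =>
    hW.not_crosses (fun _ => finite_crossing_of_isBond hK) hα hβ hW'
  finite x y := (finite_bonds_separating (cayley S) K x y).subset
    fun W ⟨⟨α, hα, hW⟩, hx, hy⟩ => ⟨hK W ⟨α, hα, hW.isMinCut⟩, hx, hy⟩
  nonempty := fun ⟨_, _, hW⟩ => hW.isMinCut.separates.nonempty

lemma eq_one_of_smul_optCut_eq (hS : Subgroup.closure S = ⊤)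
    (hF : ∀ f ∈ F, f ≠ 1 → ¬ IsOfFinOrder f) (hC : C ∈ optCuts S F) {f : E} (hf : f ∈ F)
    (h : f • C = C) : f = 1 := by
  obtain ⟨α, -, hC⟩ := hC
  by_contra hf1
  exact hF f hf hf1 (isOfFinOrder_of_smul_eq hS hC.isMinCut.separates.nonempty
    hC.isMinCut.separates.ne_univ hC.isMinCut.finite h)

lemma isCutSystem_optCuts [F.Normal] (hS : Subgroup.closure S = ⊤)
    (hF : ∀ f ∈ F, f ≠ 1 → ¬ IsOfFinOrder f)
    (hK : ∀ C ∈ minCuts (cayley S) (endPairs F), IsBond (cayley S) K C)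
    (hcut : ∀ α ∈ endPairs F, ∃ C, Separates α C ∧ (coboundary (cayley S) C).Finite) :
    IsCutSystem F (optCuts S F) := by
  have hnested := isNested_optCuts hK
  have hsmul : ∀ (g : E) {W : Set E}, W ∈ optCuts S F → g • W ∈ optCuts S F :=
    fun g _ ⟨_, hα, hW⟩ => ⟨_, translatePair_mem_endPairs g hα, hW.smul g⟩
  have hshift : ∀ {W : Set E} {x g : E}, x ∈ F → ¬ IsOfFinOrder x →
      IsOptCut (cayley S) (endPairs F) (endPair x g) W → x • W ⊂ W ∨ W ⊂ x • W := by
    intro W x g hx hxfin hW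
    have hmem : W ∈ optCuts S F := ⟨_, ⟨x, hx, hxfin, g, rfl⟩, hW⟩
    refine shift_of_separates hxfin (almostInvariant_of_finite_coboundary hS hW.isMinCut.finite)
      hW.isMinCut.separates (fun h => hxfin ?_) (hnested.nested hmem (hsmul x hmem))
    rw [eq_one_of_smul_optCut_eq hS hF hmem hx h]
    exact IsOfFinOrder.one
  refine ⟨hnested, hsmul, fun hW f hf => eq_one_of_smul_optCut_eq hS hF hW hf, ?_, ?_⟩
  · intro f hf hf1
    have hα : endPair f 1 ∈ endPairs F := ⟨f, hf, hF f hf hf1, 1, rfl⟩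
    obtain ⟨W, hW⟩ := exists_isOptCut (cayley S) (endPairs F) (hcut _ hα)
    exact ⟨W, ⟨_, hα, hW⟩, hshift hf (hF f hf hf1) hW⟩
  · rintro W ⟨-, ⟨x, hx, hxfin, g, rfl⟩, hW⟩
    rcases hshift hx hxfin hW with h | h
    · exact ⟨x, hx, h⟩
    · refine ⟨x⁻¹, inv_mem hx, ?_⟩
      rwa [← smul_set_ssubset_iff (g := x⁻¹), inv_smul_smul] at h

end OptCuts

section VirtuallyFree

variable {E F : Type*} [Group E] [Group F] {ι : F →* E}

lemma isComplement_closure_eq_top {T : Set E} (hT : Subgroup.IsComplement (ι.range : Set E) T)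
    {S : Set F} (hS : Subgroup.closure S = ⊤) : Subgroup.closure (ι '' S ∪ T) = ⊤ := by
  refine (Subgroup.eq_top_iff' _).2 fun e => ?_
  rw [← hT.equiv_fst_mul_equiv_snd e]
  refine mul_mem ?_ (Subgroup.subset_closure (.inr (hT.equiv e).2.2))
  have hle : ι.range ≤ Subgroup.closure (ι '' S ∪ T) := by
    rw [MonoidHom.range_eq_map, ← hS, MonoidHom.map_closure]
    exact Subgroup.closure_mono Set.subset_union_left
  exact hle (hT.equiv e).1.2

lemma exists_equivariant_map (hι : Function.Injective ι) {T : Set E}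
    (hT : Subgroup.IsComplement (ι.range : Set E) T) :
    ∃ w : E → F, (∀ z e, w (ι z * e) = z * w e) ∧ ∀ e, ∃ t ∈ T, e = ι (w e) * t := by
  have hw : ∀ e, ∃ z, ι z = (hT.equiv e).1 := fun e => (hT.equiv e).1.2
  choose w hw using hw
  refine ⟨w, fun z e => hι ?_, fun e => ⟨(hT.equiv e).2, (hT.equiv e).2.2, ?_⟩⟩
  · rw [map_mul, hw, hw, hT.equiv_mul_left_of_mem ⟨z, rfl⟩]
    rfl
  · rw [hw, hT.equiv_fst_mul_equiv_snd]

lemma AlmostInvariant.preimage {w : E → F} (hw : ∀ z e, w (ι z * e) = z * w e) {T : Set E}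
    (hT : T.Finite) (hwT : ∀ e, ∃ t ∈ T, e = ι (w e) * t) {A : Set F} (hA : AlmostInvariant A) :
    AlmostInvariant (w ⁻¹' A) := by
  intro c
  refine (hT.biUnion fun t _ => (hA (w (t * c))).image (ι · * t)).subset fun e he => ?_
  obtain ⟨t, ht, het⟩ := hwT e
  refine Set.mem_biUnion ht ⟨w e, ?_, het.symm⟩
  have hmul : w (e * c) = w e * w (t * c) := by
    conv_lhs => rw [het, mul_assoc, hw]
  rwa [Set.mem_ofPred_eq, ← hmul]

lemma separates_endPair_preimage_iff {w : E → F} (hw : ∀ z e, w (ι z * e) = z * w e) {f u : F}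
    {g : E} {A : Set F} :
    Separates (endPair (ι f) g) (ι u • w ⁻¹' A) ↔ Separates (endPair f (w g)) (u • A) := by
  have hsmul : ι u • w ⁻¹' A = w ⁻¹' (u • A) := by
    ext e
    simp only [Set.mem_smul_set_iff_inv_smul_mem, Set.mem_preimage, smul_eq_mul, ← map_inv, hw]
  simp only [hsmul, Separates, endPair, mem_powLimit, Set.mem_preimage, ← map_inv, ← map_pow, hw]

end VirtuallyFree

section Existence

variable {E X : Type*} [Group E] {ι : FreeGroup X →* E}

lemma not_isOfFinOrder_of_mem_range (hι : Function.Injective ι) {f : E} (hf : f ∈ ι.range)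
    (hf1 : f ≠ 1) : ¬ IsOfFinOrder f := by
  obtain ⟨z, rfl⟩ := hf
  rw [hι.isOfFinOrder_iff]
  exact not_isOfFinOrder_of_isMulTorsionFree fun h => hf1 (by rw [h, map_one])

lemma exists_separating_family (hι : Function.Injective ι) {T : Set E} (hT : T.Finite)
    (hιT : Subgroup.IsComplement (ι.range : Set E) T) :
    ∃ H : X × Bool → Set E, (∀ a, AlmostInvariant (H a)) ∧
      ∀ α ∈ endPairs ι.range, ∃ (a : X × Bool) (g : E), Separates α (g • H a) := by
  classical
  obtain ⟨w, hw, hwT⟩ := exists_equivariant_map hι hιT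
  refine ⟨fun a => w ⁻¹' startsWith a,
    fun a => (almostInvariant_startsWith a).preimage hw hT hwT, ?_⟩
  rintro - ⟨-, ⟨f, rfl⟩, hf, g, rfl⟩
  obtain ⟨a, u, h⟩ := exists_separates_endPair (f := f) fun h => hf (by
    rw [h, map_one]
    exact IsOfFinOrder.one)
  exact ⟨a, ι u, (separates_endPair_preimage_iff hw).2 (h _)⟩

theorem exists_isCutSystem [Finite X] (hι : Function.Injective ι) [ι.range.Normal]
    [ι.range.FiniteIndex] : ∃ O, IsCutSystem ι.range O := by
  obtain ⟨T, hιT, -⟩ := ι.range.exists_isComplement_right 1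
  obtain ⟨H, hH, hsep⟩ := exists_separating_family hι hιT.finite_right hιT
  obtain ⟨S, hSfin, hS⟩ : ∃ S : Set E, S.Finite ∧ Subgroup.closure S = ⊤ :=
    ⟨_, ((Set.finite_range _).image _).union hιT.finite_right,
      isComplement_closure_eq_top hιT (FreeGroup.closure_range_of X)⟩
  obtain ⟨K, hK⟩ := (Set.finite_range fun a => (coboundary (cayley S) (H a)).ncard).bddAbove
  have hcut : ∀ α ∈ endPairs ι.range, ∃ C, Separates α C ∧ (coboundary (cayley S) C).Finite ∧
      (coboundary (cayley S) C).ncard ≤ K := by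
    intro α hα
    obtain ⟨a, g, h⟩ := hsep α hα
    exact ⟨_, h, finite_coboundary_cayley_smul.2 ((hH a).finite_coboundary hSfin),
      (ncard_coboundary_cayley_smul S g (H a)).trans_le (hK ⟨a, rfl⟩)⟩
  refine ⟨_, isCutSystem_optCuts (K := K) hS (fun f => not_isOfFinOrder_of_mem_range hι) ?_
    fun α hα => (hcut α hα).imp fun C hC => ⟨hC.1, hC.2.1⟩⟩
  rintro C ⟨α, hα, hC⟩
  obtain ⟨D, hD, hDfin, hDK⟩ := hcut α hα
  exact hC.isBond (isConnectedGraph_cayley hS) ((hC.le D hD hDfin).trans hDK)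

end Existence

/-! ### Splittings as free products -/

section FreeProd

variable {E : Type*} [Group E] {A B : Subgroup E}

/-- `E` is the free product of its nontrivial subgroups `A` and `B`. -/
structure IsFreeProd (A B : Subgroup E) : Prop where
  left_ne_bot : A ≠ ⊥
  right_ne_bot : B ≠ ⊥
  bijective_lift : Function.Bijective (Monoid.Coprod.lift A.subtype B.subtype)

namespace IsFreeProd

lemma symm (h : IsFreeProd A B) : IsFreeProd B A where
  left_ne_bot := h.right_ne_bot
  right_ne_bot := h.left_ne_bot
  bijective_lift := by
    rw [← Monoid.Coprod.lift_comp_swap]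
    exact h.bijective_lift.comp Monoid.Coprod.swap_bijective

lemma sup_eq_top (h : IsFreeProd A B) : A ⊔ B = ⊤ := by
  rw [← A.range_subtype, ← B.range_subtype, ← Monoid.Coprod.range_lift]
  exact MonoidHom.range_eq_top.2 h.bijective_lift.2

lemma exists_lift (h : IsFreeProd A B) {H : Type*} [Group H] (α : A →* H) (β : B →* H) :
    ∃ γ : E →* H, (∀ a : A, γ a = α a) ∧ ∀ b : B, γ b = β b := by
  let e := MulEquiv.ofBijective _ h.bijective_lift
  have hinl : ∀ a : A, e.symm a = Monoid.Coprod.inl a := fun a => e.symm_apply_eq.2 rfl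
  have hinr : ∀ b : B, e.symm b = Monoid.Coprod.inr b := fun b => e.symm_apply_eq.2 rfl
  refine ⟨(Monoid.Coprod.lift α β).comp e.symm.toMonoidHom, fun a => ?_, fun b => ?_⟩
  · simp only [MonoidHom.comp_apply, MulEquiv.coe_toMonoidHom, hinl, Monoid.Coprod.lift_apply_inl]
  · simp only [MonoidHom.comp_apply, MulEquiv.coe_toMonoidHom, hinr, Monoid.Coprod.lift_apply_inr]

end IsFreeProd

lemma three_le_card_of_no_involution (hA : A ≠ ⊥) (h2 : ∀ g : E, g * g = 1 → g = 1) :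
    3 ≤ Cardinal.mk A := by
  classical
  obtain ⟨a, ha⟩ := Subgroup.ne_bot_iff_exists_ne_one.1 hA
  have haa : a * a ≠ 1 := fun h => ha (Subtype.ext (h2 _ (congrArg Subtype.val h)))
  have hcard : ({1, a, a * a} : Finset A).card = 3 :=
    Finset.card_eq_three.2 ⟨_, _, _, ha.symm, haa.symm, fun h => ha (right_eq_mul.1 h), rfl⟩
  calc (3 : Cardinal) = Cardinal.mk ({1, a, a * a} : Finset A) := by
        rw [Cardinal.mk_coe_finset, hcard]
        rfl
    _ ≤ Cardinal.mk A := Cardinal.mk_subtype_le _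

lemma coprod_lift_injective_of_ping_pong (hA : 3 ≤ Cardinal.mk A) {X Y : Set E} (hX : X.Nonempty)
    (hY : Y.Nonempty) (hXY : Disjoint X Y) (hAX : ∀ a ∈ A, a ≠ 1 → a • Y ⊆ X)
    (hBY : ∀ b ∈ B, b ≠ 1 → b • X ⊆ Y) :
    Function.Injective (Monoid.Coprod.lift A.subtype B.subtype) := by
  let S : Bool → Subgroup E := fun i => if i then A else B
  have hinj : Function.Injective (Monoid.CoprodI.lift fun i => (S i).subtype) := by
    refine Monoid.CoprodI.lift_injective_of_ping_pong _ (.inr ⟨true, hA⟩)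
      (X := fun i => if i then X else Y) (fun i => ?_) (fun i j hij => ?_) fun i j hij => ?_
    · cases i <;> assumption
    · cases i <;> cases j <;> simp_all [Function.onFun, hXY.symm]
    · cases i <;> cases j <;> simp_all [S]
  let k : Monoid.Coprod A B →* Monoid.CoprodI fun i => S i := Monoid.Coprod.lift
    (Monoid.CoprodI.of (M := fun i => S i) (i := true))
    (Monoid.CoprodI.of (M := fun i => S i) (i := false))
  let k' : (Monoid.CoprodI fun i => S i) →* Monoid.Coprod A B := Monoid.CoprodI.lift fun
    | true => Monoid.Coprod.inl
    | false => Monoid.Coprod.inr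
  have hk : Function.LeftInverse k' k := by
    refine DFunLike.congr_fun (f := k'.comp k) (g := MonoidHom.id _) ?_
    ext x <;> simp [k, k']
  have hcomp : Monoid.Coprod.lift A.subtype B.subtype =
      (Monoid.CoprodI.lift fun i => (S i).subtype).comp k := by
    ext x <;> simp [k]
  rw [hcomp]
  exact hinj.comp hk.injective

lemma isFreeProd_of_ping_pong (hA : A ≠ ⊥) (hB : B ≠ ⊥) (hAB : A ⊔ B = ⊤)
    (h2 : ∀ g : E, g * g = 1 → g = 1) {X Y : Set E} (hX : X.Nonempty) (hY : Y.Nonempty)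
    (hXY : Disjoint X Y) (hAX : ∀ a ∈ A, a ≠ 1 → a • Y ⊆ X) (hBY : ∀ b ∈ B, b ≠ 1 → b • X ⊆ Y) :
    IsFreeProd A B where
  left_ne_bot := hA
  right_ne_bot := hB
  bijective_lift := by
    refine ⟨coprod_lift_injective_of_ping_pong (three_le_card_of_no_involution hA h2) hX hY hXY
      hAX hBY, ?_⟩
    rwa [← MonoidHom.range_eq_top, Monoid.Coprod.range_lift, A.range_subtype, B.range_subtype]

end FreeProd

section FreeEdge

variable {E : Type*} [Group E] {K : Subgroup E} {C D D' W X : Set E} {a t : E}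

/-- The translates of `C` and of its complement by elements of `K`. -/
def cutOrbit (K : Subgroup E) (C : Set E) : Set (Set E) :=
  {W | ∃ g ∈ K, W = g • C ∨ W = g • Cᶜ}

lemma compl_mem_cutOrbit (h : W ∈ cutOrbit K C) : Wᶜ ∈ cutOrbit K C := by
  obtain ⟨g, hg, rfl | rfl⟩ := h
  · exact ⟨g, hg, .inr Set.smul_set_compl.symm⟩
  · exact ⟨g, hg, .inl (by rw [← Set.smul_set_compl, compl_compl])⟩

lemma smul_mem_cutOrbit {k : E} (hk : k ∈ K) (h : W ∈ cutOrbit K C) : k • W ∈ cutOrbit K C := by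
  obtain ⟨g, hg, rfl | rfl⟩ := h
  · exact ⟨k * g, K.mul_mem hk hg, .inl (smul_smul k g C)⟩
  · exact ⟨k * g, K.mul_mem hk hg, .inr (smul_smul k g Cᶜ)⟩

lemma self_mem_cutOrbit (K : Subgroup E) (C : Set E) : C ∈ cutOrbit K C :=
  ⟨1, K.one_mem, .inl (one_smul _ _).symm⟩

lemma cutOrbit_subset_top : cutOrbit K C ⊆ cutOrbit ⊤ C :=
  fun _ ⟨g, _, h⟩ => ⟨g, Subgroup.mem_top g, h⟩

lemma smul_mem_cutOrbit_top (g : E) {W : Set E} (h : W ∈ cutOrbit ⊤ C) : g • W ∈ cutOrbit ⊤ C :=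
  smul_mem_cutOrbit (Subgroup.mem_top g) h

lemma cutOrbit_compl (K : Subgroup E) (C : Set E) : cutOrbit K Cᶜ = cutOrbit K C := by
  simp only [cutOrbit, compl_compl, or_comm]

lemma mem_cutOrbit_of_subset (hO : IsNested (cutOrbit ⊤ C))
    (hK : ∀ Y ∈ cutOrbit K C, ∀ X ∈ cutOrbit ⊤ C, Adj (cutOrbit ⊤ C) X Y → X ∈ cutOrbit K C)
    (hX : X ∈ cutOrbit ⊤ C) (hD : D ∈ cutOrbit K C) (hXD : X ⊆ D) : X ∈ cutOrbit K C := by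
  obtain ⟨Y, ⟨hY, hXY, hYD⟩, hmin⟩ := Set.Finite.exists_minimal
    (s := {W | W ∈ cutOrbit K C ∧ X ⊆ W ∧ W ⊆ D})
    ((hO.finite_Icc hX (cutOrbit_subset_top hD)).subset
      fun W hW => ⟨cutOrbit_subset_top hW.1, hW.2.1, hW.2.2⟩)
    ⟨D, hD, hXD, le_rfl⟩
  rcases hXY.eq_or_ssubset with rfl | hXY
  · exact hY
  have hYc := compl_mem_cutOrbit hY
  obtain ⟨Z, hZ, hYZ, hZX, hadj⟩ := hO.exists_adj_compl_of_ssubset (cutOrbit_subset_top hYc)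
    (hO.compl_mem hX) (compl_lt_compl_iff_lt.2 hXY)
  have hZK := hK _ hYc _ (hO.compl_mem hZ) (hO.adj_symm hadj)
  have hZY : Zᶜ ⊂ Y := compl_lt_compl_iff_lt.1 (by rwa [compl_compl])
  exact absurd (hmin ⟨hZK, Set.subset_compl_comm.1 hZX, hZY.subset.trans hYD⟩ hZY.subset) hZY.2

lemma cutOrbit_eq_of_adj (hO : IsNested (cutOrbit ⊤ C))
    (hK : ∀ Y ∈ cutOrbit K C, ∀ X ∈ cutOrbit ⊤ C, Adj (cutOrbit ⊤ C) X Y → X ∈ cutOrbit K C) :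
    cutOrbit K C = cutOrbit ⊤ C := by
  refine cutOrbit_subset_top.antisymm fun X hX => ?_
  have hC := self_mem_cutOrbit K C
  have hC' := compl_mem_cutOrbit hC
  have hcompl : Xᶜ ∈ cutOrbit K C → X ∈ cutOrbit K C := fun h =>
    compl_compl X ▸ compl_mem_cutOrbit h
  rcases hO.subset_cases hX (self_mem_cutOrbit ⊤ C) with h | h | h | h
  · exact mem_cutOrbit_of_subset hO hK hX hC' h
  · exact mem_cutOrbit_of_subset hO hK hX hC h
  · exact hcompl (mem_cutOrbit_of_subset hO hK (hO.compl_mem hX) hC' (Set.compl_subset_compl.2 h))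
  · exact hcompl (mem_cutOrbit_of_subset hO hK (hO.compl_mem hX) hC (Set.compl_subset_comm.1 h))

/-- The translates of `C` and its complement are the oriented edges of a tree on which `E` acts
freely on the edges and without inversions. -/
structure IsFreeEdge (C : Set E) : Prop where
  isNested : IsNested (cutOrbit ⊤ C)
  eq_one_of_smul_eq : ∀ g : E, g • C = C → g = 1
  smul_ne_compl : ∀ g : E, g • C ≠ Cᶜ

namespace IsFreeEdge

lemma compl (hC : IsFreeEdge C) : IsFreeEdge Cᶜ where
  isNested := by rw [cutOrbit_compl]; exact hC.isNested
  eq_one_of_smul_eq g hg := hC.eq_one_of_smul_eq g (by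
    rwa [Set.smul_set_compl, compl_inj_iff] at hg)
  smul_ne_compl g hg := hC.smul_ne_compl g (by rwa [Set.smul_set_compl, compl_inj_iff] at hg)

/-- The stabilizer of the vertex of the tree to which `C` points. -/
def headStab (hC : IsFreeEdge C) : Subgroup E where
  carrier := {g | Adj (cutOrbit ⊤ C) (g • C) C}
  one_mem' := by
    rw [Set.mem_ofPred_eq, one_smul]
    exact Adj.refl _
  mul_mem' {a b} ha hb := by
    have hCO := self_mem_cutOrbit ⊤ C
    rw [Set.mem_ofPred_eq, mul_smul]
    exact hC.isNested.adj_trans (smul_mem_cutOrbit_top _ (smul_mem_cutOrbit_top _ hCO))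
      (smul_mem_cutOrbit_top _ hCO) hCO (hb.smul smul_mem_cutOrbit_top a) ha
  inv_mem' {a} ha := by
    have := Adj.smul smul_mem_cutOrbit_top ha a⁻¹
    rw [inv_smul_smul] at this
    exact hC.isNested.adj_symm this

lemma mem_headStab {hC : IsFreeEdge C} {g : E} :
    g ∈ hC.headStab ↔ Adj (cutOrbit ⊤ C) (g • C) C := Iff.rfl

lemma mem_headStab_compl {hC : IsFreeEdge C} {g : E} :
    g ∈ hC.compl.headStab ↔ Adj (cutOrbit ⊤ C) (g • Cᶜ) Cᶜ := by
  rw [mem_headStab, cutOrbit_compl]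

lemma smul_subset_compl_of_mem_headStab (hC : IsFreeEdge C) (ha : a ∈ hC.headStab)
    (hD : D ∈ cutOrbit ⊤ C) (hDC : Adj (cutOrbit ⊤ C) D C) (hD' : D' ∈ cutOrbit ⊤ C)
    (hDC' : Adj (cutOrbit ⊤ C) D' C) (hne : a • D ≠ D') : a • D ⊆ D'ᶜ := by
  have hCO := self_mem_cutOrbit ⊤ C
  have haC := smul_mem_cutOrbit_top a hCO
  have haD := smul_mem_cutOrbit_top a hD
  have haDC : Adj (cutOrbit ⊤ C) (a • D) C :=
    hC.isNested.adj_trans haD haC hCO (hDC.smul smul_mem_cutOrbit_top a) ha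
  exact (hC.isNested.adj_trans haD hCO hD' haDC
    (hC.isNested.adj_symm hDC')).eq_or_subset_compl.resolve_left hne

lemma smul_subset_compl (hC : IsFreeEdge C) (ha : a ∈ hC.headStab) (ha1 : a ≠ 1) :
    a • C ⊆ Cᶜ :=
  (mem_headStab.1 ha).eq_or_subset_compl.resolve_left fun h => ha1 (hC.eq_one_of_smul_eq a h)

/- A tree acted on with a single orbit of edges is connected, so `E` is generated by the stabilizers
of the ends of an edge together with the elements moving one end to the other. -/
lemma eq_top_of_headStab_le (hC : IsFreeEdge C) (hhead : hC.headStab ≤ K)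
    (htail : hC.compl.headStab ≤ K) (hK : ∀ t, Adj (cutOrbit ⊤ C) (t • C) Cᶜ → t ∈ K) :
    K = ⊤ := by
  have hadj : ∀ Y ∈ cutOrbit K C, ∀ X ∈ cutOrbit ⊤ C, Adj (cutOrbit ⊤ C) X Y →
      X ∈ cutOrbit K C := by
    rintro _ ⟨k, hk, rfl | rfl⟩ _ ⟨g, -, rfl | rfl⟩ h <;>
      replace h := h.smul smul_mem_cutOrbit_top k⁻¹ <;>
      rw [inv_smul_smul, smul_smul] at h <;>
      refine ⟨g, (K.mul_mem_cancel_left (K.inv_mem hk)).1 ?_, by simp⟩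
    · exact hhead h
    · replace h := h.smul smul_mem_cutOrbit_top (k⁻¹ * g)⁻¹
      rw [inv_smul_smul] at h
      exact K.inv_mem_iff.1 (hK _ (hC.isNested.adj_symm h))
    · exact hK _ h
    · exact htail ((mem_headStab_compl (hC := hC)).2 h)
  have horbit := cutOrbit_eq_of_adj hC.isNested hadj
  refine (Subgroup.eq_top_iff' K).2 fun g => ?_
  have hg : g • C ∈ cutOrbit K C := horbit ▸ ⟨g, Subgroup.mem_top g, .inl rfl⟩
  obtain ⟨k, hk, h | h⟩ := hg
  · have := hC.eq_one_of_smul_eq (k⁻¹ * g) (by rw [mul_smul, h, inv_smul_smul])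
    rwa [inv_mul_eq_one.1 this] at hk
  · exact absurd (by rw [mul_smul, h, inv_smul_smul]) (hC.smul_ne_compl (k⁻¹ * g))

lemma ne_one_of_ssubset (h : a • C ⊂ C) : a ≠ 1 := by
  rintro rfl
  exact h.ne (one_smul E C)

/- The quotient of the tree is a segment. -/
lemma isFreeProd_headStab_headStab (hC : IsFreeEdge C) (h2 : ∀ g : E, g * g = 1 → g = 1)
    (hshift : a • C ⊂ C) (hseg : ∀ t : E, ¬ Adj (cutOrbit ⊤ C) (t • C) Cᶜ) :
    IsFreeProd hC.headStab hC.compl.headStab := by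
  have hCO := self_mem_cutOrbit ⊤ C
  have htop : hC.headStab ⊔ hC.compl.headStab = ⊤ :=
    hC.eq_top_of_headStab_le le_sup_left le_sup_right fun t ht => absurd ht (hseg t)
  have ha := ne_one_of_ssubset hshift
  have htail : ∀ b ∈ hC.compl.headStab, b ≠ 1 → b • Cᶜ ⊆ C := fun b hb hb1 =>
    (hC.compl.smul_subset_compl hb hb1).trans (compl_compl C).subset
  refine isFreeProd_of_ping_pong ?_ ?_ htop h2 (hC.isNested.nonempty (hC.isNested.compl_mem hCO))
    (hC.isNested.nonempty hCO) disjoint_compl_left (fun b => hC.smul_subset_compl) htail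
  · intro h
    rw [h, bot_sup_eq] at htop
    have haC := htail a (htop ▸ Subgroup.mem_top a) ha
    rw [Set.smul_set_compl, Set.compl_subset_comm] at haC
    exact hC.isNested.not_subset_compl (hC.isNested.compl_mem hCO) (haC.trans hshift.subset) le_rfl
  · intro h
    rw [h, sup_bot_eq] at htop
    exact hC.isNested.not_subset_compl (smul_mem_cutOrbit_top a hCO) hshift.subset
      (hC.smul_subset_compl (htop ▸ Subgroup.mem_top a) ha)

lemma smul_ssubset_of_adj (hC : IsFreeEdge C) (ht : Adj (cutOrbit ⊤ C) (t • C) Cᶜ) :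
    t • C ⊂ C := by
  rcases ht with h | ⟨h, -⟩
  · exact absurd h (hC.smul_ne_compl t)
  · rwa [compl_compl] at h

lemma headStab_sup_zpowers_eq_top (hC : IsFreeEdge C) (ht : Adj (cutOrbit ⊤ C) (t • C) Cᶜ) :
    hC.headStab ⊔ Subgroup.zpowers t = ⊤ := by
  set K := hC.headStab ⊔ Subgroup.zpowers t with hK
  have hO := hC.isNested
  have hCO := self_mem_cutOrbit ⊤ C
  have htK : t ∈ K := le_sup_right (a := hC.headStab) (Subgroup.mem_zpowers t)
  have hconj : ∀ {W : Set E}, W ∈ cutOrbit ⊤ C → Adj (cutOrbit ⊤ C) W Cᶜ →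
      Adj (cutOrbit ⊤ C) (t⁻¹ • W) C := fun hW hWC => by
    simpa only [inv_smul_smul] using (hO.adj_trans hW (hO.compl_mem hCO)
      (smul_mem_cutOrbit_top t hCO) hWC (hO.adj_symm ht)).smul smul_mem_cutOrbit_top t⁻¹
  refine hC.eq_top_of_headStab_le le_sup_left (fun b hb => ?_) fun s hs => ?_
  · have hbt : t⁻¹ * (b * t) ∈ hC.headStab := by
      rw [mem_headStab, mul_smul, mul_smul]
      refine hconj (smul_mem_cutOrbit_top _ (smul_mem_cutOrbit_top _ hCO)) ?_
      exact hO.adj_trans (smul_mem_cutOrbit_top _ (smul_mem_cutOrbit_top _ hCO))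
        (smul_mem_cutOrbit_top _ (hO.compl_mem hCO)) (hO.compl_mem hCO)
        (ht.smul smul_mem_cutOrbit_top b) ((mem_headStab_compl (hC := hC)).1 hb)
    have := le_sup_left (b := Subgroup.zpowers t) hbt
    rwa [← hK, K.mul_mem_cancel_left (K.inv_mem htK), K.mul_mem_cancel_right htK] at this
  · have hst : t⁻¹ * s ∈ hC.headStab := by
      rw [mem_headStab, mul_smul]
      exact hconj (smul_mem_cutOrbit_top _ hCO) hs
    have := le_sup_left (b := Subgroup.zpowers t) hst
    rwa [← hK, K.mul_mem_cancel_left (K.inv_mem htK)] at this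

lemma headStab_smul_union_subset (hC : IsFreeEdge C) (ht : Adj (cutOrbit ⊤ C) (t • C) Cᶜ)
    (ha : a ∈ hC.headStab) (ha1 : a ≠ 1) :
    a • (C ∪ t⁻¹ • Cᶜ) ⊆ (C ∪ t⁻¹ • Cᶜ)ᶜ := by
  have hCO := self_mem_cutOrbit ⊤ C
  have hDO := smul_mem_cutOrbit_top t⁻¹ (compl_mem_cutOrbit hCO)
  have hDC : Adj (cutOrbit ⊤ C) (t⁻¹ • Cᶜ) C := by
    simpa only [inv_smul_smul] using hC.isNested.adj_symm (ht.smul smul_mem_cutOrbit_top t⁻¹)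
  rw [Set.smul_set_union, Set.compl_union]
  refine Set.union_subset (Set.subset_inter (hC.smul_subset_compl ha ha1) ?_)
    (Set.subset_inter ?_ ?_)
  · refine hC.smul_subset_compl_of_mem_headStab ha hCO (Adj.refl C) hDO hDC fun h => ?_
    exact hC.smul_ne_compl (t * a) (by rw [mul_smul, h, smul_inv_smul])
  · refine hC.smul_subset_compl_of_mem_headStab ha hDO hDC hCO (Adj.refl C) fun h => ?_
    refine hC.compl.smul_ne_compl (a * t⁻¹) ?_
    rw [mul_smul, h, compl_compl]
  · refine hC.smul_subset_compl_of_mem_headStab ha hDO hDC hDO hDC fun h => ha1 ?_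
    have := hC.compl.eq_one_of_smul_eq (t * a * t⁻¹) (by
      rw [mul_smul, mul_smul, h, smul_inv_smul])
    rwa [conj_eq_one_iff] at this

lemma pow_succ_smul_subset (ht : t • C ⊆ C) (hD : t • D ⊆ C) (k : ℕ) : t ^ (k + 1) • D ⊆ C := by
  induction k with
  | zero => rwa [zero_add, pow_one]
  | succ k ih =>
    rw [pow_succ', mul_smul]
    exact (Set.smul_set_mono ih).trans ht

lemma zpow_smul_subset (ht : t • C ⊆ C) {k : ℤ} (hk : t ^ k ≠ 1) :
    t ^ k • (C ∪ t⁻¹ • Cᶜ)ᶜ ⊆ C ∪ t⁻¹ • Cᶜ := by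
  have ht' : t⁻¹ • t⁻¹ • Cᶜ ⊆ t⁻¹ • Cᶜ := by
    refine Set.smul_set_mono ?_
    rw [← Set.subset_smul_set_iff, Set.smul_set_compl]
    exact Set.compl_subset_compl.2 ht
  have hpos : t • (C ∪ t⁻¹ • Cᶜ)ᶜ ⊆ C := by
    rw [Set.compl_union, Set.smul_set_compl, compl_compl, Set.smul_set_inter, smul_inv_smul]
    exact Set.inter_subset_right
  have hneg : t⁻¹ • (C ∪ t⁻¹ • Cᶜ)ᶜ ⊆ t⁻¹ • Cᶜ :=
    Set.smul_set_mono (Set.compl_subset_compl.2 Set.subset_union_left)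
  rcases k with (_ | m) | m
  · exact absurd (zpow_zero t) hk
  · rw [Int.ofNat_eq_natCast, zpow_natCast]
    exact (pow_succ_smul_subset ht hpos m).trans Set.subset_union_left
  · rw [zpow_negSucc, ← inv_pow]
    exact (pow_succ_smul_subset ht' hneg m).trans Set.subset_union_right

/- The quotient of the tree is a loop. -/
lemma isFreeProd_headStab_zpowers (hC : IsFreeEdge C) (h2 : ∀ g : E, g * g = 1 → g = 1)
    (hcomm : ∃ x y : E, x * y ≠ y * x) (ht : Adj (cutOrbit ⊤ C) (t • C) Cᶜ) :
    IsFreeProd hC.headStab (Subgroup.zpowers t) := by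
  have htop := hC.headStab_sup_zpowers_eq_top ht
  have htC := hC.smul_ssubset_of_adj ht
  have hbot : hC.headStab ≠ ⊥ := by
    intro h
    rw [h, bot_sup_eq] at htop
    obtain ⟨x, y, hxy⟩ := hcomm
    obtain ⟨i, rfl⟩ := Subgroup.mem_zpowers_iff.1 (htop ▸ Subgroup.mem_top x)
    obtain ⟨j, rfl⟩ := Subgroup.mem_zpowers_iff.1 (htop ▸ Subgroup.mem_top y)
    exact hxy ((Commute.refl t).zpow_zpow i j)
  have hhead : ∀ a ∈ hC.headStab, a ≠ 1 → a • (C ∪ t⁻¹ • Cᶜ) ⊆ (C ∪ t⁻¹ • Cᶜ)ᶜ :=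
    fun a => hC.headStab_smul_union_subset ht
  have hne : (C ∪ t⁻¹ • Cᶜ).Nonempty :=
    (hC.isNested.nonempty (self_mem_cutOrbit ⊤ C)).mono Set.subset_union_left
  refine isFreeProd_of_ping_pong (X := (C ∪ t⁻¹ • Cᶜ)ᶜ) hbot
    (by simpa using ne_one_of_ssubset htC) htop h2 ?_ hne disjoint_compl_left hhead ?_
  · obtain ⟨a, ha⟩ := Subgroup.ne_bot_iff_exists_ne_one.1 hbot
    exact (hne.smul_set (a := (a : E))).mono (hhead a a.2 fun h => ha (Subtype.ext h))
  · rintro _ ⟨k, rfl⟩ hk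
    exact zpow_smul_subset htC.subset hk

theorem exists_isFreeProd (hC : IsFreeEdge C) (h2 : ∀ g : E, g * g = 1 → g = 1)
    (hshift : a • C ⊂ C) (hcomm : ∃ x y : E, x * y ≠ y * x) :
    ∃ A B : Subgroup E, IsFreeProd A B := by
  by_cases hloop : ∃ t : E, Adj (cutOrbit ⊤ C) (t • C) Cᶜ
  · obtain ⟨t, ht⟩ := hloop
    exact ⟨_, _, hC.isFreeProd_headStab_zpowers h2 hcomm ht⟩
  · exact ⟨_, _, hC.isFreeProd_headStab_headStab h2 hshift (not_exists.1 hloop)⟩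

end IsFreeEdge

lemma IsCutSystem.isFreeEdge {F : Subgroup E} {O : Set (Set E)} (hO : IsCutSystem F O)
    (hC : C ∈ O) (hstab : ∀ g : E, g • C = C → g = 1) (h2 : ∀ g : E, g * g = 1 → g = 1) :
    IsFreeEdge C where
  isNested :=
    have hsub : ∀ {W : Set E}, W ∈ cutOrbit ⊤ C → W ∈ O := by
      rintro _ ⟨g, -, rfl | rfl⟩
      · exact hO.smul_mem g hC
      · exact hO.smul_mem g (hO.compl_mem hC)
    { compl_mem := compl_mem_cutOrbit
      nested := fun h h' => hO.nested (hsub h) (hsub h')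
      finite := fun x y => (hO.finite x y).subset fun _ hW => ⟨hsub hW.1, hW.2⟩
      nonempty := fun h => hO.nonempty (hsub h) }
  eq_one_of_smul_eq := hstab
  smul_ne_compl g hg := by
    have hgg : g • g • C = C := by rw [hg, Set.smul_set_compl, hg, compl_compl]
    rw [h2 g (hstab _ (by rw [mul_smul, hgg])), one_smul] at hg
    have : Nonempty E := ⟨1⟩
    exact ne_compl_self hg

end FreeEdge

section PrimeIndex

variable {E X : Type*} [Group E] {ι : FreeGroup X →* E} {p : ℕ} [Fact p.Prime]
  {φ : E →* Multiplicative (ZMod p)}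

lemma eq_one_of_mul_self_eq_one (hι : Function.Injective ι) (hp : p ≠ 2)
    (hker : φ.ker = ι.range) {g : E} (hg : g * g = 1) : g = 1 := by
  have hg2 : g ^ 2 = 1 := (pow_two g).trans hg
  by_contra hg1
  refine not_isOfFinOrder_of_mem_range hι (hker ▸ MonoidHom.mem_ker.2 ?_) hg1
    (isOfFinOrder_iff_pow_eq_one.2 ⟨2, two_pos, hg2⟩)
  have hcop : Nat.Coprime 2 p := (Nat.coprime_primes Nat.prime_two Fact.out).2 hp.symm
  have hp1 : φ g ^ p = 1 := by simpa using pow_card_eq_one' (x := φ g)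
  have hφ2 : φ g ^ 2 = 1 := by rw [← map_pow, hg2, map_one]
  simpa only [hcop.gcd_eq_one, pow_one] using pow_gcd_eq_one.2 ⟨hφ2, hp1⟩

lemma exists_inv_mul_pow_mem_ker (φ : E →* Multiplicative (ZMod p)) (s : E) {t : E}
    (ht : t ∉ φ.ker) : ∃ k : ℕ, s⁻¹ * t ^ k ∈ φ.ker := by
  obtain ⟨k, hk⟩ := mem_powers_of_prime_card (p := p) (by simp) (g := φ t) (g' := φ s) ht
  exact ⟨k, MonoidHom.mem_ker.2 (by simp [← hk])⟩

theorem exists_isFreeProd_of_prime_index [Finite X] (hι : Function.Injective ι) (hp : p ≠ 2)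
    (hφ : Function.Surjective φ) (hker : φ.ker = ι.range)
    (hcent : ∀ s, s ∉ φ.ker → ∃ f ∈ φ.ker, f * s ≠ s * f) :
    ∃ A B : Subgroup E, IsFreeProd A B := by
  obtain ⟨s, hs⟩ := hφ (Multiplicative.ofAdd 1)
  have hsker : s ∉ φ.ker := fun h =>
    one_ne_zero (Multiplicative.ofAdd.injective (hs.symm.trans (MonoidHom.mem_ker.1 h)))
  obtain ⟨f, hf, hfs⟩ := hcent s hsker
  have hf1 : f ≠ 1 := fun h => hfs (by rw [h, one_mul, mul_one])
  have : ι.range.Normal := hker ▸ inferInstance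
  have : ι.range.FiniteIndex := hker ▸ inferInstance
  have h2 : ∀ g : E, g * g = 1 → g = 1 := fun _ => eq_one_of_mul_self_eq_one hι hp hker
  obtain ⟨O, hO⟩ := exists_isCutSystem hι
  obtain ⟨W, hW, -⟩ := hO.exists_ssubset f (hker ▸ hf) hf1
  obtain ⟨C, hC, hstab⟩ := hO.exists_trivial_stabilizer ⟨W, hW⟩
    (hker ▸ fun x _ => exists_inv_mul_pow_mem_ker φ x) (hker ▸ hcent)
  obtain ⟨a, -, ha⟩ := hO.exists_smul_ssubset hC
  exact (hO.isFreeEdge hC hstab h2).exists_isFreeProd h2 ha ⟨f, s, hfs⟩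

end PrimeIndex

/-! ### Bases of kernels on free products -/

section Kurosh

variable {E Q H : Type*} [Group E] [Group Q] [Group H] {A B D K : Subgroup E} {φ : E →* Q}

/-- `c` is a crossed homomorphism from `E` to the functions `Q → H`, on which `E` acts through `φ`
by translation. -/
def IsCocycle (φ : E →* Q) (c : E → Q → H) : Prop :=
  ∀ a b q, c (a * b) q = c a q * c b ((φ a)⁻¹ * q)

namespace IsCocycle

variable {c : E → Q → H}

lemma map_one (hc : IsCocycle φ c) (q : Q) : c 1 q = 1 := by
  simpa using hc 1 1 q

lemma conj (hc : IsCocycle φ c) (τ : Q → H) :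
    IsCocycle φ fun a q => τ q * c a q * (τ ((φ a)⁻¹ * q))⁻¹ := fun a b q => by
  simp [hc a b q, mul_assoc]

/-- The homomorphism to the permutational wreath product encoding a cocycle. -/
def toWreath (hc : IsCocycle φ c) : E →* RegularWreathProduct H Q where
  toFun a := ⟨c a, φ a⟩
  map_one' := RegularWreathProduct.ext (funext hc.map_one) (by simp)
  map_mul' a b := RegularWreathProduct.ext (funext (hc a b)) (by simp)

end IsCocycle

lemma isCocycle_of_le_ker (hD : D ≤ φ.ker) (f : Q → D →* H) :
    IsCocycle (φ.comp D.subtype) fun a q => f q a := fun a b q => by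
  simp [MonoidHom.mem_ker.1 (hD a.2)]

lemma IsFreeProd.exists_cocycle (h : IsFreeProd A B) {cA : A → Q → H} {cB : B → Q → H}
    (hA : IsCocycle (φ.comp A.subtype) cA) (hB : IsCocycle (φ.comp B.subtype) cB) :
    ∃ c : E → Q → H, IsCocycle φ c ∧ (∀ a : A, c a = cA a) ∧ ∀ b : B, c b = cB b := by
  obtain ⟨γ, hγA, hγB⟩ := h.exists_lift hA.toWreath hB.toWreath
  have hright : RegularWreathProduct.rightHom.comp γ = φ := by
    refine MonoidHom.eq_of_eqOn_top fun x _ => ?_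
    have hle : A ⊔ B ≤ (RegularWreathProduct.rightHom.comp γ).eqLocus φ :=
      sup_le (fun a ha => congrArg RegularWreathProduct.right (hγA ⟨a, ha⟩))
        fun b hb => congrArg RegularWreathProduct.right (hγB ⟨b, hb⟩)
    exact hle (h.sup_eq_top ▸ Subgroup.mem_top x)
  refine ⟨fun x => (γ x).left, fun a b q => ?_,
    fun a => congrArg RegularWreathProduct.left (hγA a),
    fun b => congrArg RegularWreathProduct.left (hγB b)⟩
  have hr : (γ a).right = φ a := DFunLike.congr_fun hright a
  simp [hr]

/-- A normalized section of `φ` with values in the subgroup `D`. -/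
structure IsSection (φ : E →* Q) (D : Subgroup E) (σ : Q → E) : Prop where
  mem : ∀ q, σ q ∈ D
  map_eq : ∀ q, φ (σ q) = q
  one : σ 1 = 1

namespace IsSection

variable {σ : Q → E}

/-- The Schreier generators of `D ⊓ φ.ker` associated with a section. -/
def schreier (hσ : IsSection φ D σ) (b : D) (q : Q) : (D ⊓ φ.ker : Subgroup E) :=
  ⟨(σ q)⁻¹ * b * σ ((φ b)⁻¹ * q),
    D.mul_mem (D.mul_mem (D.inv_mem (hσ.mem _)) b.2) (hσ.mem _),
    by simp [hσ.map_eq]⟩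

lemma isCocycle_schreier (hσ : IsSection φ D σ) (f : (D ⊓ φ.ker : Subgroup E) →* H) :
    IsCocycle (φ.comp D.subtype) fun b q => f (hσ.schreier b q) := fun a b q =>
  (congrArg f (Subtype.ext (by simp [schreier, mul_assoc]))).trans (map_mul f _ _)

lemma schreier_one (hσ : IsSection φ D σ) (x : (D ⊓ φ.ker : Subgroup E)) :
    hσ.schreier ⟨x, x.2.1⟩ 1 = x :=
  Subtype.ext (by simp [schreier, hσ.one, MonoidHom.mem_ker.1 x.2.2])

lemma schreier_section (hσ : IsSection φ D σ) (q : Q) : hσ.schreier ⟨σ q, hσ.mem q⟩ q = 1 :=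
  Subtype.ext (by simp [schreier, hσ.one, hσ.map_eq])

lemma schreier_inv_section (hσ : IsSection φ D σ) (q : Q) :
    hσ.schreier ⟨(σ q)⁻¹, D.inv_mem (hσ.mem q)⟩ 1 = 1 :=
  Subtype.ext (by simp [schreier, hσ.one, hσ.map_eq])

end IsSection

lemma mem_of_schreier (hAB : A ⊔ B = ⊤) {σ : Q → E} (hσ1 : σ 1 = 1)
    (hA : ∀ a ∈ A, ∀ q, (σ q)⁻¹ * a * σ ((φ a)⁻¹ * q) ∈ K)
    (hB : ∀ b ∈ B, ∀ q, (σ q)⁻¹ * b * σ ((φ b)⁻¹ * q) ∈ K) {x : E} (hx : x ∈ φ.ker) : x ∈ K := by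
  let S : Subgroup E :=
    { carrier := {x | ∀ q, (σ q)⁻¹ * x * σ ((φ x)⁻¹ * q) ∈ K}
      one_mem' := fun q => by simp
      mul_mem' := fun {a b} ha hb q => by
        simpa [mul_assoc] using K.mul_mem (ha q) (hb ((φ a)⁻¹ * q))
      inv_mem' := fun {a} ha q => by simpa [mul_assoc] using K.inv_mem (ha (φ a * q)) }
  have hS : S = ⊤ := top_le_iff.1 (hAB ▸ sup_le hA hB)
  have hxS : x ∈ S := hS ▸ Subgroup.mem_top x
  simpa [MonoidHom.mem_ker.1 hx, hσ1] using hxS 1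

lemma exists_basis_of_cocycle {J : Type*} {c : E → Q → FreeGroup J} (hc : IsCocycle φ c)
    {g : J → E} (hg : ∀ j, g j ∈ φ.ker) (hcg : ∀ j, c (g j) 1 = FreeGroup.of j)
    (hgen : ∀ x ∈ φ.ker, x ∈ (FreeGroup.lift g).range) :
    ∃ e : FreeGroup J ≃* φ.ker, ∀ j, (e (FreeGroup.of j) : E) = g j := by
  let f : FreeGroup J →* φ.ker := FreeGroup.lift fun j => ⟨g j, hg j⟩
  have hf : φ.ker.subtype.comp f = FreeGroup.lift g := by ext; simp [f]
  let ψ : φ.ker →* FreeGroup J :=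
    { toFun := fun x => c x 1
      map_one' := hc.map_one 1
      map_mul' := fun x y => by simpa [MonoidHom.mem_ker.1 x.2] using hc x y 1 }
  have hψ : ψ.comp f = MonoidHom.id _ := by ext j; simp [ψ, f, hcg]
  have hinj : Function.LeftInverse ψ f := DFunLike.congr_fun hψ
  have hsurj : Function.Surjective f := by
    rintro ⟨x, hx⟩
    obtain ⟨y, hy⟩ := hgen x hx
    exact ⟨y, Subtype.ext ((DFunLike.congr_fun hf y).trans hy)⟩
  exact ⟨MulEquiv.ofBijective f ⟨hinj.injective, hsurj⟩, fun j =>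
    congrArg Subtype.val (FreeGroup.lift_apply_of (x := j))⟩

lemma le_of_basis_mem {I : Type*} (e : FreeGroup I ≃* D)
    (h : ∀ i, (e (FreeGroup.of i) : E) ∈ K) : D ≤ K := by
  have hcomp : D.subtype.comp e.toMonoidHom = FreeGroup.lift fun i => (e (FreeGroup.of i) : E) := by
    ext; simp
  intro x hx
  refine FreeGroup.range_lift_le (s := K) (Set.range_subset_iff.2 h) ⟨e.symm ⟨x, hx⟩, ?_⟩
  rw [← hcomp]
  simp

namespace IsFreeProd

variable {I I' : Type*} {σ υ : Q → E}

/- The kernel is the free product of the conjugates `(σ q)⁻¹ * A * σ q` and of `B ⊓ φ.ker`. -/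
theorem exists_basis_of_le_ker (h : IsFreeProd A B) (hA : A ≤ φ.ker) (hσ : IsSection φ B σ)
    (eA : FreeGroup I ≃* A) (eB : FreeGroup I' ≃* (B ⊓ φ.ker : Subgroup E)) :
    ∃ e : FreeGroup ((Q × I) ⊕ I') ≃* φ.ker,
      (∀ q i, (e (FreeGroup.of (.inl (q, i))) : E) = (σ q)⁻¹ * eA (FreeGroup.of i) * σ q) ∧
      ∀ i, (e (FreeGroup.of (.inr i)) : E) = eB (FreeGroup.of i) := by
  let α (q : Q) : A →* FreeGroup ((Q × I) ⊕ I') :=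
    (FreeGroup.map fun i => .inl (q, i)).comp eA.symm.toMonoidHom
  let β : (B ⊓ φ.ker : Subgroup E) →* FreeGroup ((Q × I) ⊕ I') :=
    (FreeGroup.map .inr).comp eB.symm.toMonoidHom
  obtain ⟨c, hc, hcA, hcB⟩ :=
    h.exists_cocycle (isCocycle_of_le_ker hA α) (hσ.isCocycle_schreier β)
  have hcA' (a : A) (q : Q) : c a q = α q a := congrFun (hcA a) q
  have hcB' (b : E) (hb : b ∈ B) (q : Q) : c b q = β (hσ.schreier ⟨b, hb⟩ q) :=
    congrFun (hcB ⟨b, hb⟩) q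
  have hφA (a : A) : φ a = 1 := hA a.2
  let g : (Q × I) ⊕ I' → E :=
    Sum.elim (fun x => (σ x.1)⁻¹ * eA (FreeGroup.of x.2) * σ x.1) fun i => eB (FreeGroup.of i)
  have hgK : ∀ j, g j ∈ (FreeGroup.lift g).range := fun j => ⟨FreeGroup.of j, by simp⟩
  obtain ⟨e, he⟩ : ∃ e : FreeGroup ((Q × I) ⊕ I') ≃* φ.ker,
      ∀ j, (e (FreeGroup.of j) : E) = g j := by
    refine exists_basis_of_cocycle hc ?_ ?_ fun x hx =>
      mem_of_schreier h.sup_eq_top hσ.one (fun a ha q => ?_) (fun b hb q => ?_) hx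
    · rintro (⟨q, i⟩ | i)
      · simp [g, MonoidHom.mem_ker, hφA]
      · exact (eB (FreeGroup.of i)).2.2
    · rintro (⟨q, i⟩ | i)
      · have h₁ : c (σ q)⁻¹ 1 = 1 := by
          rw [hcB' _ (B.inv_mem (hσ.mem q)), hσ.schreier_inv_section, map_one]
        have h₂ : c (σ q) q = 1 := by
          rw [hcB' _ (hσ.mem q), hσ.schreier_section, map_one]
        simp [g, hc _ _ _, hσ.map_eq, h₁, h₂, hcA', α, hφA]
      · simp [g, hcB' _ (eB (FreeGroup.of i)).2.1, hσ.schreier_one, β]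
    · have hconj : A ≤ (FreeGroup.lift g).range.comap (MulAut.conj (σ q)⁻¹).toMonoidHom :=
        le_of_basis_mem eA fun i => by simpa [g, Subgroup.mem_comap] using hgK (.inl (q, i))
      simpa [Subgroup.mem_comap, MonoidHom.mem_ker.1 (hA ha)] using hconj ha
    · exact le_of_basis_mem eB (fun i => hgK (.inr i)) (hσ.schreier ⟨b, hb⟩ q).2
  exact ⟨e, fun q i => he (.inl (q, i)), fun i => he (.inr i)⟩

/- The kernel is the free product of `A ⊓ φ.ker`, `B ⊓ φ.ker` and a free group measuring the
difference between the two sections. -/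
theorem exists_basis_of_surjective (h : IsFreeProd A B) (hσ : IsSection φ A σ)
    (hυ : IsSection φ B υ) (eA : FreeGroup I ≃* (A ⊓ φ.ker : Subgroup E))
    (eB : FreeGroup I' ≃* (B ⊓ φ.ker : Subgroup E)) :
    ∃ e : FreeGroup ((I ⊕ I') ⊕ {q : Q // q ≠ 1}) ≃* φ.ker,
      (∀ i, (e (FreeGroup.of (.inl (.inl i))) : E) = eA (FreeGroup.of i)) ∧
      (∀ i, (e (FreeGroup.of (.inl (.inr i))) : E) = eB (FreeGroup.of i)) ∧
      ∀ q, (e (FreeGroup.of (.inr q)) : E) = (σ q)⁻¹ * υ q := by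
  classical
  let α : (A ⊓ φ.ker : Subgroup E) →* FreeGroup ((I ⊕ I') ⊕ {q : Q // q ≠ 1}) :=
    (FreeGroup.map fun i => .inl (.inl i)).comp eA.symm.toMonoidHom
  let β : (B ⊓ φ.ker : Subgroup E) →* FreeGroup ((I ⊕ I') ⊕ {q : Q // q ≠ 1}) :=
    (FreeGroup.map fun i => .inl (.inr i)).comp eB.symm.toMonoidHom
  let τ (q : Q) : FreeGroup ((I ⊕ I') ⊕ {q : Q // q ≠ 1}) :=
    if hq : q = 1 then 1 else FreeGroup.of (.inr ⟨q, hq⟩)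
  have hτ1 : τ 1 = 1 := dif_pos rfl
  obtain ⟨c, hc, hcA, hcB⟩ :=
    h.exists_cocycle (hσ.isCocycle_schreier α) ((hυ.isCocycle_schreier β).conj τ)
  have hcA' (a : E) (ha : a ∈ A) (q : Q) : c a q = α (hσ.schreier ⟨a, ha⟩ q) :=
    congrFun (hcA ⟨a, ha⟩) q
  have hcB' (b : E) (hb : b ∈ B) (q : Q) :
      c b q = τ q * β (hυ.schreier ⟨b, hb⟩ q) * (τ ((φ b)⁻¹ * q))⁻¹ := congrFun (hcB ⟨b, hb⟩) q
  let g : (I ⊕ I') ⊕ {q : Q // q ≠ 1} → E := Sum.elim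
    (Sum.elim (fun i => eA (FreeGroup.of i)) fun i => eB (FreeGroup.of i)) fun q => (σ q)⁻¹ * υ q
  have hgK : ∀ j, g j ∈ (FreeGroup.lift g).range := fun j => ⟨FreeGroup.of j, by simp⟩
  obtain ⟨e, he⟩ : ∃ e : FreeGroup ((I ⊕ I') ⊕ {q : Q // q ≠ 1}) ≃* φ.ker,
      ∀ j, (e (FreeGroup.of j) : E) = g j := by
    refine exists_basis_of_cocycle hc ?_ ?_ fun x hx =>
      mem_of_schreier h.sup_eq_top hσ.one (fun a ha q => ?_) (fun b hb q => ?_) hx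
    · rintro ((i | i) | q)
      · exact (eA (FreeGroup.of i)).2.2
      · exact (eB (FreeGroup.of i)).2.2
      · simp [g, MonoidHom.mem_ker, hσ.map_eq, hυ.map_eq]
    · rintro ((i | i) | q)
      · simp [g, hcA' _ (eA (FreeGroup.of i)).2.1, hσ.schreier_one, α]
      · simp [g, hcB' _ (eB (FreeGroup.of i)).2.1, hυ.schreier_one, β, hτ1,
          MonoidHom.mem_ker.1 (eB (FreeGroup.of i)).2.2]
      · have h₁ : c (σ q)⁻¹ 1 = 1 := by
          rw [hcA' _ (A.inv_mem (hσ.mem q)), hσ.schreier_inv_section, map_one]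
        have h₂ : c (υ q) q = τ q := by
          simp [hcB' _ (hυ.mem q), hυ.schreier_section, hυ.map_eq, hτ1]
        simp [g, hc _ _ _, hσ.map_eq, h₁, h₂, τ, q.2]
    · exact le_of_basis_mem eA (fun i => hgK (.inl (.inl i))) (hσ.schreier ⟨a, ha⟩ q).2
    · have hτ (q : Q) : (σ q)⁻¹ * υ q ∈ (FreeGroup.lift g).range := by
        by_cases hq : q = 1
        · simp [hq, hσ.one, hυ.one, one_mem]
        · exact hgK (.inr ⟨q, hq⟩)
      have hb' : (υ q)⁻¹ * b * υ ((φ b)⁻¹ * q) ∈ (FreeGroup.lift g).range :=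
        le_of_basis_mem eB (fun i => hgK (.inl (.inr i))) (hυ.schreier ⟨b, hb⟩ q).2
      simpa [mul_assoc] using mul_mem (mul_mem (hτ q) hb') (inv_mem (hτ ((φ b)⁻¹ * q)))
  exact ⟨e, fun i => he (.inl (.inl i)), fun i => he (.inl (.inr i)), fun q => he (.inr q)⟩

end IsFreeProd

end Kurosh

/-! ### Transvections -/

section Transvections

variable {J : Type*}

lemma mulAut_ext {f g : MulAut (FreeGroup J)}
    (h : ∀ j, f (FreeGroup.of j) = g (FreeGroup.of j)) : f = g :=
  MulEquiv.toMonoidHom_injective (FreeGroup.ext_hom _ _ h)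

/-- The automorphism of a free group with prescribed values on the generators, whose inverse also
has prescribed values on the generators. -/
def autMk (f g : J → FreeGroup J) (hfg : ∀ j, FreeGroup.lift f (g j) = FreeGroup.of j)
    (hgf : ∀ j, FreeGroup.lift g (f j) = FreeGroup.of j) : MulAut (FreeGroup J) :=
  MonoidHom.toMulEquiv (FreeGroup.lift f) (FreeGroup.lift g)
    (by ext j; simp [hgf]) (by ext j; simp [hfg])

lemma autMk_of (f g : J → FreeGroup J) (hfg hgf) (j : J) :
    autMk f g hfg hgf (FreeGroup.of j) = f j :=
  FreeGroup.lift_apply_of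

lemma autMk_symm_of (f g : J → FreeGroup J) (hfg hgf) (j : J) :
    (autMk f g hfg hgf).symm (FreeGroup.of j) = g j :=
  FreeGroup.lift_apply_of

/-- The automorphism of a free group permuting the generators. -/
def permAut (π : Equiv.Perm J) : MulAut (FreeGroup J) := FreeGroup.freeGroupCongr π

lemma permAut_of (π : Equiv.Perm J) (k : J) :
    permAut π (FreeGroup.of k) = FreeGroup.of (π k) := by
  simp [permAut]

lemma permAut_mul (π π' : Equiv.Perm J) : permAut (π * π') = permAut π * permAut π' :=
  mulAut_ext fun k => by simp [permAut_of]

variable [DecidableEq J] {i j k : J}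

/-- The transvection mapping `x i` to `x i * x j` and fixing the other generators. -/
def rtransv (h : i ≠ j) : MulAut (FreeGroup J) :=
  autMk (fun k => if k = i then FreeGroup.of i * FreeGroup.of j else FreeGroup.of k)
    (fun k => if k = i then FreeGroup.of i * (FreeGroup.of j)⁻¹ else FreeGroup.of k)
    (fun k => by by_cases hk : k = i <;> simp [hk, h.symm])
    (fun k => by by_cases hk : k = i <;> simp [hk, h.symm])

/-- The transvection mapping `x i` to `x j * x i` and fixing the other generators. -/
def ltransv (h : i ≠ j) : MulAut (FreeGroup J) :=
  autMk (fun k => if k = i then FreeGroup.of j * FreeGroup.of i else FreeGroup.of k)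
    (fun k => if k = i then (FreeGroup.of j)⁻¹ * FreeGroup.of i else FreeGroup.of k)
    (fun k => by by_cases hk : k = i <;> simp [hk, h.symm])
    (fun k => by by_cases hk : k = i <;> simp [hk, h.symm])

lemma rtransv_of (h : i ≠ j) (k : J) : rtransv h (FreeGroup.of k) =
    if k = i then FreeGroup.of i * FreeGroup.of j else FreeGroup.of k := autMk_of _ _ _ _ _

lemma ltransv_of (h : i ≠ j) (k : J) : ltransv h (FreeGroup.of k) =
    if k = i then FreeGroup.of j * FreeGroup.of i else FreeGroup.of k := autMk_of _ _ _ _ _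

lemma rtransv_symm_of (h : i ≠ j) (k : J) : (rtransv h).symm (FreeGroup.of k) =
    if k = i then FreeGroup.of i * (FreeGroup.of j)⁻¹ else FreeGroup.of k := autMk_symm_of _ _ _ _ _

lemma ltransv_symm_of (h : i ≠ j) (k : J) : (ltransv h).symm (FreeGroup.of k) =
    if k = i then (FreeGroup.of j)⁻¹ * FreeGroup.of i else FreeGroup.of k := autMk_symm_of _ _ _ _ _

lemma permAut_mul_rtransv (π : Equiv.Perm J) (h : i ≠ j) :
    permAut π * rtransv h = rtransv (π.injective.ne h) * permAut π := by
  refine mulAut_ext fun k => ?_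
  by_cases hk : k = i <;> simp [rtransv_of, permAut_of, hk]

lemma rtransv_mul_rtransv (hij : i ≠ j) (hjk : j ≠ k) (hik : i ≠ k) :
    rtransv hjk * rtransv hij = rtransv hij * rtransv hjk * rtransv hik := by
  refine mulAut_ext fun l => ?_
  by_cases hi : l = i
  · subst hi
    simp [rtransv_of, hij, hik.symm, hjk.symm, mul_assoc]
  · by_cases hj : l = j
    · simp [rtransv_of, hij.symm, hik.symm, hj]
    · simp [rtransv_of, hi, hj]

lemma exists_conj_ltransv_of (hij : i ≠ j) (hki : k ≠ i) (hkj : k ≠ j) (a b : ℤ) :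
    ∃ δ : MulAut (FreeGroup J), ∀ l, (δ * ltransv hkj * δ⁻¹) (FreeGroup.of l) =
      if l = k then FreeGroup.of i ^ a * FreeGroup.of j * FreeGroup.of i ^ b * FreeGroup.of k
      else FreeGroup.of l := by
  let f (a b : ℤ) (l : J) : FreeGroup J :=
    if l = j then FreeGroup.of i ^ a * FreeGroup.of j * FreeGroup.of i ^ b else FreeGroup.of l
  have hf (a b a' b' : ℤ) (ha : a' + a = 0) (hb : b + b' = 0) (l : J) :
      FreeGroup.lift (f a b) (f a' b' l) = FreeGroup.of l := by
    by_cases hl : l = j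
    · simp only [f, hl, if_true, _root_.map_mul, map_zpow, FreeGroup.lift_apply_of, if_neg hij]
      rw [mul_assoc, mul_assoc, mul_assoc, ← _root_.zpow_add, hb, ← mul_assoc, ← mul_assoc,
        ← _root_.zpow_add, ha]
      simp
    · simp [f, hl]
  refine ⟨autMk (f a b) (f (-a) (-b)) (hf _ _ _ _ (by simp) (by simp))
    (hf _ _ _ _ (by simp) (by simp)), fun l => ?_⟩
  rw [MulAut.mul_apply, MulAut.mul_apply, MulAut.inv_apply, autMk_symm_of]
  by_cases hl : l = j
  · simp [f, hl, ltransv_of, hkj.symm, hki.symm, autMk_of, hij, mul_assoc]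
  · by_cases hlk : l = k
    · simp [f, hlk, ltransv_of, autMk_of, hkj, mul_assoc]
    · simp [f, hl, ltransv_of, autMk_of, hlk]

variable {N : Subgroup (MulAut (FreeGroup J))} [N.Normal]

lemma rtransv_mem_of_three_cycle {π : Equiv.Perm J} (hπ : permAut π ∈ N) (hij : i ≠ j)
    (hjk : j ≠ k) (hik : i ≠ k) (hi : π i = j) (hj : π j = k) : rtransv hik ∈ N := by
  subst hi hj
  have hconj : ((rtransv hjk : MulAut (FreeGroup J)) : MulAut (FreeGroup J) ⧸ N) = rtransv hij := by
    have := congrArg (QuotientGroup.mk (s := N)) (permAut_mul_rtransv π hij)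
    rw [QuotientGroup.mk_mul, QuotientGroup.mk_mul, (QuotientGroup.eq_one_iff _).2 hπ] at this
    simpa using this.symm
  have hcomm := congrArg (QuotientGroup.mk (s := N)) (rtransv_mul_rtransv hij hjk hik)
  rw [QuotientGroup.mk_mul, QuotientGroup.mk_mul, QuotientGroup.mk_mul, hconj] at hcomm
  rw [← QuotientGroup.eq_one_iff]
  simpa using hcomm.symm

/- On the subgroup generated by `x i` and `x j` the automorphism `κ` is a rotation of the theta
graph with three edges. Its commutator with the transvection `x k ↦ x i * x k` is a transvection by
a primitive element of that subgroup, hence conjugate to `x k ↦ x j * x k`. -/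
lemma ltransv_mem_of_theta_rotation {κ : MulAut (FreeGroup J)} (hκ : κ ∈ N)
    (hij : i ≠ j) (hki : k ≠ i) (hkj : k ≠ j)
    (hκi : κ (FreeGroup.of i) = FreeGroup.of j * (FreeGroup.of i)⁻¹)
    (hκj : κ (FreeGroup.of j) = (FreeGroup.of i)⁻¹)
    (hκl : ∀ l, l ≠ i → l ≠ j → ∃ a b : ℤ,
      κ (FreeGroup.of l) = FreeGroup.of i ^ a * FreeGroup.of l * FreeGroup.of i ^ b) :
    ltransv hkj ∈ N := by
  obtain ⟨a, b, hab⟩ := hκl k hki hkj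
  obtain ⟨δ, hδ⟩ := exists_conj_ltransv_of hij hki hkj (-1 - a) (a - 1)
  set γ := δ * ltransv hkj * δ⁻¹ with hγ
  have hrel : κ * ltransv hki = γ * ltransv hki * κ := by
    refine mulAut_ext fun l => ?_
    by_cases hli : l = i
    · simp [hli, hκi, hδ, ltransv_of, hki.symm, hkj.symm]
    by_cases hlj : l = j
    · simp [hlj, hκj, hδ, ltransv_of, hki.symm, hkj.symm]
    by_cases hlk : l = k
    · simp only [hlk, MulAut.mul_apply, hδ, ltransv_of, hab, hκi, hki.symm, if_true, if_false,
        _root_.map_mul, map_zpow]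
      group
    · obtain ⟨a, b, hl⟩ := hκl l hli hlj
      simp [hl, hδ, ltransv_of, hki.symm, hlk]
  have hγN : γ ∈ N := by
    rw [← mul_inv_eq_iff_eq_mul, ← mul_inv_eq_iff_eq_mul, mul_assoc, mul_assoc] at hrel
    rw [← hrel, ← mul_assoc (ltransv hki)]
    exact N.mul_mem hκ (‹N.Normal›.conj_mem _ (N.inv_mem hκ) _)
  simpa [hγ, mul_assoc] using ‹N.Normal›.conj_mem γ hγN δ⁻¹

end Transvections

/-! ### Extensions of free groups by groups of odd prime order -/

section KernelAutomorphisms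

variable {E Q J I I' : Type*} [Group E] [Group Q] {A B D : Subgroup E} {φ : E →* Q}
  {e : FreeGroup J ≃* φ.ker}

lemma permAut_apply_of_basis_mem {f : I → J} {π : Equiv.Perm J} (hπ : ∀ i, π (f i) = f i)
    (e' : FreeGroup I ≃* D) (hf : ∀ i, (e (FreeGroup.of (f i)) : E) = e' (FreeGroup.of i))
    {y : FreeGroup J} (hy : (e y : E) ∈ D) : permAut π y = y := by
  have hle : D ≤ ((permAut π).toMonoidHom.eqLocus (MonoidHom.id _)).map
      (φ.ker.subtype.comp e.toMonoidHom) :=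
    le_of_basis_mem e' fun i => ⟨FreeGroup.of (f i), (permAut_of _ _).trans (by simp [hπ]), hf i⟩
  obtain ⟨z, hz, hzy⟩ := hle hy
  have hzy : z = y := e.injective (Subtype.ext hzy)
  exact hzy ▸ hz

variable {σ υ : Q → E} {g : Q}

lemma conj_mem_inf_ker {s x : E} (hs : s ∈ D) (hx : x ∈ D ⊓ φ.ker) :
    s⁻¹ * x * s ∈ D ⊓ φ.ker :=
  ⟨D.mul_mem (D.mul_mem (D.inv_mem hs) hx.1) hs, by
    simpa using φ.normal_ker.conj_mem _ hx.2 s⁻¹⟩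

lemma exists_apply_eq_section_defect (hσ : IsSection φ D σ) (e : FreeGroup J ≃* φ.ker) (g q : Q) :
    ∃ w, (e w : E) = (σ (q * g))⁻¹ * σ q * σ g ∧ (e w : E) ∈ D := by
  obtain ⟨w, hw⟩ := e.surjective ⟨(σ (q * g))⁻¹ * σ q * σ g, by
    simp [MonoidHom.mem_ker, hσ.map_eq, mul_assoc]⟩
  have hw : (e w : E) = (σ (q * g))⁻¹ * σ q * σ g := congrArg Subtype.val hw
  exact ⟨w, hw, hw ▸ D.mul_mem (D.mul_mem (D.inv_mem (hσ.mem _)) (hσ.mem _)) (hσ.mem _)⟩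

section LeKer

variable {e : FreeGroup ((Q × I) ⊕ I') ≃* φ.ker} {eA : FreeGroup I ≃* A}
  {eB : FreeGroup I' ≃* (B ⊓ φ.ker : Subgroup E)} {θ : MulAut (FreeGroup ((Q × I) ⊕ I'))}

lemma exists_conj_apply_of_le_ker (hσ : IsSection φ B σ)
    (heA : ∀ q i, (e (FreeGroup.of (.inl (q, i))) : E) = (σ q)⁻¹ * eA (FreeGroup.of i) * σ q)
    (hθ : ∀ x, (e (θ x) : E) = (σ g)⁻¹ * e x * σ g) (q : Q) (i : I) :
    ∃ w, (e w : E) = (σ (q * g))⁻¹ * σ q * σ g ∧ (e w : E) ∈ B ∧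
      θ (FreeGroup.of (.inl (q, i))) = w⁻¹ * FreeGroup.of (.inl (q * g, i)) * w := by
  obtain ⟨w, hw, hwB⟩ := exists_apply_eq_section_defect hσ e g q
  refine ⟨w, hw, hwB, e.injective (Subtype.ext ?_)⟩
  simp [hθ, heA, hw, mul_assoc]

variable [DecidableEq Q] [DecidableEq I] [DecidableEq I']

lemma mul_permAut_swap_of_le_ker (hσ : IsSection φ B σ)
    (heA : ∀ q i, (e (FreeGroup.of (.inl (q, i))) : E) = (σ q)⁻¹ * eA (FreeGroup.of i) * σ q)
    (heB : ∀ i, (e (FreeGroup.of (.inr i)) : E) = eB (FreeGroup.of i))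
    (hθ : ∀ x, (e (θ x) : E) = (σ g)⁻¹ * e x * σ g) (hσg : σ (g * g) = σ g * σ g) (a : I) :
    θ * permAut (Equiv.swap (.inl (1, a)) (.inl (g, a))) =
      permAut (Equiv.swap (.inl (g, a)) (.inl (g * g, a))) * θ := by
  set π' : Equiv.Perm ((Q × I) ⊕ I') := Equiv.swap (.inl (g, a)) (.inl (g * g, a))
  have hfix {y} (hy : (e y : E) ∈ B ⊓ φ.ker) : permAut π' y = y :=
    permAut_apply_of_basis_mem (f := Sum.inr)
      (fun i => Equiv.swap_apply_of_ne_of_ne Sum.inr_ne_inl Sum.inr_ne_inl) eB heB hy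
  have h₁ : θ (FreeGroup.of (.inl (1, a))) = FreeGroup.of (.inl (g, a)) :=
    e.injective <| Subtype.ext <| by simp [hθ, heA, hσ.one]
  have h₂ : θ (FreeGroup.of (.inl (g, a))) = FreeGroup.of (.inl (g * g, a)) :=
    e.injective <| Subtype.ext <| by simp [hθ, heA, hσg, mul_assoc]
  refine mulAut_ext fun j => ?_
  rw [MulAut.mul_apply, MulAut.mul_apply, permAut_of]
  rcases j with ⟨q, i⟩ | i
  · by_cases hj₁ : (q, i) = (1, a)
    · rw [hj₁, Equiv.swap_apply_left, h₁, h₂, permAut_of, Equiv.swap_apply_left]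
    by_cases hjg : (q, i) = (g, a)
    · rw [hjg, Equiv.swap_apply_right, h₁, h₂, permAut_of, Equiv.swap_apply_right]
    · obtain ⟨w, -, hwB, hw⟩ := exists_conj_apply_of_le_ker hσ heA hθ q i
      rw [Equiv.swap_apply_of_ne_of_ne (Sum.inl_injective.ne hj₁) (Sum.inl_injective.ne hjg), hw,
        _root_.map_mul, _root_.map_mul, _root_.map_inv, hfix ⟨hwB, (e w).2⟩, permAut_of,
        Equiv.swap_apply_of_ne_of_ne] <;>
      simp_all
  · rw [Equiv.swap_apply_of_ne_of_ne Sum.inr_ne_inl Sum.inr_ne_inl, hfix]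
    rw [hθ, heB]
    exact conj_mem_inf_ker (hσ.mem g) (eB (FreeGroup.of i)).2

/- Conjugation by `σ g` permutes the conjugates of `A`, so that its commutator with a transposition
of two generators from different conjugates is a 3-cycle. -/
lemma exists_rtransv_mem_of_le_ker [Nonempty I] (hσ : IsSection φ B σ)
    (heA : ∀ q i, (e (FreeGroup.of (.inl (q, i))) : E) = (σ q)⁻¹ * eA (FreeGroup.of i) * σ q)
    (heB : ∀ i, (e (FreeGroup.of (.inr i)) : E) = eB (FreeGroup.of i))
    (hθ : ∀ x, (e (θ x) : E) = (σ g)⁻¹ * e x * σ g) (hσg : σ (g * g) = σ g * σ g)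
    (hg : g ≠ 1) (hgg : g * g ≠ 1) {N : Subgroup (MulAut (FreeGroup ((Q × I) ⊕ I')))} [N.Normal]
    (hθN : θ ∈ N) : ∃ i j, ∃ h : i ≠ j, rtransv h ∈ N := by
  inhabit I
  let x (q : Q) : (Q × I) ⊕ I' := .inl (q, default)
  have hx {q r : Q} (h : q ≠ r) : x q ≠ x r := fun h' => h (by simpa [x] using h')
  have hg₂ : g ≠ g * g := fun h => hg (left_eq_mul.1 h)
  have hrel := mul_permAut_swap_of_le_ker hσ heA heB hθ hσg default
  have hmem : permAut (Equiv.swap (x g) (x (g * g)) * Equiv.swap (x 1) (x g)) ∈ N := by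
    have hswap : (permAut (Equiv.swap (x 1) (x g)))⁻¹ = permAut (Equiv.swap (x 1) (x g)) := by
      rw [inv_eq_iff_mul_eq_one, ← permAut_mul, Equiv.swap_mul_self]
      exact mulAut_ext fun k => by simp [permAut_of]
    rw [permAut_mul, eq_mul_inv_of_mul_eq hrel.symm, mul_assoc, mul_assoc]
    nth_rw 2 [← hswap]
    rw [← mul_assoc (permAut _)]
    exact N.mul_mem hθN (‹N.Normal›.conj_mem _ (N.inv_mem hθN) _)
  refine ⟨_, _, hx hg.symm, rtransv_mem_of_three_cycle hmem (hx hgg.symm) (hx hg₂.symm)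
    (hx hg.symm) (by simp) ?_⟩
  rw [Equiv.Perm.mul_apply, Equiv.swap_apply_of_ne_of_ne (hx hgg) (hx hg₂.symm),
    Equiv.swap_apply_right]

end LeKer

section Surjective

/-- The generator of the kernel given by the edge labelled `q`, trivial for the edge `q = 1` which
belongs to the spanning tree. -/
def edgeGen [DecidableEq Q] (I I' : Type*) (q : Q) : FreeGroup ((I ⊕ I') ⊕ {q : Q // q ≠ 1}) :=
  if h : q = 1 then 1 else FreeGroup.of (.inr ⟨q, h⟩)

variable [DecidableEq Q]

lemma edgeGen_one : edgeGen I I' (1 : Q) = 1 := dif_pos rfl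

lemma edgeGen_of_ne_one {q : Q} (h : q ≠ 1) : edgeGen I I' q = FreeGroup.of (.inr ⟨q, h⟩) :=
  dif_neg h

lemma lift_edgeGen {H : Type*} [Group H] {f : (I ⊕ I') ⊕ {q : Q // q ≠ 1} → H} {τ : Q → H}
    (hτ : τ 1 = 1) (hf : ∀ q : {q : Q // q ≠ 1}, f (.inr q) = τ q) (q : Q) :
    FreeGroup.lift f (edgeGen I I' q) = τ q := by
  by_cases hq : q = 1
  · rw [hq, edgeGen_one, map_one, hτ]
  · rw [edgeGen_of_ne_one hq, FreeGroup.lift_apply_of, hf]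

/-- The images of the generators under the automorphism of the kernel which reverses the edges,
exchanging the roles of the edges `1` and `g`. -/
def edgeFlipFun (I I' : Type*) (g : Q) :
    (I ⊕ I') ⊕ {q : Q // q ≠ 1} → FreeGroup ((I ⊕ I') ⊕ {q : Q // q ≠ 1}) :=
  Sum.elim
    (Sum.elim (fun i => FreeGroup.of (.inl (.inl i)))
      fun i => edgeGen I I' g * FreeGroup.of (.inl (.inr i)) * (edgeGen I I' g)⁻¹)
    fun q => edgeGen I I' (Equiv.swap 1 g q) * (edgeGen I I' g)⁻¹

lemma lift_edgeFlipFun_edgeGen (g q : Q) :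
    FreeGroup.lift (edgeFlipFun I I' g) (edgeGen I I' q) =
      edgeGen I I' (Equiv.swap 1 g q) * (edgeGen I I' g)⁻¹ :=
  lift_edgeGen (τ := fun q => edgeGen I I' (Equiv.swap 1 g q) * (edgeGen I I' g)⁻¹) (by simp)
    (fun _ => rfl) q

lemma lift_edgeFlipFun_edgeFlipFun (g : Q) (j : (I ⊕ I') ⊕ {q : Q // q ≠ 1}) :
    FreeGroup.lift (edgeFlipFun I I' g) (edgeFlipFun I I' g j) = FreeGroup.of j := by
  rcases j with (i | i) | q
  · simp [edgeFlipFun]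
  · simp only [edgeFlipFun, Sum.elim_inl, Sum.elim_inr, _root_.map_mul, _root_.map_inv]
    rw [← edgeFlipFun, lift_edgeFlipFun_edgeGen]
    simp [edgeFlipFun, edgeGen_one, mul_assoc]
  · simp only [edgeFlipFun, Sum.elim_inr, _root_.map_mul, _root_.map_inv]
    rw [← edgeFlipFun, lift_edgeFlipFun_edgeGen, lift_edgeFlipFun_edgeGen]
    simp [edgeGen_one, edgeGen_of_ne_one q.2]

/-- The involution of the kernel which reverses the edges and exchanges the roles of the edges `1`
and `g`. -/
def edgeFlip (I I' : Type*) (g : Q) : MulAut (FreeGroup ((I ⊕ I') ⊕ {q : Q // q ≠ 1})) :=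
  autMk (edgeFlipFun I I' g) (edgeFlipFun I I' g) (lift_edgeFlipFun_edgeFlipFun g)
    (lift_edgeFlipFun_edgeFlipFun g)

lemma edgeFlip_inv (g : Q) : (edgeFlip I I' g)⁻¹ = edgeFlip I I' g :=
  mulAut_ext fun j => by rw [edgeFlip, MulAut.inv_apply, autMk_symm_of, autMk_of]

lemma permAut_swap_edgeGen [DecidableEq I] [DecidableEq I'] {g r : Q} (hg : g ≠ 1)
    (hr : r ≠ 1) (q : Q) :
    permAut (Equiv.swap (.inr ⟨g, hg⟩) (.inr ⟨r, hr⟩)) (edgeGen I I' q) =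
      edgeGen I I' (Equiv.swap g r q) := by
  by_cases hq : q = 1
  · rw [hq, edgeGen_one, map_one, Equiv.swap_apply_of_ne_of_ne hg.symm hr.symm, edgeGen_one]
  by_cases hqg : q = g
  · subst hqg
    simp [edgeGen_of_ne_one, hq, hr, permAut_of]
  by_cases hqr : q = r
  · subst hqr
    simp [edgeGen_of_ne_one, hq, hg, permAut_of]
  · rw [Equiv.swap_apply_of_ne_of_ne hqg hqr, edgeGen_of_ne_one hq, permAut_of,
      Equiv.swap_apply_of_ne_of_ne] <;>
    simpa

variable {e : FreeGroup ((I ⊕ I') ⊕ {q : Q // q ≠ 1}) ≃* φ.ker}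
  {eA : FreeGroup I ≃* (A ⊓ φ.ker : Subgroup E)} {eB : FreeGroup I' ≃* (B ⊓ φ.ker : Subgroup E)}
  {θ : MulAut (FreeGroup ((I ⊕ I') ⊕ {q : Q // q ≠ 1}))}

lemma coe_edgeGen (hσ : IsSection φ A σ) (hυ : IsSection φ B υ)
    (heT : ∀ q, (e (FreeGroup.of (.inr q)) : E) = (σ q)⁻¹ * υ q) (q : Q) :
    (e (edgeGen I I' q) : E) = (σ q)⁻¹ * υ q := by
  by_cases hq : q = 1
  · simp [hq, edgeGen_one, hσ.one, hυ.one]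
  · rw [edgeGen_of_ne_one hq, heT]

lemma exists_apply_edgeGen (hσ : IsSection φ A σ) (hυ : IsSection φ B υ)
    (heT : ∀ q, (e (FreeGroup.of (.inr q)) : E) = (σ q)⁻¹ * υ q)
    (hθ : ∀ x, (e (θ x) : E) = (σ g)⁻¹ * e x * σ g) (q : Q) :
    ∃ v w, (e v : E) ∈ A ∧ (e w : E) ∈ B ∧
      θ (edgeGen I I' q) = v⁻¹ * edgeGen I I' (q * g) * w * (edgeGen I I' g)⁻¹ := by
  obtain ⟨v, hv, hvA⟩ := exists_apply_eq_section_defect hσ e g q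
  obtain ⟨w, hw, hwB⟩ := exists_apply_eq_section_defect hυ e g q
  refine ⟨v, w, hvA, hwB, e.injective (Subtype.ext ?_)⟩
  simp [hθ, coe_edgeGen hσ hυ heT, hv, hw, mul_assoc]

variable [DecidableEq I] [DecidableEq I']

lemma mul_edgeFlip_of_surjective (hσ : IsSection φ A σ) (hυ : IsSection φ B υ)
    (heA : ∀ i, (e (FreeGroup.of (.inl (.inl i))) : E) = eA (FreeGroup.of i))
    (heB : ∀ i, (e (FreeGroup.of (.inl (.inr i))) : E) = eB (FreeGroup.of i))
    (heT : ∀ q, (e (FreeGroup.of (.inr q)) : E) = (σ q)⁻¹ * υ q)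
    (hθ : ∀ x, (e (θ x) : E) = (σ g)⁻¹ * e x * σ g) (hσg : σ (g * g) = σ g * σ g)
    (hυg : υ (g * g) = υ g * υ g) (hg : g ≠ 1) (hgg : g * g ≠ 1) :
    θ * edgeFlip I I' g =
      permAut (Equiv.swap (.inr ⟨g, hg⟩) (.inr ⟨g * g, hgg⟩)) * θ := by
  set π : Equiv.Perm ((I ⊕ I') ⊕ {q : Q // q ≠ 1}) :=
    Equiv.swap (.inr ⟨g, hg⟩) (.inr ⟨g * g, hgg⟩)
  have hπ (q : Q) : permAut π (edgeGen I I' q) = edgeGen I I' (Equiv.swap g (g * g) q) :=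
    permAut_swap_edgeGen hg hgg q
  have hπA {y} (hy : (e y : E) ∈ A ⊓ φ.ker) : permAut π y = y :=
    permAut_apply_of_basis_mem (f := Sum.inl ∘ Sum.inl)
      (fun i => Equiv.swap_apply_of_ne_of_ne Sum.inl_ne_inr Sum.inl_ne_inr) eA heA hy
  have hπB {y} (hy : (e y : E) ∈ B ⊓ φ.ker) : permAut π y = y :=
    permAut_apply_of_basis_mem (f := Sum.inl ∘ Sum.inr)
      (fun i => Equiv.swap_apply_of_ne_of_ne Sum.inl_ne_inr Sum.inl_ne_inr) eB heB hy
  have hθg : θ (edgeGen I I' g) = edgeGen I I' (g * g) * (edgeGen I I' g)⁻¹ :=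
    e.injective <| Subtype.ext <| by simp [hθ, coe_edgeGen hσ hυ heT, hσg, hυg, mul_assoc]
  refine mulAut_ext fun j => ?_
  rw [MulAut.mul_apply, MulAut.mul_apply, edgeFlip, autMk_of]
  rcases j with (i | i) | q
  · rw [hπA]
    · rfl
    rw [hθ, heA]
    exact conj_mem_inf_ker (hσ.mem g) (eA (FreeGroup.of i)).2
  · have hb := conj_mem_inf_ker (hυ.mem g) (eB (FreeGroup.of i)).2
    obtain ⟨b, hb'⟩ := e.surjective ⟨_, hb.2⟩
    have hb' : (e b : E) = (υ g)⁻¹ * eB (FreeGroup.of i) * υ g := congrArg Subtype.val hb'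
    have hθb : θ (FreeGroup.of (.inl (.inr i))) =
        edgeGen I I' g * b * (edgeGen I I' g)⁻¹ :=
      e.injective <| Subtype.ext <| by
        simp [hθ, heB, hb', coe_edgeGen hσ hυ heT, mul_assoc]
    simp [edgeFlipFun, hθg, hθb, hπ, hπB (hb'.symm ▸ hb), mul_assoc]
  · simp only [edgeFlipFun, Sum.elim_inr, _root_.map_mul, _root_.map_inv, hθg]
    rw [← edgeGen_of_ne_one q.2]
    by_cases hq : (q : Q) = g
    · simp [hq, hθg, hπ, edgeGen_one]
    · obtain ⟨v, w, hv, hw, hvw⟩ := exists_apply_edgeGen hσ hυ heT hθ q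
      rw [Equiv.swap_apply_of_ne_of_ne q.2 hq, hvw]
      have hqg : (q : Q) * g ≠ g := fun h => q.2 (mul_eq_right.1 h)
      have hqgg : (q : Q) * g ≠ g * g := fun h => hq (mul_right_cancel h)
      simp [hπ, hπA ⟨hv, (e v).2⟩, hπB ⟨hw, (e w).2⟩, Equiv.swap_apply_of_ne_of_ne hqg hqgg,
        mul_assoc]

/- Up to factors in `A ⊓ φ.ker` and `B ⊓ φ.ker`, conjugation by `σ g` is a rotation of the graph
with two vertices whose edges are labelled by `Q`. Its commutator with the reversal of the edges
rotates the three edges `1`, `g` and `g * g` and fixes the other ones. -/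
lemma exists_ltransv_mem_of_surjective (hσ : IsSection φ A σ) (hυ : IsSection φ B υ)
    (heA : ∀ i, (e (FreeGroup.of (.inl (.inl i))) : E) = eA (FreeGroup.of i))
    (heB : ∀ i, (e (FreeGroup.of (.inl (.inr i))) : E) = eB (FreeGroup.of i))
    (heT : ∀ q, (e (FreeGroup.of (.inr q)) : E) = (σ q)⁻¹ * υ q)
    (hθ : ∀ x, (e (θ x) : E) = (σ g)⁻¹ * e x * σ g) (hσg : σ (g * g) = σ g * σ g)
    (hυg : υ (g * g) = υ g * υ g) (hg : g ≠ 1) (hgg : g * g ≠ 1)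
    (hrank : ∀ i j : (I ⊕ I') ⊕ {q : Q // q ≠ 1}, ∃ k, k ≠ i ∧ k ≠ j)
    {N : Subgroup (MulAut (FreeGroup ((I ⊕ I') ⊕ {q : Q // q ≠ 1})))} [N.Normal] (hθN : θ ∈ N) :
    ∃ i j, ∃ h : i ≠ j, ltransv h ∈ N := by
  set t : (I ⊕ I') ⊕ {q : Q // q ≠ 1} := .inr ⟨g, hg⟩ with ht
  set t' : (I ⊕ I') ⊕ {q : Q // q ≠ 1} := .inr ⟨g * g, hgg⟩
  have hgg' : g * g ≠ g := fun h => hg (mul_eq_right.1 h)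
  have htt' : t ≠ t' := fun h => hgg'.symm (congrArg Subtype.val (Sum.inr_injective h))
  have hflip {q : Q} (hq : q ≠ 1) : edgeFlip I I' g (FreeGroup.of (.inr ⟨q, hq⟩)) =
      edgeGen I I' (Equiv.swap 1 g q) * (edgeGen I I' g)⁻¹ := autMk_of _ _ _ _ _
  have hmem : edgeFlip I I' g * permAut (Equiv.swap t t') ∈ N := by
    rw [eq_mul_inv_of_mul_eq
      (mul_edgeFlip_of_surjective hσ hυ heA heB heT hθ hσg hυg hg hgg).symm, ← mul_assoc,
      ← mul_assoc]
    nth_rw 2 [← edgeFlip_inv]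
    exact N.mul_mem (‹N.Normal›.conj_mem θ hθN _) (N.inv_mem hθN)
  obtain ⟨k, hk, hk'⟩ := hrank t t'
  refine ⟨k, t', hk', ltransv_mem_of_theta_rotation hmem htt' hk hk' ?_ ?_ fun l hl hl' => ?_⟩
  · rw [MulAut.mul_apply, permAut_of, Equiv.swap_apply_left, hflip,
      Equiv.swap_apply_of_ne_of_ne hgg hgg', edgeGen_of_ne_one hg, edgeGen_of_ne_one hgg]
  · rw [MulAut.mul_apply, permAut_of, Equiv.swap_apply_right, hflip, Equiv.swap_apply_right,
      edgeGen_one, one_mul, edgeGen_of_ne_one hg]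
  · rw [MulAut.mul_apply, permAut_of, Equiv.swap_apply_of_ne_of_ne hl hl']
    rcases l with (i | i) | ⟨q, hq⟩
    · exact ⟨0, 0, by simp [edgeFlip, autMk_of, edgeFlipFun]⟩
    · exact ⟨1, -1, by simp [edgeFlip, autMk_of, edgeFlipFun, edgeGen_of_ne_one hg, ht]⟩
    · have hqg : q ≠ g := fun h => hl (by simp [ht, h])
      refine ⟨0, -1, ?_⟩
      rw [hflip, Equiv.swap_apply_of_ne_of_ne hq hqg, edgeGen_of_ne_one hg, edgeGen_of_ne_one hq]
      simp [ht]

end Surjective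

end KernelAutomorphisms

section PrimeExtension

universe u

/-- `N` contains a transvection with respect to some basis of the free group `K`. -/
def HasTransvection {K : Type u} [Group K] (N : Subgroup (MulAut K)) : Prop :=
  ∃ (J : Type u) (_ : DecidableEq J) (e : FreeGroup J ≃* K) (i j : J) (h : i ≠ j),
    MulAut.congr e (rtransv h) ∈ N ∨ MulAut.congr e (ltransv h) ∈ N

variable {E X : Type u} [Group E] {ι : FreeGroup X →* E} {p : ℕ} [Fact p.Prime]
  {φ : E →* Multiplicative (ZMod p)} {A B D : Subgroup E} {σ υ : Multiplicative (ZMod p) → E}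
  {g : Multiplicative (ZMod p)} {N : Subgroup (MulAut φ.ker)}

lemma exists_freeGroup_equiv (hι : Function.Injective ι) (hD : D ≤ ι.range) :
    ∃ I : Type u, Nonempty (FreeGroup I ≃* D) :=
  ⟨_, ⟨(IsFreeGroup.mulEquiv (D.comap ι)).trans <|
    ((D.comap ι).equivMapOfInjective ι hι).trans
      (MulEquiv.subgroupCongr (Subgroup.map_comap_eq_self hD))⟩⟩

lemma coe_congr_symm_conjNormal {J : Type*} (e : FreeGroup J ≃* φ.ker) (s : E) (x : FreeGroup J) :
    (e ((MulAut.congr e).symm (MulAut.conjNormal s⁻¹) x) : E) = s⁻¹ * e x * s := by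
  simp [MulAut.congr]

lemma IsFreeProd.hasTransvection_of_le_ker (h : IsFreeProd A B) (hι : Function.Injective ι)
    (hker : φ.ker = ι.range) (hA : A ≤ φ.ker) (hσ : IsSection φ B σ)
    (hσg : σ (g * g) = σ g * σ g) (hg : g ≠ 1) (hgg : g * g ≠ 1) [N.Normal]
    (hN : MulAut.conjNormal (σ g)⁻¹ ∈ N) : HasTransvection N := by
  classical
  obtain ⟨I, ⟨eA⟩⟩ := exists_freeGroup_equiv hι (hA.trans hker.le)
  obtain ⟨I', ⟨eB⟩⟩ := exists_freeGroup_equiv hι ((inf_le_right (a := B)).trans hker.le)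
  obtain ⟨e, heA, heB⟩ := h.exists_basis_of_le_ker hA hσ eA eB
  have : Nonempty I := by
    by_contra! hI
    have := eA.symm.injective.subsingleton
    exact h.left_ne_bot (Subgroup.eq_bot_of_subsingleton A)
  obtain ⟨i, j, hij, hmem⟩ := exists_rtransv_mem_of_le_ker hσ heA heB
    (coe_congr_symm_conjNormal e (σ g)) hσg hg hgg (N := N.comap (MulAut.congr e).toMonoidHom)
    (by rwa [Subgroup.mem_comap, MulEquiv.coe_toMonoidHom, MulEquiv.apply_symm_apply])
  exact ⟨_, inferInstance, e, i, j, hij, .inl hmem⟩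

lemma IsFreeProd.hasTransvection_of_surjective (h : IsFreeProd A B) (hι : Function.Injective ι)
    (hker : φ.ker = ι.range) (hX : ∀ x y : X, ∃ z, z ≠ x ∧ z ≠ y) (hσ : IsSection φ A σ)
    (hυ : IsSection φ B υ) (hσg : σ (g * g) = σ g * σ g) (hυg : υ (g * g) = υ g * υ g)
    (hg : g ≠ 1) (hgg : g * g ≠ 1) [N.Normal] (hN : MulAut.conjNormal (σ g)⁻¹ ∈ N) :
    HasTransvection N := by
  classical
  obtain ⟨I, ⟨eA⟩⟩ := exists_freeGroup_equiv hι ((inf_le_right (a := A)).trans hker.le)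
  obtain ⟨I', ⟨eB⟩⟩ := exists_freeGroup_equiv hι ((inf_le_right (a := B)).trans hker.le)
  obtain ⟨e, heA, heB, heT⟩ := h.exists_basis_of_surjective hσ hυ eA eB
  let f := Equiv.ofFreeGroupEquiv
    ((MonoidHom.ofInjective hι).trans ((MulEquiv.subgroupCongr hker.symm).trans e.symm))
  obtain ⟨i, j, hij, hmem⟩ := exists_ltransv_mem_of_surjective hσ hυ heA heB heT
    (coe_congr_symm_conjNormal e (σ g)) hσg hυg hg hgg (fun i j => by
      obtain ⟨z, hzi, hzj⟩ := hX (f.symm i) (f.symm j)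
      exact ⟨f z, fun h => hzi (by simp [← h]), fun h => hzj (by simp [← h])⟩)
    (N := N.comap (MulAut.congr e).toMonoidHom)
    (by rwa [Subgroup.mem_comap, MulEquiv.coe_toMonoidHom, MulEquiv.apply_symm_apply])
  exact ⟨_, inferInstance, e, i, j, hij, .inr hmem⟩

lemma exists_isSection_of_not_le_ker (hp : p ≠ 2) (hD : ¬ D ≤ φ.ker) :
    ∃ σ, IsSection φ D σ ∧ σ (.ofAdd 1 * .ofAdd 1) = σ (.ofAdd 1) * σ (.ofAdd 1) := by
  obtain ⟨d, hd, hdφ⟩ := SetLike.not_le_iff_exists.1 hD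
  obtain ⟨k, hk⟩ := mem_powers_of_prime_card (p := p) (by simp) (g := φ d) (g' := .ofAdd 1) hdφ
  have hk : φ d ^ k = .ofAdd 1 := hk
  have hp2 : 2 < p := (Fact.out : p.Prime).two_le.lt_of_ne' hp
  have : Fact (1 < p) := ⟨(Fact.out : p.Prime).one_lt⟩
  refine ⟨fun q => (d ^ k) ^ q.toAdd.val, ⟨fun q => D.pow_mem (D.pow_mem hd _) _, fun q => ?_,
    by simp⟩, ?_⟩
  · rw [map_pow, map_pow, hk, ← ofAdd_nsmul]
    simp
  · simp [ZMod.val_add, ZMod.val_one, Nat.mod_eq_of_lt hp2, pow_two]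

lemma ofAdd_one_mul_ofAdd_one_ne_one (hp : p ≠ 2) :
    (.ofAdd 1 * .ofAdd 1 : Multiplicative (ZMod p)) ≠ 1 := fun h => by
  have h2 : ((2 : ℕ) : ZMod p) = 0 := by
    simpa [one_add_one_eq_two] using congrArg Multiplicative.toAdd h
  exact hp ((Nat.prime_dvd_prime_iff_eq Fact.out Nat.prime_two).1
    ((ZMod.natCast_eq_zero_iff _ _).1 h2))

theorem hasTransvection_of_range_conjNormal_le [Finite X] (hι : Function.Injective ι)
    (hp : p ≠ 2) (hφ : Function.Surjective φ) (hker : φ.ker = ι.range)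
    (hcent : ∀ s, s ∉ φ.ker → ∃ f ∈ φ.ker, f * s ≠ s * f) (hX : ∀ x y : X, ∃ z, z ≠ x ∧ z ≠ y)
    [N.Normal] (hN : (MulAut.conjNormal : E →* MulAut φ.ker).range ≤ N) : HasTransvection N := by
  obtain ⟨A, B, h⟩ := exists_isFreeProd_of_prime_index hι hp hφ hker hcent
  have hg : (.ofAdd 1 : Multiplicative (ZMod p)) ≠ 1 := by simp
  have hgg := ofAdd_one_mul_ofAdd_one_ne_one hp
  have hN (s : E) : MulAut.conjNormal s ∈ N := hN ⟨s, rfl⟩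
  by_cases hA : A ≤ φ.ker <;> by_cases hB : B ≤ φ.ker
  · have htop : φ.ker = ⊤ := top_le_iff.1 (h.sup_eq_top ▸ sup_le hA hB)
    obtain ⟨s, hs⟩ := hφ (.ofAdd 1)
    exact absurd (hs.symm.trans (htop ▸ Subgroup.mem_top s : s ∈ φ.ker)) hg
  · obtain ⟨σ, hσ, hσg⟩ := exists_isSection_of_not_le_ker hp hB
    exact h.hasTransvection_of_le_ker hι hker hA hσ hσg hg hgg (hN _)
  · obtain ⟨σ, hσ, hσg⟩ := exists_isSection_of_not_le_ker hp hA
    exact h.symm.hasTransvection_of_le_ker hι hker hB hσ hσg hg hgg (hN _)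
  · obtain ⟨σ, hσ, hσg⟩ := exists_isSection_of_not_le_ker hp hA
    obtain ⟨υ, hυ, hυg⟩ := exists_isSection_of_not_le_ker hp hB
    exact h.hasTransvection_of_surjective hι hker hX hσ hυ hσg hυg hg hgg (hN _)

end PrimeExtension

/-! ### Nielsen's method -/

section Cancellation

lemma exists_common_initial {α : Type*} (l l' : List α) :
    ∃ c a b, l = c ++ a ∧ l' = c ++ b ∧ ∀ x ∈ a.head?, ∀ y ∈ b.head?, x ≠ y := by
  induction l generalizing l' with
  | nil => exact ⟨[], [], l', by simp⟩
  | cons x l ih =>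
    rcases l' with _ | ⟨y, l'⟩
    · exact ⟨[], x :: l, [], by simp⟩
    · by_cases hxy : x = y
      · obtain ⟨c, a, b, rfl, rfl, h⟩ := ih l'
        exact ⟨x :: c, a, b, by simp [hxy], by simp [hxy], h⟩
      · exact ⟨[], x :: l, y :: l', by simp [hxy]⟩

lemma isReduced_invRev_append {J : Type*} {a b : List (J × Bool)} (ha : FreeGroup.IsReduced a)
    (hb : FreeGroup.IsReduced b) (hab : ∀ s ∈ a.head?, ∀ t ∈ b.head?, s ≠ t) :
    FreeGroup.IsReduced (FreeGroup.invRev a ++ b) := by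
  classical
  have hinv : FreeGroup.IsReduced (FreeGroup.invRev a) := by
    have h := FreeGroup.isReduced_toWord (x := (FreeGroup.mk a)⁻¹)
    rwa [FreeGroup.toWord_inv, toWord_mk_of_isReduced ha] at h
  refine List.IsChain.append hinv hb fun s hs t ht hst => ?_
  have hs' : (s.1, !s.2) ∈ a.head? := by
    rcases a with _ | ⟨u, a⟩
    · simp at hs
    · simp only [FreeGroup.invRev, List.map_cons, List.reverse_cons, List.getLast?_append,
        List.getLast?_singleton, Option.some_or, Option.mem_def, Option.some.injEq] at hs
      simp [← hs]
  by_contra hne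
  exact hab _ hs' _ ht (Prod.ext hst (by simpa [Bool.eq_not] using hne))

variable {J : Type*} [DecidableEq J]

/-- The length of the longest common prefix of the reduced words of `x` and `y`. The numerator is
nonnegative and even. -/
def overlap (x y : FreeGroup J) : ℕ := (x.norm + y.norm - (x⁻¹ * y).norm) / 2

lemma exists_cancellation (x y : FreeGroup J) :
    ∃ c a b, x.toWord = c ++ a ∧ y.toWord = c ++ b ∧ (x⁻¹ * y).toWord = FreeGroup.invRev a ++ b ∧
      overlap x y = c.length ∧ ∀ s ∈ a.head?, ∀ t ∈ b.head?, s ≠ t := by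
  obtain ⟨c, a, b, hx, hy, hab⟩ := exists_common_initial x.toWord y.toWord
  have hxy : (x⁻¹ * y).toWord = FreeGroup.invRev a ++ b := by
    have hmk : x⁻¹ * y = FreeGroup.mk (FreeGroup.invRev a ++ b) := by
      rw [← FreeGroup.mk_toWord (x := x), ← FreeGroup.mk_toWord (x := y), hx, hy]
      simp only [← FreeGroup.mul_mk, ← FreeGroup.inv_mk]
      group
    have ha : FreeGroup.IsReduced (c ++ a) := hx ▸ FreeGroup.isReduced_toWord
    have hb : FreeGroup.IsReduced (c ++ b) := hy ▸ FreeGroup.isReduced_toWord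
    rw [hmk, toWord_mk_of_isReduced
      (isReduced_invRev_append (List.IsChain.right_of_append ha) (List.IsChain.right_of_append hb)
        hab)]
  refine ⟨c, a, b, hx, hy, hxy, ?_, hab⟩
  simp only [overlap, FreeGroup.norm, hx, hy, hxy, List.length_append, FreeGroup.invRev_length]
  omega

lemma norm_inv_mul_add (x y : FreeGroup J) :
    (x⁻¹ * y).norm + 2 * overlap x y = x.norm + y.norm := by
  obtain ⟨c, a, b, hx, hy, hxy, hc, -⟩ := exists_cancellation x y
  simp only [hc, FreeGroup.norm, hx, hy, hxy, List.length_append, FreeGroup.invRev_length]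
  omega

lemma norm_mul_add (x y : FreeGroup J) :
    (x * y).norm + 2 * overlap x⁻¹ y = x.norm + y.norm := by
  simpa using norm_inv_mul_add x⁻¹ y

lemma le_overlap_iff {x y : FreeGroup J} {k : ℕ} :
    k ≤ overlap x y ↔ k ≤ x.norm ∧ k ≤ y.norm ∧ x.toWord.take k = y.toWord.take k := by
  obtain ⟨c, a, b, hx, hy, -, hc, hab⟩ := exists_cancellation x y
  simp only [hc, FreeGroup.norm, hx, hy, List.length_append]
  constructor
  · intro hk
    exact ⟨by omega, by omega, by rw [List.take_append_of_le_length hk,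
      List.take_append_of_le_length hk]⟩
  · rintro ⟨hka, hkb, htake⟩
    by_contra! hk
    obtain ⟨m, rfl⟩ := Nat.exists_eq_add_of_lt hk
    rcases a with _ | ⟨s, a⟩
    · simp at hka
    rcases b with _ | ⟨t, b⟩
    · simp at hkb
    rw [add_assoc, List.take_length_add_append, List.take_length_add_append] at htake
    simp only [List.take_succ_cons, List.append_cancel_left_eq, List.cons.injEq] at htake
    exact hab s (by simp) t (by simp) htake.1

lemma overlap_comm (x y : FreeGroup J) : overlap x y = overlap y x :=
  eq_of_forall_le_iff fun k => by
    rw [le_overlap_iff, le_overlap_iff, eq_comm]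
    tauto

lemma min_overlap_le (x y z : FreeGroup J) :
    min (overlap x y) (overlap y z) ≤ overlap x z := by
  obtain ⟨hx, -, hxy⟩ := le_overlap_iff.1 (min_le_left (overlap x y) (overlap y z))
  obtain ⟨-, hz, hyz⟩ := le_overlap_iff.1 (min_le_right (overlap x y) (overlap y z))
  exact le_overlap_iff.2 ⟨hx, hz, hxy.trans hyz⟩

/- Writing `y` as a reduced conjugate of a cyclically reduced word `r`, the word of `y * y` is
obtained from that of `y` by doubling `r`. -/
lemma norm_lt_norm_mul_self {y : FreeGroup J} (hy : y ≠ 1) : y.norm < (y * y).norm := by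
  have hred := FreeGroup.isReduced_toWord (x := y)
  have hword := FreeGroup.reduceCyclically.reduce_flatten_replicate_succ hred 0
  have hword_sq := FreeGroup.reduceCyclically.reduce_flatten_replicate_succ hred 1
  simp only [List.replicate, List.flatten_cons, List.flatten_nil, List.append_nil,
    ← FreeGroup.toWord_mul, FreeGroup.reduce_toWord] at hword hword_sq
  have hne : FreeGroup.reduceCyclically y.toWord ≠ [] := fun h => by
    rw [h, List.append_nil] at hword
    apply hy
    rw [← FreeGroup.mk_toWord (x := y), hword, ← FreeGroup.mul_mk, ← FreeGroup.inv_mk,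
      mul_inv_cancel]
  have hpos := List.length_pos_iff.2 hne
  have hlen := congrArg List.length hword
  have hlen_sq := congrArg List.length hword_sq
  simp only [List.length_append, FreeGroup.invRev_length] at hlen hlen_sq
  simp only [FreeGroup.norm]
  omega

lemma two_mul_overlap_inv_self_lt {y : FreeGroup J} (hy : y ≠ 1) :
    2 * overlap y⁻¹ y < y.norm := by
  have := norm_mul_add y y
  have := norm_lt_norm_mul_self hy
  omega

/-- A set of elements of a free group satisfying Nielsen's cancellation conditions. -/
structure IsNielsenReduced (S : Set (FreeGroup J)) : Prop where
  ne_one : ∀ x ∈ S, x ≠ 1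
  overlap_le : ∀ x ∈ S, ∀ y ∈ S, x * y ≠ 1 → 2 * overlap x⁻¹ y ≤ y.norm
  overlap_add_lt : ∀ x ∈ S, ∀ y ∈ S, ∀ z ∈ S, x * y ≠ 1 → y * z ≠ 1 →
    overlap x⁻¹ y + overlap y⁻¹ z < y.norm

namespace IsNielsenReduced

variable {S : Set (FreeGroup J)}

lemma overlap_lt (hS : IsNielsenReduced S) {y : FreeGroup J} (hy : y ∈ S) {L : List (FreeGroup J)}
    (hL : ∀ z ∈ L, z ∈ S) (hchain : (y :: L).IsChain fun a b => a * b ≠ 1) {x : FreeGroup J}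
    (hx : x ∈ S) (hxy : x * y ≠ 1) :
    overlap x⁻¹ y < overlap (y :: L).prod y ∧
      overlap x⁻¹ y + (L.length + 1) ≤ (y :: L).prod.norm := by
  induction L generalizing x y with
  | nil =>
    have hy0 : y.norm ≠ 0 := by simpa using hS.ne_one y hy
    have hle := hS.overlap_le x hx y hy hxy
    have hyy := norm_inv_mul_add y y
    simp only [List.prod_cons, List.prod_nil, mul_one, List.length_nil, zero_add,
      inv_mul_cancel, FreeGroup.norm_one] at *
    omega
  | cons z L ih =>
    rw [List.isChain_cons_cons] at hchain
    obtain ⟨hlt, hnorm⟩ := ih (hL z (by simp)) (fun w hw => hL w (by simp [hw])) hchain.2 hy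
      hchain.1
    have hadd := hS.overlap_add_lt x hx y hy z (hL z (by simp)) hxy hchain.1
    rw [List.prod_cons (a := y), List.length_cons]
    set w := (z :: L).prod
    have hmin := min_overlap_le y⁻¹ z w
    have hmin' := min_overlap_le y⁻¹ w z
    rw [overlap_comm z w] at hmin
    have hyw := norm_mul_add y w
    have hywy := norm_inv_mul_add (y * w) y
    rw [show (y * w)⁻¹ * y = w⁻¹ by group, FreeGroup.norm_inv_eq] at hywy
    omega

lemma length_le_norm_prod (hS : IsNielsenReduced S) {L : List (FreeGroup J)}
    (hL : ∀ z ∈ L, z ∈ S) (hchain : L.IsChain fun a b => a * b ≠ 1) :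
    L.length ≤ L.prod.norm := by
  rcases L with _ | ⟨y, L⟩
  · simp
  · have hy := hL y (by simp)
    have hyy : y * y ≠ 1 := fun h => by
      have := norm_lt_norm_mul_self (hS.ne_one y hy)
      simp [h] at this
    have := (hS.overlap_lt hy (fun z hz => hL z (by simp [hz])) hchain hy hyy).2
    rw [List.length_cons]
    omega

end IsNielsenReduced

end Cancellation

section Nielsen

variable {J : Type*}

/-- The rank of a word in a total order on the words of each given length, compatible with appending
letters on the right. -/
noncomputable def wordCode [Finite J] (l : List (J × Bool)) : ℕ :=
  Nat.ofDigits (Nat.card (J × Bool) + 2)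
    (l.map fun a => (Finite.equivFin (J × Bool) a : ℕ)).reverse

lemma wordCode_injective [Finite J] {l l' : List (J × Bool)} (hlen : l.length = l'.length)
    (h : wordCode l = wordCode l') : l = l' := by
  have hlt (l : List (J × Bool)) :
      ∀ k ∈ (l.map fun a => (Finite.equivFin (J × Bool) a : ℕ)).reverse,
        k < Nat.card (J × Bool) + 2 := by
    intro k hk
    simp only [List.mem_reverse, List.mem_map] at hk
    obtain ⟨a, -, rfl⟩ := hk
    have := (Finite.equivFin (J × Bool) a).2
    omega
  have := Nat.ofDigits_inj_of_len_eq (by omega) (by simpa using hlen) (hlt l) (hlt l') h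
  refine List.map_injective_iff.2 (fun a b hab => ?_) (List.reverse_injective this)
  exact (Finite.equivFin (J × Bool)).injective (Fin.ext hab)

lemma wordCode_append_le_iff [Finite J] {l l' r : List (J × Bool)} :
    wordCode (l ++ r) ≤ wordCode (l' ++ r) ↔ wordCode l ≤ wordCode l' := by
  simp only [wordCode, List.map_append, List.reverse_append, Nat.ofDigits_append]
  rw [add_le_add_iff_left]
  exact Nat.mul_le_mul_left_iff (by positivity)

lemma mk_singleton_inv (a : J × Bool) : (FreeGroup.mk [a])⁻¹ = FreeGroup.mk [(a.1, !a.2)] := by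
  simp [FreeGroup.inv_mk, FreeGroup.invRev]

lemma mk_singleton_ne_one (a : J × Bool) : FreeGroup.mk [a] ≠ 1 := by
  classical
  intro h
  have := congrArg FreeGroup.toWord h
  simp at this

/-- The image of a letter under an automorphism. -/
def letterImage (f : MulAut (FreeGroup J)) (a : J × Bool) : FreeGroup J := f (FreeGroup.mk [a])

section letterImage

variable (f : MulAut (FreeGroup J))

lemma letterImage_inv (a : J × Bool) : (letterImage f a)⁻¹ = letterImage f (a.1, !a.2) := by
  rw [letterImage, letterImage, ← _root_.map_inv, mk_singleton_inv]

lemma letterImage_ne_one (a : J × Bool) : letterImage f a ≠ 1 := by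
  simpa [letterImage] using mk_singleton_ne_one a

lemma prod_map_letterImage (l : List (J × Bool)) :
    (l.map (letterImage f)).prod = f (FreeGroup.mk l) := by
  induction l with
  | nil => exact (_root_.map_one f).symm
  | cons a l ih =>
    rw [List.map_cons, List.prod_cons, ih, letterImage, ← _root_.map_mul, FreeGroup.mul_mk,
      List.singleton_append]

lemma eq_or_fst_ne_of_letterImage_mul_ne_one {a b : J × Bool}
    (hab : letterImage f a * letterImage f b ≠ 1) : a = b ∨ a.1 ≠ b.1 := by
  by_contra! h
  refine hab (mul_eq_one_iff_inv_eq.2 ?_)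
  rw [letterImage_inv]
  exact congrArg _ (Prod.ext h.2 (by simpa [Bool.eq_not] using fun h₂ => h.1 (Prod.ext h.2 h₂)))

lemma letterImage_inv_mul_inv_ne_one {a b : J × Bool}
    (hab : letterImage f a * letterImage f b ≠ 1) :
    letterImage f (b.1, !b.2) * letterImage f (a.1, !a.2) ≠ 1 := by
  rwa [← letterImage_inv, ← letterImage_inv, ← _root_.mul_inv_rev, Ne, inv_eq_one]

end letterImage

variable [DecidableEq J]

/-- The first half of the reduced word of `y`, without the middle letter if the length is odd. -/
def firstHalf (y : FreeGroup J) : List (J × Bool) := y.toWord.take (y.norm / 2)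

lemma length_firstHalf_inv (y : FreeGroup J) : (firstHalf y⁻¹).length = (firstHalf y).length := by
  simp [firstHalf, FreeGroup.norm]

lemma firstHalf_inv_ne {y : FreeGroup J} (hy : y ≠ 1) (heven : 2 ∣ y.norm) :
    firstHalf y⁻¹ ≠ firstHalf y := by
  intro h
  have hle : y.norm / 2 ≤ overlap y⁻¹ y := by
    rw [le_overlap_iff, FreeGroup.norm_inv_eq]
    refine ⟨by omega, by omega, ?_⟩
    simpa [firstHalf] using h
  have := two_mul_overlap_inv_self_lt hy
  omega

/-- The total rank of the first halves of `y` and `y⁻¹`, which breaks ties between elements of equal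
length in Nielsen's method. -/
noncomputable def code [Finite J] (y : FreeGroup J) : ℕ :=
  wordCode (firstHalf y) + wordCode (firstHalf y⁻¹)

lemma code_inv [Finite J] (y : FreeGroup J) : code y⁻¹ = code y := by
  rw [code, code, inv_inv, add_comm]

/- If `y = a⁻¹ c⁻¹` and `z = c b` with `a` and `c` of equal length, then passing from `z` to
`y * z = a⁻¹ b` only replaces the initial segment `c` by `a⁻¹` in the first half of `z`, and these
two segments are the first halves of `y⁻¹` and `y`. -/
lemma wordCode_firstHalf_inv_le_of_code_le [Finite J] {y z : FreeGroup J}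
    (hyz : (y * z).norm = z.norm) (hle : y.norm ≤ z.norm) (hcode : code z ≤ code (y * z)) :
    wordCode (firstHalf y⁻¹) ≤ wordCode (firstHalf y) := by
  obtain ⟨c, a, b, hy', hz, hmul, -, -⟩ := exists_cancellation y⁻¹ z
  rw [inv_inv] at hmul
  have hy : y.toWord = FreeGroup.invRev a ++ FreeGroup.invRev c := by
    rw [← inv_inv y, FreeGroup.toWord_inv, hy', FreeGroup.invRev_append]
  have hz' : z⁻¹.toWord = FreeGroup.invRev b ++ FreeGroup.invRev c := by
    rw [FreeGroup.toWord_inv, hz, FreeGroup.invRev_append]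
  have hmul' : (y * z)⁻¹.toWord = FreeGroup.invRev b ++ a := by
    rw [FreeGroup.toWord_inv, hmul, FreeGroup.invRev_append, FreeGroup.invRev_invRev]
  have hny : y.norm = a.length + c.length := by simp [FreeGroup.norm, hy]
  have hnz : z.norm = c.length + b.length := by simp [FreeGroup.norm, hz]
  have hnyz : (y * z).norm = a.length + b.length := by simp [FreeGroup.norm, hmul]
  have hac : a.length = c.length := by omega
  obtain ⟨m, hm⟩ : ∃ m, z.norm / 2 = c.length + m := ⟨z.norm / 2 - c.length, by omega⟩
  have hbm : c.length + m ≤ b.length := by omega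
  have hhy : firstHalf y = FreeGroup.invRev a := by
    rw [firstHalf, hy, hny, List.take_append_of_le_length (by simp; omega),
      List.take_of_length_le (by simp; omega)]
  have hhy' : firstHalf y⁻¹ = c := by
    rw [firstHalf, hy', FreeGroup.norm_inv_eq, hny, List.take_append_of_le_length (by omega),
      List.take_of_length_le (by omega)]
  have hhz : firstHalf z = c ++ b.take m := by
    rw [firstHalf, hz, hm, List.take_length_add_append]
  have hhmul : firstHalf (y * z) = FreeGroup.invRev a ++ b.take m := by
    rw [firstHalf, hmul, hyz, hm, ← hac, ← FreeGroup.invRev_length, List.take_length_add_append]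
  have hhz' : firstHalf z⁻¹ = firstHalf (y * z)⁻¹ := by
    rw [firstHalf, firstHalf, hz', hmul', FreeGroup.norm_inv_eq, FreeGroup.norm_inv_eq, hyz, hm,
      List.take_append_of_le_length (by simpa), List.take_append_of_le_length (by simpa)]
  rw [code, code, hhz', add_le_add_iff_right, hhz, hhmul, wordCode_append_le_iff] at hcode
  rwa [hhy, hhy']

lemma norm_letterImage (f : MulAut (FreeGroup J)) (b : J × Bool) :
    (letterImage f b).norm = (f (FreeGroup.of b.1)).norm := by
  obtain ⟨j, _ | _⟩ := b
  · rw [← FreeGroup.norm_inv_eq, letterImage_inv]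
    rfl
  · rfl

lemma code_letterImage [Finite J] (f : MulAut (FreeGroup J)) (b : J × Bool) :
    code (letterImage f b) = code (f (FreeGroup.of b.1)) := by
  obtain ⟨j, _ | _⟩ := b
  · rw [← code_inv, letterImage_inv]
    rfl
  · rfl

/-- Replacing the image of one letter by its product with the image of another letter decreases
neither its length nor, if the length stays the same, its code. -/
def IsNielsenMinimal [Finite J] (f : MulAut (FreeGroup J)) : Prop :=
  ∀ a b : J × Bool, a.1 ≠ b.1 →
    (letterImage f b).norm ≤ (letterImage f a * letterImage f b).norm ∧
    ((letterImage f a * letterImage f b).norm = (letterImage f b).norm →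
      code (letterImage f b) ≤ code (letterImage f a * letterImage f b))

namespace IsNielsenMinimal

variable [Finite J] {f : MulAut (FreeGroup J)} {a b : J × Bool}

lemma two_mul_overlap_le_right (hf : IsNielsenMinimal f)
    (hab : letterImage f a * letterImage f b ≠ 1) :
    2 * overlap (letterImage f a)⁻¹ (letterImage f b) ≤ (letterImage f a).norm := by
  rcases eq_or_fst_ne_of_letterImage_mul_ne_one f hab with rfl | hne
  · exact (two_mul_overlap_inv_self_lt (letterImage_ne_one f a)).le
  · have := (hf a b hne).1
    have := norm_mul_add (letterImage f a) (letterImage f b)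
    omega

lemma two_mul_overlap_le_left (hf : IsNielsenMinimal f)
    (hab : letterImage f a * letterImage f b ≠ 1) :
    2 * overlap (letterImage f a)⁻¹ (letterImage f b) ≤ (letterImage f b).norm := by
  have h := hf.two_mul_overlap_le_right (letterImage_inv_mul_inv_ne_one f hab)
  rwa [← letterImage_inv, ← letterImage_inv, inv_inv, FreeGroup.norm_inv_eq, overlap_comm] at h

lemma wordCode_firstHalf_inv_le (hf : IsNielsenMinimal f)
    (hab : letterImage f a * letterImage f b ≠ 1)
    (heq : 2 * overlap (letterImage f a)⁻¹ (letterImage f b) = (letterImage f a).norm) :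
    wordCode (firstHalf (letterImage f a)⁻¹) ≤ wordCode (firstHalf (letterImage f a)) := by
  rcases eq_or_fst_ne_of_letterImage_mul_ne_one f hab with rfl | hne
  · exact absurd heq (two_mul_overlap_inv_self_lt (letterImage_ne_one f a)).ne
  · have := norm_mul_add (letterImage f a) (letterImage f b)
    have := hf.two_mul_overlap_le_left hab
    exact wordCode_firstHalf_inv_le_of_code_le (by omega) (by omega)
      ((hf a b hne).2 (by omega))

/- If the cancellations on both sides eat up the whole of the middle factor `y`, then the first
halves of `y` and `y⁻¹` have the same code, hence coincide, which is impossible. -/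
lemma isNielsenReduced (hf : IsNielsenMinimal f) :
    IsNielsenReduced (Set.range (letterImage f)) where
  ne_one := by
    rintro - ⟨a, rfl⟩
    exact letterImage_ne_one f a
  overlap_le := by
    rintro - ⟨a, rfl⟩ - ⟨b, rfl⟩ hab
    exact hf.two_mul_overlap_le_left hab
  overlap_add_lt := by
    rintro - ⟨a, rfl⟩ - ⟨b, rfl⟩ - ⟨c, rfl⟩ hab hbc
    by_contra! hge
    have hleft := hf.two_mul_overlap_le_left hab
    have hright := hf.two_mul_overlap_le_right hbc
    have hle := hf.wordCode_firstHalf_inv_le hbc (by omega)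
    have hge' := hf.wordCode_firstHalf_inv_le (letterImage_inv_mul_inv_ne_one f hab) (by
      rw [← letterImage_inv, ← letterImage_inv, inv_inv, FreeGroup.norm_inv_eq, overlap_comm]
      omega)
    rw [← letterImage_inv, inv_inv] at hge'
    exact firstHalf_inv_ne (letterImage_ne_one f b) (by omega)
      (wordCode_injective (length_firstHalf_inv _) (hle.antisymm hge'))

lemma exists_inv_apply_of_eq (hf : IsNielsenMinimal f) (i : J) :
    ∃ a, f⁻¹ (FreeGroup.of i) = FreeGroup.mk [a] := by
  set w := f⁻¹ (FreeGroup.of i) with hw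
  have hprod : (w.toWord.map (letterImage f)).prod = FreeGroup.of i := by
    rw [prod_map_letterImage, FreeGroup.mk_toWord, hw, MulAut.apply_inv_self]
  have hmem : ∀ z ∈ w.toWord.map (letterImage f), z ∈ Set.range (letterImage f) := fun z hz =>
    (List.mem_map.1 hz).imp fun a ha => ha.2
  have hchain : (w.toWord.map (letterImage f)).IsChain fun x y => x * y ≠ 1 := by
    rw [List.isChain_map]
    refine (FreeGroup.isReduced_toWord (x := w)).imp fun a b hab h => ?_
    rw [letterImage, letterImage, ← _root_.map_mul, EmbeddingLike.map_eq_one_iff,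
      mul_eq_one_iff_inv_eq, mk_singleton_inv] at h
    have := congrArg FreeGroup.toWord h
    simp only [FreeGroup.toWord_mk, FreeGroup.reduce_singleton, List.cons.injEq, and_true] at this
    subst this
    simp at hab
  have hlen := hf.isNielsenReduced.length_le_norm_prod hmem hchain
  rw [hprod, FreeGroup.norm_of, List.length_map] at hlen
  have hne : w.toWord ≠ [] := fun h => by
    rw [h, List.map_nil, List.prod_nil] at hprod
    exact FreeGroup.of_ne_one i hprod.symm
  obtain ⟨a, ha⟩ := List.length_eq_one_iff.1 (hlen.antisymm (List.length_pos_iff.2 hne))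
  exact ⟨a, by rw [← ha, FreeGroup.mk_toWord]⟩

end IsNielsenMinimal

lemma exists_transvection_mul {T : Subgroup (MulAut (FreeGroup J))}
    (hT : ∀ (i j : J) (h : i ≠ j), rtransv h ∈ T ∧ ltransv h ∈ T) {a b : J × Bool}
    (hab : a.1 ≠ b.1) :
    ∃ t ∈ T, t (FreeGroup.mk [b]) = FreeGroup.mk [a] * FreeGroup.mk [b] ∧
      ∀ k, k ≠ b.1 → t (FreeGroup.of k) = FreeGroup.of k := by
  obtain ⟨i, ε⟩ := a
  obtain ⟨j, δ⟩ := b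
  have hfalse (i : J) : FreeGroup.mk [(i, false)] = (FreeGroup.of i)⁻¹ := rfl
  have htrue (i : J) : FreeGroup.mk [(i, true)] = FreeGroup.of i := rfl
  obtain ⟨hr, hl⟩ := hT j i hab.symm
  rcases ε <;> rcases δ <;> simp only [hfalse, htrue]
  · exact ⟨_, hr, by simp [rtransv_of], fun k hk => by simp [rtransv_of, hk]⟩
  · exact ⟨_, T.inv_mem hl, by simp [ltransv_symm_of], fun k hk => by simp [ltransv_symm_of, hk]⟩
  · exact ⟨_, T.inv_mem hr, by simp [rtransv_symm_of], fun k hk => by simp [rtransv_symm_of, hk]⟩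
  · exact ⟨_, hl, by simp [ltransv_of], fun k hk => by simp [ltransv_of, hk]⟩

lemma sum_add_eq_sum_add_of_forall_ne {ι M : Type*} [Fintype ι] [AddCommMonoid M]
    {F G : ι → M} {j : ι} (h : ∀ i, i ≠ j → F i = G i) :
    ∑ i, F i + G j = ∑ i, G i + F j := by
  classical
  rw [← Finset.add_sum_erase _ F (Finset.mem_univ j),
    ← Finset.add_sum_erase _ G (Finset.mem_univ j),
    Finset.sum_congr rfl fun i hi => h i (Finset.ne_of_mem_erase hi)]
  abel

/- Minimize the pair (total length, total code) lexicographically over the coset of `T`. -/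
lemma exists_isNielsenMinimal [Finite J] {T : Subgroup (MulAut (FreeGroup J))}
    (hT : ∀ (i j : J) (h : i ≠ j), rtransv h ∈ T ∧ ltransv h ∈ T) (f : MulAut (FreeGroup J)) :
    ∃ t ∈ T, IsNielsenMinimal (f * t) := by
  have := Fintype.ofFinite J
  let total (F : FreeGroup J → ℕ) (g : MulAut (FreeGroup J)) : ℕ := ∑ i, F (g (FreeGroup.of i))
  let μ (t : T) : ℕ ×ₗ ℕ := toLex (total FreeGroup.norm (f * t), total code (f * t))
  obtain ⟨t, -, hmin⟩ := WellFounded.has_min (InvImage.wf μ wellFounded_lt) Set.univ ⟨1, trivial⟩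
  refine ⟨t, t.2, fun a b hab => ?_⟩
  obtain ⟨s, hsT, hsb, hs⟩ := exists_transvection_mul hT hab
  have hle : μ t ≤ μ (t * ⟨s, hsT⟩) := not_lt.1 (hmin _ trivial)
  set g := f * (t : MulAut (FreeGroup J)) with hg
  have hgs : letterImage g a * letterImage g b = letterImage (g * s) b := by
    rw [letterImage, letterImage, letterImage, MulAut.mul_apply _ g, hsb, _root_.map_mul]
  have htotal (F : FreeGroup J → ℕ) : total F (g * s) + F (g (FreeGroup.of b.1)) =
      total F g + F ((g * s) (FreeGroup.of b.1)) :=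
    sum_add_eq_sum_add_of_forall_ne (F := fun i => F ((g * s) (FreeGroup.of i)))
      (G := fun i => F (g (FreeGroup.of i))) fun k hk => by rw [MulAut.mul_apply _ g, hs k hk]
  rw [hgs, norm_letterImage, norm_letterImage, code_letterImage, code_letterImage]
  rw [Prod.Lex.le_iff] at hle
  simp only [μ, ofLex_toLex, Subgroup.coe_mul, ← mul_assoc, ← hg] at hle
  have := htotal FreeGroup.norm
  have := htotal code
  omega

lemma exists_mul_eq_letter [Finite J] {T : Subgroup (MulAut (FreeGroup J))}
    (hT : ∀ (i j : J) (h : i ≠ j), rtransv h ∈ T ∧ ltransv h ∈ T) (f : MulAut (FreeGroup J)) :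
    ∃ t ∈ T, ∀ i, ∃ a, (t * f) (FreeGroup.of i) = FreeGroup.mk [a] := by
  obtain ⟨t, ht, hmin⟩ := exists_isNielsenMinimal hT f⁻¹
  refine ⟨t⁻¹, T.inv_mem ht, fun i => ?_⟩
  obtain ⟨a, ha⟩ := hmin.exists_inv_apply_of_eq i
  exact ⟨a, by rwa [_root_.mul_inv_rev, inv_inv] at ha⟩

end Nielsen

/-! ### Normal generation of `SAut(F_n)` -/

section NormalGeneration

variable {J : Type*} [DecidableEq J]

/-- The automorphism inverting the generator `x i` and fixing the other generators. -/
def signAut (i : J) : MulAut (FreeGroup J) :=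
  autMk (fun k => if k = i then (FreeGroup.of i)⁻¹ else FreeGroup.of k)
    (fun k => if k = i then (FreeGroup.of i)⁻¹ else FreeGroup.of k)
    (fun k => by by_cases hk : k = i <;> simp [hk])
    (fun k => by by_cases hk : k = i <;> simp [hk])

lemma signAut_of (i k : J) : signAut i (FreeGroup.of k) =
    if k = i then (FreeGroup.of i)⁻¹ else FreeGroup.of k := autMk_of _ _ _ _ _

lemma signAut_mul_self (i : J) : signAut i * signAut i = 1 :=
  mulAut_ext fun k => by by_cases hk : k = i <;> simp [signAut_of, hk]

lemma signAut_mul_rtransv {i j : J} (h : i ≠ j) :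
    signAut i * rtransv h = (ltransv h)⁻¹ * signAut i :=
  mulAut_ext fun k => by
    by_cases hk : k = i <;> simp [signAut_of, rtransv_of, ltransv_symm_of, hk, h.symm]

lemma permAut_swap_mul_signAut {i j : J} (h : i ≠ j) :
    permAut (Equiv.swap i j) * signAut j = ltransv h * (ltransv h.symm)⁻¹ * rtransv h :=
  mulAut_ext fun k => by
    by_cases hi : k = i
    · subst hi
      simp [signAut_of, rtransv_of, ltransv_of, ltransv_symm_of, permAut_of, h, h.symm]
    by_cases hj : k = j
    · subst hj
      simp [signAut_of, rtransv_of, ltransv_of, ltransv_symm_of, permAut_of, h.symm]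
    · simp [signAut_of, rtransv_of, ltransv_of, ltransv_symm_of, permAut_of, hi, hj,
        Equiv.swap_apply_of_ne_of_ne]

section Normal

variable {N : Subgroup (MulAut (FreeGroup J))} [hN : N.Normal]

lemma rtransv_mem_iff_ltransv_mem {i j : J} (h : i ≠ j) : rtransv h ∈ N ↔ ltransv h ∈ N := by
  have hconj : signAut i * rtransv h * (signAut i)⁻¹ = (ltransv h)⁻¹ := by
    rw [signAut_mul_rtransv, mul_inv_cancel_right]
  rw [← inv_mem_iff (x := ltransv h), ← hconj]
  exact hN.mem_comm_iff.trans (by rw [inv_mul_cancel_left]) |>.symm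

lemma transv_mem_of_mem {i j : J} {h : i ≠ j} (hmem : rtransv h ∈ N ∨ ltransv h ∈ N) {i' j' : J}
    (h' : i' ≠ j') : rtransv h' ∈ N ∧ ltransv h' ∈ N := by
  rw [← rtransv_mem_iff_ltransv_mem, or_self] at hmem
  rw [← rtransv_mem_iff_ltransv_mem, and_self]
  obtain ⟨π, rfl, rfl⟩ : ∃ π : Equiv.Perm J, π i = i' ∧ π j = j' := by
    refine ⟨Equiv.swap (Equiv.swap i i' j) j' * Equiv.swap i i', ?_, by simp⟩
    have hne : i' ≠ Equiv.swap i i' j := by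
      simpa using (Equiv.swap i i').injective.ne h
    simp [Equiv.swap_apply_of_ne_of_ne hne h']
  rw [← mul_inv_cancel_right (rtransv h') (permAut π), ← permAut_mul_rtransv π h]
  exact hN.conj_mem _ hmem _

end Normal

section SignedPermutations

variable {K : Subgroup (MulAut (FreeGroup J))}

lemma permAut_mem [Finite J] (hswap : ∀ i j, i ≠ j → permAut (Equiv.swap i j) ∈ K)
    (π : Equiv.Perm J) : permAut π ∈ K := by
  have := Fintype.ofFinite J
  induction π using Equiv.Perm.swap_induction_on with
  | one =>
    rw [show permAut (1 : Equiv.Perm J) = 1 from mulAut_ext fun i => by simp [permAut_of]]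
    exact K.one_mem
  | swap_mul π i j hij ih =>
    rw [permAut_mul]
    exact K.mul_mem (hswap i j hij) ih

lemma mem_of_forall_eq_or_eq_inv (hsign : ∀ i, signAut i ∈ K) (S : Finset J)
    (d : MulAut (FreeGroup J))
    (hS : ∀ i ∈ S, d (FreeGroup.of i) = FreeGroup.of i ∨ d (FreeGroup.of i) = (FreeGroup.of i)⁻¹)
    (hS' : ∀ i ∉ S, d (FreeGroup.of i) = FreeGroup.of i) : d ∈ K := by
  induction S using Finset.induction generalizing d with
  | empty =>
    rw [show d = 1 from mulAut_ext fun i => hS' i (by simp)]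
    exact K.one_mem
  | insert j S hj ih =>
    rcases hS j (by simp) with h | h
    · refine ih d (fun i hi => hS i (by simp [hi])) fun i hi => ?_
      by_cases hij : i = j
      · exact hij ▸ h
      · exact hS' i (by simp [hi, hij])
    · rw [← K.mul_mem_cancel_right (hsign j)]
      refine ih _ (fun i hi => ?_) fun i hi => ?_
      · have hij : i ≠ j := fun h => hj (h ▸ hi)
        simpa [signAut_of, hij] using hS i (by simp [hi])
      · by_cases hij : i = j
        · simp [hij, signAut_of, h]
        · simpa [signAut_of, hij] using hS' i (by simp [hi, hij])

lemma mk_singleton_eq_or_eq_inv {α : Type*} (a : α × Bool) :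
    FreeGroup.mk [a] = FreeGroup.of a.1 ∨ FreeGroup.mk [a] = (FreeGroup.of a.1)⁻¹ := by
  obtain ⟨j, _ | _⟩ := a
  exacts [.inr rfl, .inl rfl]

lemma of_ne_of_inv {α : Type*} (i j : α) : FreeGroup.of i ≠ (FreeGroup.of j)⁻¹ := by
  classical
  intro h
  have := congrArg FreeGroup.toWord h
  simp [FreeGroup.toWord_inv, FreeGroup.invRev] at this

lemma fst_injective_of_forall_eq_mk {α : Type*} {g : MulAut (FreeGroup α)} {a : α → α × Bool}
    (ha : ∀ i, g (FreeGroup.of i) = FreeGroup.mk [a i]) :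
    Function.Injective fun i => (a i).1 := by
  intro i j (hij : (a i).1 = (a j).1)
  have : g (FreeGroup.of i) = g (FreeGroup.of j) ∨
      g (FreeGroup.of i) = g (FreeGroup.of j)⁻¹ := by
    rw [_root_.map_inv, ha, ha]
    rcases mk_singleton_eq_or_eq_inv (a i) with h | h <;>
      rcases mk_singleton_eq_or_eq_inv (a j) with h' | h' <;> simp [h, h', hij]
  rcases this with h | h
  · exact FreeGroup.of_injective (g.injective h)
  · exact (of_ne_of_inv i j (g.injective h)).elim

lemma mem_of_forall_exists_eq_mk [Finite J] (hsign : ∀ i, signAut i ∈ K)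
    (hswap : ∀ i j, i ≠ j → permAut (Equiv.swap i j) ∈ K) {g : MulAut (FreeGroup J)}
    (hg : ∀ i, ∃ a, g (FreeGroup.of i) = FreeGroup.mk [a]) : g ∈ K := by
  have := Fintype.ofFinite J
  choose a ha using hg
  let π := Equiv.ofBijective _ (Finite.injective_iff_bijective.1 (fst_injective_of_forall_eq_mk ha))
  rw [← K.mul_mem_cancel_left (K.inv_mem (permAut_mem hswap π))]
  refine mem_of_forall_eq_or_eq_inv hsign Finset.univ _ (fun i _ => ?_) (by simp)
  have hinv : (permAut π)⁻¹ (FreeGroup.of (a i).1) = FreeGroup.of i := by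
    rw [← MulAut.inv_apply_self _ (permAut π) (FreeGroup.of i), permAut_of]
    rfl
  rw [MulAut.mul_apply, ha]
  rcases mk_singleton_eq_or_eq_inv (a i) with h | h <;>
    simp only [h, _root_.map_inv, hinv, true_or, or_true]

end SignedPermutations

lemma permAut_swap_mul_signAut_mem {T : Subgroup (MulAut (FreeGroup J))}
    (hT : ∀ (i j : J) (h : i ≠ j), rtransv h ∈ T ∧ ltransv h ∈ T) {i j : J} (h : i ≠ j) :
    permAut (Equiv.swap i j) * signAut j ∈ T := by
  rw [permAut_swap_mul_signAut h]
  exact T.mul_mem (T.mul_mem (hT _ _ h).2 (T.inv_mem (hT _ _ h.symm).2)) (hT _ _ h).1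

lemma signAut_inv_mul_signAut_mem {T : Subgroup (MulAut (FreeGroup J))}
    (hT : ∀ (i j : J) (h : i ≠ j), rtransv h ∈ T ∧ ltransv h ∈ T) (i j : J) :
    (signAut i)⁻¹ * signAut j ∈ T := by
  rcases eq_or_ne i j with rfl | h
  · rw [inv_mul_cancel]
    exact T.one_mem
  · have hi := permAut_swap_mul_signAut_mem hT h.symm
    rw [Equiv.swap_comm] at hi
    simpa [mul_assoc] using T.mul_mem (T.inv_mem hi) (permAut_swap_mul_signAut_mem hT h)

lemma sup_zpowers_signAut_eq_top [Finite J] {T : Subgroup (MulAut (FreeGroup J))}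
    (hT : ∀ (i j : J) (h : i ≠ j), rtransv h ∈ T ∧ ltransv h ∈ T) (i : J) :
    T ⊔ Subgroup.zpowers (signAut i) = ⊤ := by
  set K := T ⊔ Subgroup.zpowers (signAut i)
  have hTK : T ≤ K := le_sup_left
  have hsign (j : J) : signAut j ∈ K := by
    rw [← mul_inv_cancel_left (signAut i) (signAut j)]
    exact K.mul_mem ((le_sup_right : _ ≤ K) (Subgroup.mem_zpowers _))
      (hTK (signAut_inv_mul_signAut_mem hT i j))
  have hswap (j k : J) (h : j ≠ k) : permAut (Equiv.swap j k) ∈ K :=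
    (K.mul_mem_cancel_right (hsign k)).1 (hTK (permAut_swap_mul_signAut_mem hT h))
  refine eq_top_iff.2 fun g _ => ?_
  obtain ⟨t, ht, htg⟩ := exists_mul_eq_letter hT g
  exact (K.mul_mem_cancel_left (hTK ht)).1 (mem_of_forall_exists_eq_mk hsign hswap htg)

lemma exists_mul_eq_of_transv_mem [Finite J] {T : Subgroup (MulAut (FreeGroup J))} [T.Normal]
    (hT : ∀ (i j : J) (h : i ≠ j), rtransv h ∈ T ∧ ltransv h ∈ T) (i : J)
    (g : MulAut (FreeGroup J)) : ∃ t ∈ T, g = t ∨ g = t * signAut i := by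
  obtain ⟨t, ht, s, hs, rfl⟩ : ∃ t ∈ T, ∃ s ∈ Subgroup.zpowers (signAut i), t * s = g := by
    rw [← Subgroup.mem_sup_of_normal_left, sup_zpowers_signAut_eq_top hT i]
    exact Subgroup.mem_top g
  obtain ⟨k, rfl⟩ := Subgroup.mem_zpowers_iff.1 hs
  refine ⟨t, ht, ?_⟩
  have hsq : signAut i ^ (2 : ℤ) = 1 := (zpow_two _).trans (signAut_mul_self i)
  obtain ⟨m, rfl | rfl⟩ := Int.even_or_odd' k
  · simp [_root_.zpow_mul, hsq]
  · simp [_root_.zpow_add, _root_.zpow_mul, hsq]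

end NormalGeneration

section Special

variable {n : ℕ}

lemma detρ_rtransv (hn : 3 ≤ n) {i j : Fin n} (h : i ≠ j) : detρ n (rtransv h) = 1 := by
  obtain ⟨k, hki, hkj⟩ := Fin.exists_ne_and_ne_of_two_lt i j hn
  have := congrArg (detρ n) (rtransv_mul_rtransv hki.symm hkj h)
  simp only [_root_.map_mul] at this
  rw [mul_comm (detρ n (rtransv hkj))] at this
  exact left_eq_mul.1 this

lemma mat_signAut (i : Fin n) :
    mat (signAut i) = Matrix.diagonal fun k => if k = i then -1 else 1 := by
  ext k l
  rw [mat, Matrix.of_apply, signAut_of, Matrix.diagonal_apply]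
  by_cases hl : l = i <;> simp only [hl, if_true, if_false, _root_.map_inv, toAdd_inv, expSum,
    FreeGroup.lift_apply_of, toAdd_ofAdd] <;> grind

lemma detρ_signAut (i : Fin n) : detρ n (signAut i) = -1 := by
  refine Units.ext ?_
  change (mat (signAut i)).det = -1
  simp [mat_signAut, Matrix.det_diagonal, Finset.prod_ite_eq']

theorem SAut_le_of_transv_mem (hn : 3 ≤ n) {N : Subgroup (FrAut n)} [N.Normal] {i j : Fin n}
    {h : i ≠ j} (hmem : rtransv h ∈ N ∨ ltransv h ∈ N) : SAut n ≤ N := by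
  have : (SAut n).Normal := (detρ n).normal_ker
  have hT (i j : Fin n) (h : i ≠ j) : rtransv h ∈ N ⊓ SAut n ∧ ltransv h ∈ N ⊓ SAut n := by
    rw [← rtransv_mem_iff_ltransv_mem, and_self]
    exact ⟨(transv_mem_of_mem hmem h).1, detρ_rtransv hn h⟩
  intro g hg
  obtain ⟨t, ht, rfl | rfl⟩ := exists_mul_eq_of_transv_mem hT i g
  · exact ht.1
  · have hdet : detρ n (t * signAut i) = 1 := hg
    rw [_root_.map_mul, detρ_signAut, show detρ n t = 1 from ht.2] at hdet
    exact absurd hdet (by decide)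

end Special

/-! ### Passage to outer automorphisms -/

section Outer

lemma eq_one_of_forall_commute_of {J : Type*} [Nontrivial J] {w : FreeGroup J}
    (hw : ∀ k, w * FreeGroup.of k = FreeGroup.of k * w) : w = 1 := by
  classical
  rw [← FreeGroup.toWord_eq_nil_iff]
  rcases hL : w.toWord with _ | ⟨a, L⟩
  · rfl
  exfalso
  obtain ⟨k, hk⟩ := exists_ne a.1
  have hleft : (FreeGroup.of k * w).toWord = (k, true) :: a :: L := by
    rw [FreeGroup.toWord_mul, hL, FreeGroup.toWord_of]
    refine FreeGroup.IsReduced.reduce_eq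
      (FreeGroup.isReduced_cons_cons.2 ⟨fun h => (hk h).elim, ?_⟩)
    exact hL ▸ FreeGroup.isReduced_toWord
  have hright := FreeGroup.toWord_mul_sublist w (FreeGroup.of k)
  rw [hw, hleft, hL, FreeGroup.toWord_of] at hright
  have heq := hright.eq_of_length (by simp)
  rw [List.cons_append, List.cons.injEq] at heq
  exact hk (congrArg Prod.fst heq.1)

lemma conj_freeGroup_injective {J : Type*} [Nontrivial J] :
    Function.Injective (MulAut.conj (G := FreeGroup J)) := by
  rw [injective_iff_map_eq_one]
  intro w hw
  refine eq_one_of_forall_commute_of fun k => ?_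
  have := DFunLike.congr_fun hw (FreeGroup.of k)
  rwa [MulAut.conj_apply, MulAut.one_apply, mul_inv_eq_iff_eq_mul] at this

section Conj

variable {F : Type*} [Group F]

lemma mul_conj_mul_inv (s : MulAut F) (w : F) : s * MulAut.conj w * s⁻¹ = MulAut.conj (s w) := by
  ext x
  simp

lemma eq_one_of_forall_commute_conj (hconj : Function.Injective (MulAut.conj (G := F)))
    {s : MulAut F} (hs : ∀ w, MulAut.conj w * s = s * MulAut.conj w) : s = 1 := by
  ext w
  apply hconj
  rw [← mul_conj_mul_inv, ← hs, mul_inv_cancel_right, MulAut.one_apply]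

lemma congr_conjNormal (hconj : Function.Injective (MulAut.conj (G := F)))
    {E : Subgroup (MulAut F)} {K : Subgroup E} [K.Normal] {κ : K ≃* F}
    (hκ : ∀ w, ((κ.symm w : E) : MulAut F) = MulAut.conj w) (s : E) :
    MulAut.congr κ (MulAut.conjNormal s) = s := by
  ext w
  apply hconj
  change MulAut.conj (κ (MulAut.conjNormal s (κ.symm w))) = _
  rw [← hκ, MulEquiv.symm_apply_apply, MulAut.conjNormal_apply, Subgroup.coe_mul, Subgroup.coe_mul,
    Subgroup.coe_inv, hκ, mul_conj_mul_inv]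

end Conj

section HasTransvection

variable {G H : Type*} [Group G] [Group H] {N : Subgroup (MulAut H)}

/- Any two isomorphisms identify the automorphism groups up to an inner automorphism. -/
lemma congr_mem_of_congr_mem (κ ψ : G ≃* H) [hN : N.Normal] {f : MulAut G}
    (hf : MulAut.congr ψ f ∈ N) : MulAut.congr κ f ∈ N := by
  have hconj := hN.conj_mem _ hf (ψ.symm.trans κ)
  convert hconj using 1
  ext x
  change κ (f (κ.symm x)) = κ (ψ.symm (ψ (f (ψ.symm (ψ (κ.symm x))))))
  simp

lemma freeGroupCongr_rtransv {J K : Type*} [DecidableEq J] [DecidableEq K] (c : J ≃ K)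
    {i j : J} (h : i ≠ j) :
    MulAut.congr (FreeGroup.freeGroupCongr c) (rtransv h) = rtransv (c.injective.ne h) :=
  mulAut_ext fun k => by
    obtain ⟨k, rfl⟩ := c.surjective k
    by_cases hk : k = i <;> simp [rtransv_of, hk]

lemma freeGroupCongr_ltransv {J K : Type*} [DecidableEq J] [DecidableEq K] (c : J ≃ K)
    {i j : J} (h : i ≠ j) :
    MulAut.congr (FreeGroup.freeGroupCongr c) (ltransv h) = ltransv (c.injective.ne h) :=
  mulAut_ext fun k => by
    obtain ⟨k, rfl⟩ := c.surjective k
    by_cases hk : k = i <;> simp [ltransv_of, hk]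

end HasTransvection

variable {n : ℕ}

theorem SAut_le_of_hasTransvection (hn : 3 ≤ n) {K : Type} [Group K]
    (κ : K ≃* FreeGroup (Fin n)) {N : Subgroup (FrAut n)} [N.Normal]
    (hN : HasTransvection (N.comap (MulAut.congr κ).toMonoidHom)) : SAut n ≤ N := by
  obtain ⟨J, _, e, i, j, hij, hmem⟩ := hN
  let c := Equiv.ofFreeGroupEquiv (e.trans κ)
  have htransport {f : MulAut (FreeGroup J)}
      (hf : MulAut.congr e f ∈ N.comap (MulAut.congr κ).toMonoidHom) :
      MulAut.congr (FreeGroup.freeGroupCongr c) f ∈ N :=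
    congr_mem_of_congr_mem _ (e.trans κ) hf
  refine SAut_le_of_transv_mem hn (h := c.injective.ne hij) (hmem.imp (fun h => ?_) fun h => ?_)
  · exact freeGroupCongr_rtransv c hij ▸ htransport h
  · exact freeGroupCongr_ltransv c hij ▸ htransport h

lemma exists_hom_comap_zpowers {G Q : Type*} [Group G] [Group Q] {q : G →* Q}
    (hq : Function.Surjective q) {g : Q} {p : ℕ} (hg : orderOf g = p) :
    ∃ φ : (Subgroup.zpowers g).comap q →* Multiplicative (ZMod p),
      Function.Surjective φ ∧ ∀ s, φ s = 1 ↔ q s = 1 := by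
  let ζ : Multiplicative (ZMod p) ≃* Subgroup.zpowers g :=
    zmodMulEquivOfGenerator (g := ⟨g, Subgroup.mem_zpowers g⟩)
      (by rintro ⟨x, k, rfl⟩; exact ⟨k, rfl⟩) (by rw [Nat.card_zpowers, hg])
  exact ⟨ζ.symm.toMonoidHom.comp (q.subgroupComap (Subgroup.zpowers g)),
    ζ.symm.surjective.comp (q.subgroupComap_surjective_of_surjective _ hq),
    fun s => ζ.symm.map_eq_one_iff.trans Subtype.ext_iff⟩

theorem SAut_le_of_orderOf_eq_prime (hn : 3 ≤ n) {p : ℕ} [Fact p.Prime] (hp : p ≠ 2) {g : OutF n}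
    (hg : orderOf g = p) {N : Subgroup (FrAut n)} [N.Normal]
    (hgN : (Subgroup.zpowers g).comap (toOut n) ≤ N) : SAut n ≤ N := by
  have : Nontrivial (Fin n) := Fin.nontrivial_iff_two_le.2 (by omega)
  have hconj := conj_freeGroup_injective (J := Fin n)
  have hout (f : FrAut n) : toOut n f = 1 ↔ f ∈ Inn n := QuotientGroup.eq_one_iff f
  obtain ⟨φ, hφ, hφ_one⟩ :=
    exists_hom_comap_zpowers (q := toOut n) (QuotientGroup.mk'_surjective (Inn n)) hg
  let ι : FreeGroup (Fin n) →* (Subgroup.zpowers g).comap (toOut n) :=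
    MulAut.conj.codRestrict _ fun w => by
      rw [Subgroup.mem_comap, (hout _).2 ⟨w, rfl⟩]
      exact Subgroup.one_mem _
  have hι : Function.Injective ι := fun a b hab => hconj (congrArg Subtype.val hab)
  have hker : φ.ker = ι.range := by
    ext s
    rw [MonoidHom.mem_ker, hφ_one]
    exact (hout s).trans (exists_congr fun w => (Subtype.ext_iff (a1 := ι w)).symm)
  have hcent (s) (hs : s ∉ φ.ker) : ∃ f ∈ φ.ker, f * s ≠ s * f := by
    contrapose! hs
    have hone : s = 1 := Subtype.ext <| eq_one_of_forall_commute_conj hconj fun w =>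
      congrArg Subtype.val (hs (ι w) (hker ▸ ⟨w, rfl⟩))
    exact hone ▸ φ.ker.one_mem
  let κ : φ.ker ≃* FreeGroup (Fin n) :=
    (MulEquiv.subgroupCongr hker).trans (MonoidHom.ofInjective hι).symm
  refine SAut_le_of_hasTransvection hn κ <|
    hasTransvection_of_range_conjNormal_le hι hp hφ hker hcent
      (fun x y => Fin.exists_ne_and_ne_of_two_lt x y hn) ?_
  rintro - ⟨s, rfl⟩
  have hs : MulAut.congr κ (MulAut.conjNormal s) = s :=
    congr_conjNormal hconj (κ := κ) (fun w => rfl) s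
  exact hgN (hs.symm ▸ s.2)

theorem SOut_le_normalClosure (hn : 3 ≤ n) {p : ℕ} [Fact p.Prime] (hp : p ≠ 2) {g : OutF n}
    (hg : orderOf g = p) : SOut n ≤ Subgroup.normalClosure {g} := by
  have hle : (Subgroup.zpowers g).comap (toOut n) ≤
      (Subgroup.normalClosure {g}).comap (toOut n) :=
    Subgroup.comap_mono (Subgroup.zpowers_le.2 (Subgroup.subset_normalClosure rfl))
  have hSAut := SAut_le_of_orderOf_eq_prime hn hp hg hle
  intro x hx
  obtain ⟨f, rfl⟩ := QuotientGroup.mk'_surjective (Inn n) x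
  exact hSAut (show f ∈ SAut n from hx)

lemma eq_top_of_SOut_le {N : Subgroup (OutF n)} (hN : SOut n ≤ N) {x : OutF n} (hxN : x ∈ N)
    (hx : x ∉ SOut n) : N = ⊤ := by
  refine eq_top_iff.2 fun y _ => ?_
  by_cases hy : y ∈ SOut n
  · exact hN hy
  · rw [← N.mul_mem_cancel_right hxN]
    refine hN ?_
    rw [SOut, MonoidHom.mem_ker] at hx hy ⊢
    rw [_root_.map_mul, (Int.units_eq_one_or _).resolve_left hx,
      (Int.units_eq_one_or _).resolve_left hy, neg_mul_neg, one_mul]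

lemma exists_orderOf_eq_odd_prime {G : Type*} [Group G] [Finite G]
    (h : ¬ ∃ k : ℕ, Nat.card G = 2 ^ k) : ∃ g : G, ∃ p, p.Prime ∧ p ≠ 2 ∧ orderOf g = p := by
  obtain ⟨p, hp, hdvd, hodd⟩ :=
    (Nat.eq_two_pow_or_exists_odd_prime_and_dvd (Nat.card G)).resolve_left h
  have := Fact.mk hp
  obtain ⟨g, hg⟩ := exists_prime_orderOf_dvd_card' p hdvd
  exact ⟨g, p, hp, by rintro rfl; exact absurd hodd (by decide), hg⟩

end Outer

theorem normalClosure_finite_subgroup_out_general {n : ℕ} (hn : 3 ≤ n) {G' : Subgroup (OutF n)}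
    (hG : ∃ g : G', ∃ p, p.Prime ∧ p ≠ 2 ∧ orderOf g = p) :
    (G' ≤ SOut n → Subgroup.normalClosure (G' : Set (OutF n)) = SOut n) ∧
    (¬ G' ≤ SOut n → Subgroup.normalClosure (G' : Set (OutF n)) = ⊤) := by
  obtain ⟨g, p, hp, hp2, hg⟩ := hG
  have := Fact.mk hp
  have hle : SOut n ≤ Subgroup.normalClosure (G' : Set (OutF n)) :=
    (SOut_le_normalClosure hn hp2 ((Subgroup.orderOf_coe g).trans hg)).trans
      (Subgroup.normalClosure_mono (Set.singleton_subset_iff.2 g.2))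
  refine ⟨fun hS => le_antisymm ?_ hle, fun hS => ?_⟩
  · have : (SOut n).Normal := (detρOut n).normal_ker
    exact Subgroup.normalClosure_le_normal hS
  · obtain ⟨x, hxG, hxS⟩ := SetLike.not_le_iff_exists.1 hS
    exact eq_top_of_SOut_le hle (Subgroup.subset_normalClosure hxG) hxS

/-- **Theorem 2.** For `n ≥ 3`, if `G'` is a nontrivial finite subgroup of `Out(F_n)` whose
order is not a power of `2`, then the normal closure of `G'` is `SOut(F_n)` if `G' ⊆ SOut(F_n)`
and is all of `Out(F_n)` otherwise. -/
theorem normalClosure_finite_subgroup_out (n : ℕ) (hn : 3 ≤ n)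
    (G' : Subgroup (OutF n)) (hG : G' ≠ ⊥) (hfin : Finite G')
    (h2 : ¬ ∃ k : ℕ, Nat.card G' = 2 ^ k) :
    (G' ≤ SOut n → Subgroup.normalClosure (G' : Set (OutF n)) = SOut n) ∧
    (¬ G' ≤ SOut n → Subgroup.normalClosure (G' : Set (OutF n)) = ⊤) :=
  normalClosure_finite_subgroup_out_general hn (exists_orderOf_eq_odd_prime h2)

end NormalClosurePaper
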